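/- arXiv:2506.17070 — 2 statements merged into one kernel-verified Lean document; each statement's English description precedes it below -/
import Mathlib

section
/- Let A = (a_{ij}) be a symmetrizable generalized Cartan matrix with Weyl group W. Suppose w ∈ W and i ∈ I with w s_i > w in Bruhat order. If w α_i = α_j for some j ∈ I, then for the braid operators one has T_w((1-q_i²)f_i) = (1-q_j²)f_j in U_q^-(𝔤); in particular T_w(f_i) = f_j when (α_i,α_i) = (α_j,α_j). -/
noncomputable section

open scoped TensorProduct

/-- The field `ℚ(q)` of rational functions. -/
abbrev KK : Type := RatFunc ℚ

/-- The indeterminate `q ∈ ℚ(q)`. -/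
def qq : KK := RatFunc.X

/-- `q^m` for `m ∈ ℤ`. -/
def qpow (m : ℤ) : KK := qq ^ m

/-- The quantum integer `[n]_i = (q_i^n - q_i^{-n})/(q_i - q_i^{-1})` where `q_i = q^d`. -/
def qint (d n : ℤ) : KK := (qpow (d * n) - qpow (-(d * n))) / (qpow d - qpow (-d))

/-- The quantum factorial `[n]_i!`. -/
def qfact (d : ℤ) : ℕ → KK
  | 0 => 1
  | n + 1 => qfact d n * qint d (n + 1)

/-- A symmetrizable generalized Cartan matrix `a` with symmetrizers `d i`, so that
`(α_i, α_j) = d i * a i j`. -/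
structure CartanData (I : Type) : Type where
  a : I → I → ℤ
  d : I → ℤ
  d_pos : ∀ i, 0 < d i
  a_diag : ∀ i, a i i = 2
  a_offdiag : ∀ i j, i ≠ j → a i j ≤ 0
  symm : ∀ i j, d i * a i j = d j * a j i

/-- Generators of the quantum group `U_q(𝔤)` (adjoint form: `t i = q^{(α_i,α_i)/2 · h_i}`). -/
inductive QGen (I : Type) : Type
  | e : I → QGen I
  | f : I → QGen I
  | t : I → QGen I
  | tinv : I → QGen I

variable {I : Type}

/-- The free algebra on the generators of `U_q(𝔤)`. -/
abbrev FA (I : Type) : Type := FreeAlgebra KK (QGen I)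

def ge (i : I) : FA I := FreeAlgebra.ι KK (QGen.e i)
def gf (i : I) : FA I := FreeAlgebra.ι KK (QGen.f i)
def gT (i : I) : FA I := FreeAlgebra.ι KK (QGen.t i)
def gTinv (i : I) : FA I := FreeAlgebra.ι KK (QGen.tinv i)

/-- Divided power `e_i^{(s)}` in the free algebra. -/
def edp (C : CartanData I) (i : I) (s : ℕ) : FA I := (qfact (C.d i) s)⁻¹ • ge i ^ s

/-- Divided power `f_i^{(s)}` in the free algebra. -/
def fdp (C : CartanData I) (i : I) (s : ℕ) : FA I := (qfact (C.d i) s)⁻¹ • gf i ^ s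

/-- The quantum Serre element `Σ_{s} (-1)^s e_i^{(s)} e_j e_i^{(1-a_{ij}-s)}`. -/
def serreE (C : CartanData I) (i j : I) : FA I :=
  ∑ s ∈ Finset.range ((1 - C.a i j).toNat + 1),
    ((-1 : KK) ^ s) • (edp C i s * ge j * edp C i ((1 - C.a i j).toNat - s))

/-- The quantum Serre element `Σ_{s} (-1)^s f_i^{(s)} f_j f_i^{(1-a_{ij}-s)}`. -/
def serreF (C : CartanData I) (i j : I) : FA I :=
  ∑ s ∈ Finset.range ((1 - C.a i j).toNat + 1),
    ((-1 : KK) ^ s) • (fdp C i s * gf j * fdp C i ((1 - C.a i j).toNat - s))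

/-- The defining relations of the quantum group `U_q(𝔤)`. -/
inductive QRel [DecidableEq I] (C : CartanData I) : FA I → FA I → Prop
  | t_tinv (i : I) : QRel C (gT i * gTinv i) 1
  | tinv_t (i : I) : QRel C (gTinv i * gT i) 1
  | t_t (i j : I) : QRel C (gT i * gT j) (gT j * gT i)
  | t_tinv_comm (i j : I) : QRel C (gT i * gTinv j) (gTinv j * gT i)
  | t_e (i j : I) : QRel C (gT i * ge j) (qpow (C.d i * C.a i j) • (ge j * gT i))
  | t_f (i j : I) : QRel C (gT i * gf j) (qpow (-(C.d i * C.a i j)) • (gf j * gT i))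
  | e_f (i j : I) :
      QRel C (ge i * gf j - gf j * ge i)
        (if i = j then (qpow (C.d i) - qpow (-C.d i))⁻¹ • (gT i - gTinv i) else 0)
  | serre_e (i j : I) : i ≠ j → QRel C (serreE C i j) 0
  | serre_f (i j : I) : i ≠ j → QRel C (serreF C i j) 0

/-- The quantum group `U_q(𝔤)`, presented by generators and relations. -/
abbrev Uq [DecidableEq I] (C : CartanData I) : Type := RingQuot (QRel C)

variable [DecidableEq I]

/-- The canonical map from the free algebra onto `U_q(𝔤)`. -/
def uMk (C : CartanData I) : FA I →ₐ[KK] Uq C := RingQuot.mkAlgHom KK (QRel C)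

def uE (C : CartanData I) (i : I) : Uq C := uMk C (ge i)
def uF (C : CartanData I) (i : I) : Uq C := uMk C (gf i)
def uT (C : CartanData I) (i : I) : Uq C := uMk C (gT i)
def uTinv (C : CartanData I) (i : I) : Uq C := uMk C (gTinv i)

/-- Divided power `e_i^{(s)} ∈ U_q(𝔤)`. -/
def uEdp (C : CartanData I) (i : I) (s : ℕ) : Uq C := (qfact (C.d i) s)⁻¹ • uE C i ^ s

/-- Divided power `f_i^{(s)} ∈ U_q(𝔤)`. -/
def uFdp (C : CartanData I) (i : I) (s : ℕ) : Uq C := (qfact (C.d i) s)⁻¹ • uF C i ^ s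

/-- The negative half `U_q^-(𝔤)`, the subalgebra generated by the `f_i`. -/
def Uneg (C : CartanData I) : Subalgebra KK (Uq C) :=
  Algebra.adjoin KK (Set.range (uF C))

/-- The weight `-β` component of `U_q^-(𝔤)` (spanned by monomials in the `f_i` of
content `β ∈ Q_+`). -/
def negWt (C : CartanData I) (β : I →₀ ℕ) : Submodule KK (Uq C) :=
  Submodule.span KK
    {u | ∃ w : List I, (∀ j, w.count j = β j) ∧ u = (w.map (uF C)).prod}

/-- The pairing `(α_i, β) = Σ_j β_j (α_i, α_j)` for `β ∈ Q_+`. -/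
def pairB (C : CartanData I) (i : I) (β : I →₀ ℕ) : ℤ :=
  β.sum fun j m => C.d i * C.a i j * (m : ℤ)

/-- `f_j` as an element of the subalgebra `U_q^-(𝔤)`. -/
def uFneg (C : CartanData I) (j : I) : ↥(Uneg C) :=
  ⟨uF C j, Algebra.subset_adjoin ⟨j, rfl⟩⟩

/-- `t_i^m` for `m ∈ ℤ`. -/
def tpow (C : CartanData I) (i : I) (m : ℤ) : Uq C :=
  if 0 ≤ m then uT C i ^ m.toNat else uTinv C i ^ (-m).toNat


/-- The entry of the Coxeter matrix of a GCM: `a_{ij} a_{ji} = 0, 1, 2, 3, ≥4`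
corresponds to `m_{ij} = 2, 3, 4, 6, ∞` (with `∞` encoded as `0`). -/
def coxeterEntry (p : ℤ) : ℕ :=
  if p = 0 then 2 else if p = 1 then 3 else if p = 2 then 4 else if p = 3 then 6 else 0

theorem coxeterEntry_ne_one (p : ℤ) : coxeterEntry p ≠ 1 := by
  unfold coxeterEntry; split_ifs <;> norm_num

/-- The Coxeter matrix of the Weyl group of a symmetrizable GCM. -/
def coxMat [DecidableEq I] (C : CartanData I) : CoxeterMatrix I where
  M := Matrix.of fun i j => if i = j then 1 else coxeterEntry (C.a i j * C.a j i)
  isSymm := by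
    unfold Matrix.IsSymm
    ext i j
    simp only [Matrix.transpose_apply, Matrix.of_apply]
    by_cases h : i = j
    · subst h; rfl
    · rw [if_neg (fun hh => h hh.symm), if_neg h, mul_comm]
  diagonal := fun i => if_pos rfl
  off_diagonal := by
    intro i i' h
    simpa only [Matrix.of_apply, if_neg h] using coxeterEntry_ne_one (C.a i i' * C.a i' i)


-- part A1
set_option linter.unusedSimpArgs false

/-! ## quantum integers -/
section QN
variable {K : Type*} [Field K]

/-- quantum integer -/
noncomputable def qn (v : K) (n : ℤ) : K := (v ^ n - v ^ (-n)) / (v - v⁻¹)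

/-- `v` is not zero and not a root of unity -/
structure Gen (v : K) : Prop where
  ne : v ≠ 0
  pw : ∀ n : ℕ, 0 < n → v ^ n ≠ 1

variable {v : K} (h : Gen v)
include h

theorem Gen.sub_ne : v - v⁻¹ ≠ 0 := by
  intro h0
  have := h.pw 2 (by norm_num)
  apply this
  have hv := h.ne
  have : v = v⁻¹ := by linear_combination h0
  rw [pow_two]
  nth_rewrite 2 [this]
  field_simp

theorem qn_ne (n : ℤ) (hn : n ≠ 0) : qn v n ≠ 0 := by
  have hv := h.ne
  unfold qn
  apply div_ne_zero _ h.sub_ne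
  intro h0
  have h1 : v ^ (2 * n) = 1 := by
    have : v ^ n = v ^ (-n) := by linear_combination h0
    rw [two_mul, zpow_add₀ hv]
    nth_rewrite 2 [this]
    rw [← zpow_add₀ hv]; simp
  have h2 := h.pw (2 * n).natAbs (by omega)
  apply h2
  rcases Int.natAbs_eq (2*n) with h3 | h3
  · rw [h3] at h1; exact_mod_cast h1
  · rw [h3, zpow_neg] at h1
    have := inv_eq_one.mp h1
    exact_mod_cast this

omit h in
theorem qn_zero : qn v 0 = 0 := by simp [qn]
theorem qn_one : qn v 1 = 1 := by simp [qn, h.sub_ne]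

theorem Gen.sq_ne : v ^ 2 - 1 ≠ 0 := fun h0 => h.pw 2 (by norm_num) (by linear_combination h0)

theorem qn_eq (n : ℤ) : qn v n = v * ((v ^ n) ^ 2 - 1) / ((v ^ 2 - 1) * v ^ n) := by
  have hv := h.ne
  have hs := h.sq_ne
  have hn : v ^ n ≠ 0 := zpow_ne_zero _ hv
  have : v - v⁻¹ ≠ 0 := h.sub_ne
  unfold qn
  rw [zpow_neg]
  have e1 : v - v⁻¹ = (v ^ 2 - 1) / v := by field_simp
  rw [e1]
  field_simp

theorem qn_add_one (n : ℤ) : qn v (n+1) = v * qn v n + v ^ (-n) := by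
  have hv := h.ne
  have hs := h.sq_ne
  have hn : v ^ n ≠ 0 := zpow_ne_zero _ hv
  simp only [qn_eq h, zpow_neg, zpow_add₀ hv, zpow_one]
  field_simp
  ring

theorem qn_add_one' (n : ℤ) : qn v (n+1) = v⁻¹ * qn v n + v ^ n := by
  have hv := h.ne
  have hs := h.sq_ne
  have hn : v ^ n ≠ 0 := zpow_ne_zero _ hv
  simp only [qn_eq h, zpow_neg, zpow_add₀ hv, zpow_one]
  field_simp
  ring

theorem qn_pascal (w r : ℤ) : qn v (w - 2 * r) + qn v r * qn v (w - r + 1) =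
    qn v (r + 1) * qn v (w - r) := by
  have hv := h.ne
  have hs := h.sq_ne
  have hn : v ^ w ≠ 0 := zpow_ne_zero _ hv
  have hr : v ^ r ≠ 0 := zpow_ne_zero _ hv
  simp only [qn_eq h, zpow_neg, zpow_add₀ hv, zpow_sub₀ hv, zpow_one, two_mul]
  field_simp
  ring

theorem qn_split (r s : ℤ) : qn v (r + 1) = v ^ s * qn v (r + 1 - s) + v ^ (s - r - 1) * qn v s := by
  have hv := h.ne
  have hs := h.sq_ne
  have hn : v ^ s ≠ 0 := zpow_ne_zero _ hv
  have hr : v ^ r ≠ 0 := zpow_ne_zero _ hv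
  simp only [qn_eq h, zpow_neg, zpow_add₀ hv, zpow_sub₀ hv, zpow_one, two_mul]
  field_simp
  ring

theorem qn_two : qn v 2 = v + v⁻¹ := by
  have := qn_add_one h 1
  rw [qn_one h] at this
  norm_num at this; exact this

theorem qn_three : qn v 3 = v ^ 2 + 1 + v⁻¹ ^ 2 := by
  have hv := h.ne
  have := qn_add_one h 2
  rw [qn_two h] at this
  norm_num at this; rw [this]; field_simp


end QN


-- part A2
set_option linter.unusedSimpArgs false
/-! ## the q-commutator strings -/
section DP
variable {K : Type*} [Field K] {R : Type*} [Ring R] [Algebra K R]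

/-- iterated q-commutators with `f` (divided) -/
noncomputable def dp (v : K) (f : R) (w : ℤ) (x : R) : ℕ → R
  | 0 => x
  | r + 1 => (qn v (r + 1))⁻¹ • (f * dp v f w x r - v ^ (w - 2 * r) • (dp v f w x r * f))

/-- iterated q-commutators, other sign (not divided) -/
noncomputable def xm (v : K) (f : R) (w : ℤ) (x : R) : ℕ → R
  | 0 => x
  | r + 1 => f * xm v f w x r - v ^ (-(w - 2 * r)) • (xm v f w x r * f)

theorem dp_zero (v : K) (f : R) (w : ℤ) (x : R) : dp v f w x 0 = x := rfl

theorem dp_map {S : Type*} [Ring S] [Algebra K S] (φ : R →ₐ[K] S) (v : K) (f : R) (w : ℤ) (x : R) (r : ℕ) :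
    φ (dp v f w x r) = dp v (φ f) w (φ x) r := by
  induction r with
  | zero => rfl
  | succ r ih => simp [dp, ih]

theorem xm_map {S : Type*} [Ring S] [Algebra K S] (φ : R →ₐ[K] S) (v : K) (f : R) (w : ℤ) (x : R) (r : ℕ) :
    φ (xm v f w x r) = xm v (φ f) w (φ x) r := by
  induction r with
  | zero => rfl
  | succ r ih => simp [xm, ih]

theorem dp_add (v : K) (f : R) (w : ℤ) (x y : R) (r : ℕ) :
    dp v f w (x + y) r = dp v f w x r + dp v f w y r := by
  induction r with
  | zero => rfl
  | succ r ih => simp only [dp, ih, mul_add, add_mul]; module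

theorem dp_smul (v : K) (f : R) (w : ℤ) (c : K) (x : R) (r : ℕ) :
    dp v f w (c • x) r = c • dp v f w x r := by
  induction r with
  | zero => rfl
  | succ r ih => simp only [dp, ih, mul_smul_comm, smul_mul_assoc]; module

theorem dp_zero_arg (v : K) (f : R) (w : ℤ) (r : ℕ) :
    dp v f w 0 r = 0 := by
  have := dp_smul v f w 0 0 r
  simpa using this

theorem dp_sub (v : K) (f : R) (w : ℤ) (x y : R) (r : ℕ) :
    dp v f w (x - y) r = dp v f w x r - dp v f w y r := by
  have h1 := dp_add v f w x ((-1 : K) • y) r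
  rw [dp_smul] at h1
  simpa [sub_eq_add_neg] using h1

theorem dp_vanish (v : K) (f : R) (w : ℤ) (x : R) (r : ℕ) (h0 : dp v f w x r = 0) (s : ℕ) (hs : r ≤ s) :
    dp v f w x s = 0 := by
  induction s, hs using Nat.le_induction with
  | base => exact h0
  | succ s _ ih => simp [dp, ih]

variable {v : K} (h : Gen v)
include h

theorem dp_succ (f : R) (w : ℤ) (x : R) (r : ℕ) :
    qn v (r + 1) • dp v f w x (r + 1) = f * dp v f w x r - v ^ (w - 2 * r) • (dp v f w x r * f) := by
  rw [dp, smul_smul, mul_inv_cancel₀ (qn_ne h _ (by omega)), one_smul]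

theorem dp_one (f : R) (w : ℤ) (x : R) : dp v f w x 1 = f * x - v ^ w • (x * f) := by
  have := dp_succ h f w x 0
  simpa [qn_one h, dp_zero] using this

theorem dp_of_succ {f : R} {w : ℤ} {x : R} {r : ℕ} {z : R}
    (h1 : qn v (r + 1) • z = f * dp v f w x r - v ^ (w - 2 * r) • (dp v f w x r * f)) :
    dp v f w x (r+1) = z := by
  rw [← dp_succ h] at h1
  exact (smul_right_injective R (qn_ne h (r+1) (by omega)) h1).symm

/-- Leibniz rules -/
theorem leib_r (f y y1 : R) (hy : y1 = f * y - v • (y * f)) (hy1 : f * y1 = v⁻¹ • (y1 * f))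
    (N : ℤ) (x : R) (r : ℕ) :
    dp v f (N+1) (x * y) (r+1) = dp v f N x (r+1) * y + v ^ (N - r) • (dp v f N x r * y1) := by
  have hv := h.ne
  have hy' : f * y = y1 + v • (y * f) := by rw [hy]; module
  have hy1' : y1 * f = v • (f * y1) := by rw [hy1, smul_smul, mul_inv_cancel₀ hv, one_smul]
  induction r with
  | zero =>
    rw [dp_one h, dp_one h, dp_zero, hy]
    simp only [mul_add, add_mul, mul_sub, sub_mul, smul_mul_assoc, mul_smul_comm, smul_smul, mul_assoc, smul_add, smul_sub, zpow_add₀ hv]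
    simp
  | succ r ih =>
    apply dp_of_succ h
    have e1 := dp_succ h f N x r
    have e2 := dp_succ h f N x (r+1)
    rw [ih]
    set D0 := dp v f N x r
    set D1 := dp v f N x (r+1)
    set D2 := dp v f N x (r+1+1)
    have key : qn v (((r+1:ℕ):ℤ)+1) * v ^ (N - ((r+1 : ℕ):ℤ)) = v ^ (N - 2 * ((r+1 : ℕ):ℤ)) + v^(N-r) * qn v (r+1) := by
      have := qn_add_one h (r+1)
      push_cast
      rw [this, zpow_neg]
      have hr : v ^ r ≠ 0 := pow_ne_zero _ hv
      have hr : v ^ N ≠ 0 := zpow_ne_zero _ hv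
      simp only [zpow_add₀ hv, zpow_sub₀ hv, zpow_one, two_mul, zpow_natCast]
      field_simp
      ring
    have key2 : v ^ (N + 1 - 2 * ((r+1 : ℕ):ℤ)) = v ^ (N - 2 * ((r+1 : ℕ):ℤ)) * v := by
      rw [← zpow_add_one₀ hv]; congr 1; ring
    have key3 : v ^ (N - 2 * (r:ℤ)) = v ^ (N - 2 * ((r+1 : ℕ):ℤ)) * v * v := by
      rw [← zpow_add_one₀ hv, ← zpow_add_one₀ hv]; congr 1; push_cast; ring
    rw [key2]
    rw [key3] at e1
    simp only [smul_add, smul_smul, key]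
    simp only [mul_add, add_mul, mul_sub, sub_mul, smul_mul_assoc, mul_smul_comm, smul_smul, mul_assoc, smul_add, smul_sub, hy1', hy']
    have e1' := congrArg (fun z => (v ^ (N - r)) • (z * y1)) e1
    have e2' := congrArg (fun z => z * y) e2
    simp only [mul_add, add_mul, mul_sub, sub_mul, smul_mul_assoc, mul_smul_comm, smul_smul, mul_assoc, smul_add, smul_sub, hy', hy1'] at e1' e2'
    linear_combination (norm := module) e1' + e2'

theorem leib_l (f y y1 : R) (hy : y1 = f * y - v • (y * f)) (hy1 : f * y1 = v⁻¹ • (y1 * f))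
    (N : ℤ) (x : R) (r : ℕ) :
    dp v f (N+1) (y * x) (r+1) = v ^ (r+1) • (y * dp v f N x (r+1)) + y1 * dp v f N x r := by
  have hv := h.ne
  have hy' : ∀ z, f * (y * z) = y1 * z + v • (y * (f * z)) := by
    intro z; rw [hy]; simp only [sub_mul, smul_mul_assoc, mul_assoc]; module
  have hy1' : ∀ z, f * (y1 * z) = v⁻¹ • (y1 * (f * z)) := by
    intro z; rw [← mul_assoc, hy1, smul_mul_assoc, mul_assoc]
  induction r with
  | zero =>
    rw [dp_one h, dp_one h, dp_zero, hy' x]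
    simp only [mul_add, add_mul, mul_sub, sub_mul, smul_mul_assoc, mul_smul_comm, smul_smul, mul_assoc, smul_add, smul_sub, zpow_add₀ hv, zpow_one]
    module
  | succ r ih =>
    apply dp_of_succ h
    have e1 := dp_succ h f N x r
    have e2 := dp_succ h f N x (r+1)
    rw [ih]
    set D0 := dp v f N x r
    set D1 := dp v f N x (r+1)
    set D2 := dp v f N x (r+1+1)
    have key : qn v (((r+1:ℕ):ℤ)+1) = v⁻¹ * qn v (r+1) + v ^ (r+1) := by
      have := qn_add_one' h (r+1)
      push_cast
      rw [this]
      norm_cast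
    have key2 : v ^ (N + 1 - 2 * ((r+1 : ℕ):ℤ)) = v ^ (N - 2 * ((r+1 : ℕ):ℤ)) * v := by
      rw [← zpow_add_one₀ hv]; congr 1; ring
    have key3 : v ^ (N - 2 * (r:ℤ)) = v ^ (N - 2 * ((r+1 : ℕ):ℤ)) * v * v := by
      rw [← zpow_add_one₀ hv, ← zpow_add_one₀ hv]; congr 1; push_cast; ring
    rw [key2]
    rw [key3] at e1
    simp only [mul_add, add_mul, mul_sub, sub_mul, smul_mul_assoc, mul_smul_comm, smul_smul, mul_assoc, smul_add, smul_sub, hy1', hy']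
    have e1' := congrArg (fun z => v⁻¹ • (y1 * z)) e1
    have e2' := congrArg (fun z => v ^ (r+2) • (y * z)) e2
    simp only [mul_add, add_mul, mul_sub, sub_mul, smul_mul_assoc, mul_smul_comm, smul_smul, mul_assoc, smul_add, smul_sub] at e1' e2'
    rw [show v⁻¹ * (v ^ (N - 2 * ((r+1 : ℕ):ℤ)) * (v * v)) = v ^ (N - 2 * ((r+1 : ℕ):ℤ)) * v by field_simp] at e1'
    have e3 : qn v (((r+1:ℕ):ℤ)+1) • (y1 * D1) = (v⁻¹ * qn v (r+1) + v ^ (r+1)) • (y1 * D1) := by rw [key]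
    linear_combination (norm := module) e1' + e2' + e3

theorem leib_r1 (f y1 : R) (hy1 : f * y1 = v⁻¹ • (y1 * f))
    (N : ℤ) (x : R) (r : ℕ) :
    dp v f (N-1) (x * y1) r = dp v f N x r * y1 := by
  have hv := h.ne
  have hy1' : y1 * f = v • (f * y1) := by rw [hy1, smul_smul, mul_inv_cancel₀ hv, one_smul]
  induction r with
  | zero => rfl
  | succ r ih =>
    apply dp_of_succ h
    have e1 := dp_succ h f N x r
    rw [ih, ← smul_mul_assoc, e1]
    have key3 : v ^ (N - 2 * (r:ℤ)) = v ^ (N - 1 - 2 * (r:ℤ)) * v := by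
      rw [← zpow_add_one₀ hv]; congr 1; ring
    rw [key3]
    simp only [mul_add, add_mul, mul_sub, sub_mul, smul_mul_assoc, mul_smul_comm, smul_smul, mul_assoc, smul_add, smul_sub, hy1']

theorem leib_l1 (f y1 : R) (hy1 : f * y1 = v⁻¹ • (y1 * f))
    (N : ℤ) (x : R) (r : ℕ) :
    dp v f (N-1) (y1 * x) r = (v⁻¹) ^ r • (y1 * dp v f N x r) := by
  have hv := h.ne
  have hy1' : ∀ z, f * (y1 * z) = v⁻¹ • (y1 * (f * z)) := by
    intro z; rw [← mul_assoc, hy1, smul_mul_assoc, mul_assoc]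
  induction r with
  | zero => simp [dp_zero]
  | succ r ih =>
    apply dp_of_succ h
    have e1 := dp_succ h f N x r
    rw [ih, smul_comm, ← mul_smul_comm, e1]
    have key3 : v ^ (N - 1 - 2 * (r:ℤ)) = v ^ (N - 2 * (r:ℤ)) * v⁻¹ := by
      rw [← zpow_sub_one₀ hv]; congr 1; ring
    rw [key3]
    simp only [mul_add, add_mul, mul_sub, sub_mul, smul_mul_assoc, mul_smul_comm, smul_smul, mul_assoc, smul_add, smul_sub, hy1']
    module

theorem dp_dp_one (f : R) (N : ℤ) (x : R) (r : ℕ) :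
    dp v f (N-2) (dp v f N x 1) r = qn v (r+1) • dp v f N x (r+1) := by
  have hv := h.ne
  induction r with
  | zero => simp [dp_zero, qn_one h]
  | succ r ih =>
    apply dp_of_succ h
    have e1 := dp_succ h f N x (r+1)
    push_cast at e1 ⊢
    rw [ih]
    rw [e1]
    have key3 : v ^ (N - 2 - 2 * (r:ℤ)) = v ^ (N - 2 * ((r:ℤ)+1)) := by
      congr 1; ring
    rw [key3]
    simp only [mul_add, add_mul, mul_sub, sub_mul, smul_mul_assoc, mul_smul_comm, smul_smul, mul_assoc, smul_add, smul_sub]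
    module

/-- q-factorial -/
noncomputable def qfa (v : K) : ℕ → K
  | 0 => 1
  | n + 1 => qfa v n * qn v (n+1)

theorem qfa_ne (n : ℕ) : qfa v n ≠ 0 := by
  induction n with
  | zero => simp [qfa]
  | succ n ih => exact mul_ne_zero ih (qn_ne h _ (by omega))

/-- divided power -/
noncomputable def fdv (v : K) (f : R) (k : ℕ) : R := (qfa v k)⁻¹ • f ^ k

theorem mul_fdv (f : R) (k : ℕ) : f * fdv v f k = qn v (k+1) • fdv v f (k+1) := by
  have := qfa_ne h k
  have := qn_ne h (k+1) (by omega)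
  simp only [fdv, qfa, mul_smul_comm, pow_succ', smul_smul]
  congr 1; field_simp

theorem fdv_mul (f : R) (k : ℕ) : fdv v f k * f = qn v (k+1) • fdv v f (k+1) := by
  have := qfa_ne h k
  have := qn_ne h (k+1) (by omega)
  simp only [fdv, qfa, smul_mul_assoc, pow_succ, smul_smul]
  congr 1; field_simp

theorem dp_expand (f : R) (N : ℤ) (x : R) (r : ℕ) :
    dp v f N x r = ∑ s ∈ Finset.range (r+1),
      ((-1 : K) ^ s * v ^ ((s : ℤ) * (N - r + 1))) • (fdv v f (r - s) * x * fdv v f s) := by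
  have hv := h.ne
  induction r with
  | zero => simp [dp_zero, fdv, qfa]
  | succ r ih =>
    apply dp_of_succ h
    rw [ih, Finset.mul_sum, Finset.sum_mul, Finset.smul_sum, Finset.smul_sum]
    have A : ∑ s ∈ Finset.range (r+1), f * (((-1 : K) ^ s * v ^ ((s : ℤ) * (N - r + 1))) • (fdv v f (r - s) * x * fdv v f s))
       = ∑ s ∈ Finset.range (r+1+1), ((-1 : K) ^ s * v ^ ((s : ℤ) * (N - r + 1)) * qn v (r + 1 - s)) • (fdv v f (r + 1 - s) * x * fdv v f s) := by
      rw [Finset.sum_range_succ _ (r+1)]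
      have : qn v ((r:ℤ) + 1 - ((r+1 : ℕ):ℤ)) = 0 := by
        push_cast; rw [sub_self, qn_zero]
      rw [this, mul_zero, zero_smul, add_zero]
      apply Finset.sum_congr rfl
      intro s hs
      have hs' : s ≤ r := by simpa [Nat.lt_succ_iff] using hs
      have e := mul_fdv h f (r-s)
      have e2 : r - s + 1 = r + 1 - s := by omega
      have e3 : ((r - s : ℕ):ℤ) + 1 = (r:ℤ) + 1 - s := by omega
      rw [e2, e3] at e
      rw [mul_smul_comm, ← mul_assoc, ← mul_assoc, e, smul_mul_assoc, smul_mul_assoc, smul_smul]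
    have B : ∑ s ∈ Finset.range (r+1), v ^ (N - 2 * (r:ℤ)) • (((-1 : K) ^ s * v ^ ((s : ℤ) * (N - r + 1))) • (fdv v f (r - s) * x * fdv v f s) * f)
       = ∑ s ∈ Finset.range (r+1+1), (- ((-1 : K) ^ s * v ^ (((s : ℤ) - 1) * (N - r + 1) + (N - 2 * r))) * qn v s) • (fdv v f (r + 1 - s) * x * fdv v f s) := by
      rw [Finset.sum_range_succ' _ (r+1)]
      have : qn v ((0:ℕ):ℤ) = 0 := by
        push_cast; rw [qn_zero]
      rw [this, mul_zero, zero_smul, add_zero]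
      apply Finset.sum_congr rfl
      intro s hs
      have e := fdv_mul h f s
      rw [smul_mul_assoc, mul_assoc, e, mul_smul_comm, smul_smul, smul_smul]
      have e2 : r + 1 - (s + 1) = r - s := by omega
      rw [e2]
      congr 1
      push_cast
      rw [zpow_add₀ hv]
      rw [show (s:ℤ) + 1 - 1 = s by ring]
      ring
    rw [A, B, ← Finset.sum_sub_distrib]
    apply Finset.sum_congr rfl
    intro s _
    rw [smul_smul, ← sub_smul]
    congr 1
    rw [qn_split h r s]
    have e1 : (s:ℤ) * (N - r + 1) = s * (N - r) + s := by ring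
    have e2 : ((s:ℤ)-1) * (N - r + 1) + (N - 2 * r) = s * (N - r) + (s - r - 1) := by ring
    have e3 : (s:ℤ) * (N - ((r+1:ℕ):ℤ) + 1) = s * (N - r) := by push_cast; ring
    rw [e1, e2, e3, zpow_add₀ hv, zpow_add₀ hv _ ((s:ℤ) - r - 1)]
    ring
end DP


-- part A3
set_option linter.unusedSimpArgs false
/-! ## sl2 data -/
section SLTWO
variable {K : Type*} [Field K] {R : Type*} [Ring R] [Algebra K R]

/-- An `sl2` triple with a Lusztig automorphism. -/
structure SL2 (v : K) (e f t s : R) (T : R ≃ₐ[K] R) : Prop where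
  gen : Gen v
  ts : t * s = 1
  st : s * t = 1
  te : t * e = (v ^ 2) • (e * t)
  tf : t * f = (v⁻¹ ^ 2) • (f * t)
  ef : e * f = f * e + (v - v⁻¹)⁻¹ • (t - s)
  Tf : T f = -(e * t)
  Te : T e = -(s * f)
  Tt : T t = s

/-- weight -/
def Wt (v : K) (t : R) (w : ℤ) (x : R) : Prop := t * x = v ^ w • (x * t)

/-- primitive vectors on which `T` acts by the top string operator -/
structure IsP (v : K) (e f t : R) (T : R ≃ₐ[K] R) (N : ℕ) (x : R) : Prop where
  wt : Wt v t N x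
  comm : e * x = x * e
  van : dp v f N x (N+1) = 0
  Tx : T x = dp v f N x N

variable {v : K} {e f t s : R} {T : R ≃ₐ[K] R} (H : SL2 v e f t s T)

theorem IsP.zero (N : ℕ) : IsP v e f t T N 0 :=
  ⟨by simp [Wt], by simp, dp_zero_arg _ _ _ _, by simp [dp_zero_arg]⟩

theorem IsP.add {N : ℕ} {x y : R} (hx : IsP v e f t T N x) (hy : IsP v e f t T N y) :
    IsP v e f t T N (x + y) :=
  ⟨by have := hx.wt; have := hy.wt; simp_all [Wt, mul_add, add_mul],
   by rw [mul_add, add_mul, hx.comm, hy.comm], by rw [dp_add, hx.van, hy.van, add_zero],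
   by rw [dp_add, map_add, hx.Tx, hy.Tx]⟩

theorem IsP.smul {N : ℕ} {x : R} (c : K) (hx : IsP v e f t T N x) :
    IsP v e f t T N (c • x) :=
  ⟨by have := hx.wt; simp_all [Wt, smul_comm c],
   by rw [mul_smul_comm, smul_mul_assoc, hx.comm], by rw [dp_smul, hx.van, smul_zero],
   by rw [dp_smul, map_smul, hx.Tx]⟩

theorem IsP.sub {N : ℕ} {x y : R} (hx : IsP v e f t T N x) (hy : IsP v e f t T N y) :
    IsP v e f t T N (x - y) := by
  have := hx.add (hy.smul (-1))
  simpa [sub_eq_add_neg] using this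

theorem IsP.vanish {N : ℕ} {x : R} (hx : IsP v e f t T N x) (r : ℕ) (hr : N < r) :
    dp v f N x r = 0 := dp_vanish _ _ _ _ (N+1) hx.van _ hr

theorem Wt.add {w : ℤ} {x y : R} (hx : Wt v t w x) (hy : Wt v t w y) : Wt v t w (x + y) := by
  simp_all [Wt, mul_add, add_mul]

theorem Wt.smul {w : ℤ} {x : R} (c : K) (hx : Wt v t w x) : Wt v t w (c • x) := by
  simp_all [Wt, smul_comm c]

theorem Wt.sub {w : ℤ} {x y : R} (hx : Wt v t w x) (hy : Wt v t w y) : Wt v t w (x - y) := by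
  simp_all [Wt, mul_sub, sub_mul, smul_sub]

include H

theorem Wt.mul {w w' : ℤ} {x y : R} (hx : Wt v t w x) (hy : Wt v t w' y) : Wt v t (w+w') (x * y) := by
  unfold Wt at *
  rw [← mul_assoc, hx, smul_mul_assoc, mul_assoc, hy, mul_smul_comm, smul_smul, zpow_add₀ H.gen.ne, mul_assoc]

theorem SL2.wt_f : Wt v t (-2) f := by
  rw [Wt, H.tf]
  congr 1
  have := H.gen.ne
  rw [zpow_neg, ← zpow_natCast, inv_zpow]; rfl

theorem SL2.wt_e : Wt v t (2) e := by
  rw [Wt, H.te]; norm_cast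

theorem Wt.s_mul {w : ℤ} {x : R} (hx : Wt v t w x) : s * x = v ^ (-w) • (x * s) := by
  have hw : v ^ w ≠ 0 := zpow_ne_zero _ H.gen.ne
  have h1 : s * (t * x) * s = x * s := by
    rw [← mul_assoc s t x, H.st, one_mul]
  rw [hx, mul_smul_comm, smul_mul_assoc, ← mul_assoc, mul_assoc (s * x), H.ts, mul_one] at h1
  rw [← h1, smul_smul, zpow_neg, inv_mul_cancel₀ hw, one_smul]

theorem wt_dp {w : ℤ} {x : R} (hx : Wt v t w x) (r : ℕ) : Wt v t (w - 2 * r) (dp v f w x r) := by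
  induction r with
  | zero => simpa [dp] using hx
  | succ r ih =>
    rw [dp]
    apply Wt.smul
    have h1 := Wt.mul H H.wt_f ih
    have h2 := Wt.mul H ih H.wt_f
    rw [show -2 + (w - 2 * (r:ℤ)) = w - 2 * ((r+1:ℕ):ℤ) by push_cast; ring] at h1
    rw [show (w - 2 * (r:ℤ)) + -2= w - 2 * ((r+1:ℕ):ℤ) by push_cast; ring] at h2
    exact h1.sub (h2.smul _)

theorem SL2.qn_s {w : ℤ} {x : R} (hx : Wt v t w x) :
    (v - v⁻¹)⁻¹ • ((t - s) * x) = (v - v⁻¹)⁻¹ • (v ^ w • (x * t)) - (v-v⁻¹)⁻¹ • (v ^ (-w) • (x * s)) := by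
  rw [sub_mul, hx, hx.s_mul H, smul_sub]

/-- commutation of `e` with strings -/
theorem e_dp {w : ℤ} {x : R} (hx : Wt v t w x) (hc : e * x = x * e) (r : ℕ) :
    e * dp v f w x (r+1) = dp v f w x (r+1) * e + qn v (w - r) • (dp v f w x r * s) := by
  have hv := H.gen.ne
  have ef' : ∀ z, e * (f * z) = f * (e * z) + (v - v⁻¹)⁻¹ • ((t - s) * z) := by
    intro z; rw [← mul_assoc, H.ef, add_mul, smul_mul_assoc, mul_assoc]
  have key : ∀ r : ℕ, ∀ z : R, e * dp v f w x r = dp v f w x r * e + z → 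
     qn v (r+1) • (e * dp v f w x (r+1) - dp v f w x (r+1) * e) =
      f * z - v ^ (w - 2 * r) • (z * f) + qn v (w - 2 * r) • (dp v f w x r * s) := by
    intro r z hz
    have h1 := dp_succ H.gen f w x r
    have h2 := wt_dp H hx r
    have h3 := h2.s_mul H
    unfold Wt at h2
    rw [smul_sub, ← mul_smul_comm, ← smul_mul_assoc, h1]
    set D := dp v f w x r
    simp only [mul_sub, sub_mul, mul_smul_comm, smul_mul_assoc, mul_assoc, ef', h2, h3, hz, mul_add]
    rw [← mul_assoc e D f, hz, add_mul, mul_assoc, H.ef]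
    simp only [mul_sub, sub_mul, mul_smul_comm, smul_mul_assoc, mul_assoc, ef', h2, h3, hz, mul_add, add_mul]
    unfold qn
    module
  have main : ∀ r : ℕ, ∀ z : R, e * dp v f w x r = dp v f w x r * e + z →
      f * z - v ^ (w - 2 * r) • (z * f) = (qn v r * qn v (w - r + 1)) • (dp v f w x r * s) →
      e * dp v f w x (r+1) = dp v f w x (r+1) * e + qn v (w - r) • (dp v f w x r * s) := by
    intro r z hz hz2
    have h1 := key r z hz
    rw [hz2, ← add_smul, add_comm (qn v r * _), qn_pascal H.gen, mul_smul] at h1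
    have := smul_right_injective R (qn_ne H.gen (r+1) (by omega)) h1
    rw [← this]; abel
  induction r with
  | zero =>
    exact main 0 0 (by simp [dp_zero, hc]) (by simp [qn_zero])
  | succ r ih =>
    apply main (r+1) _ ih
    have h1 := dp_succ H.gen f w x r
    have sf : s * f = (v^2) • (f * s) := by
      rw [H.wt_f.s_mul H, neg_neg]; norm_cast
    rw [smul_mul_assoc, mul_assoc, sf]
    have e1 : w - ((r + 1 : ℕ) : ℤ) + 1 = w - r := by push_cast; ring
    rw [e1]
    have e2 : (qn v ((r+1 : ℕ):ℤ) * qn v (w-r)) • (dp v f w x (r+1) * s) = qn v (w-r) • ((qn v (r+1) • dp v f w x (r+1)) * s) := by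
      rw [smul_mul_assoc, smul_smul]; push_cast; ring_nf
    rw [e2, h1]
    have key3 : v ^ (w - 2 * (r:ℤ)) = v ^ (w - 2 * ((r+1 : ℕ):ℤ)) * v ^ 2 := by
      rw [← zpow_natCast, ← zpow_add₀ hv]; congr 1; push_cast; ring
    rw [key3]
    simp only [mul_sub, sub_mul, mul_smul_comm, smul_mul_assoc, mul_assoc]
    module
end SLTWO


-- part A4
set_option linter.unusedSimpArgs false
section SLTWO2
variable {K : Type*} [Field K] {R : Type*} [Ring R] [Algebra K R]
variable {v : K} {e f t s : R} {T : R ≃ₐ[K] R} (H : SL2 v e f t s T)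

/-- twisted commutator with `e` -/
def eps (e t : R) (u : R) : R := (e * u - u * e) * t

theorem eps_add (u u' : R) : eps e t (u + u') = eps e t u + eps e t u' := by
  simp only [eps, mul_add, add_mul, sub_mul]; abel

theorem eps_smul (c : K) (u : R) : eps e t (c • u) = c • eps e t u := by
  simp only [eps, mul_smul_comm, smul_mul_assoc, smul_sub, sub_mul]

theorem eps_zero : eps e t (0:R) = 0 := by simp [eps]

theorem epsit_add (n : ℕ) (u u' : R) : (eps e t)^[n] (u + u') = (eps e t)^[n] u + (eps e t)^[n] u' := by
  induction n generalizing u u' with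
  | zero => rfl
  | succ n ih => simp only [Function.iterate_succ_apply, eps_add, ih]

theorem epsit_smul (n : ℕ) (c : K) (u : R) : (eps e t)^[n] (c • u) = c • (eps e t)^[n] u := by
  induction n generalizing u with
  | zero => rfl
  | succ n ih => simp only [Function.iterate_succ_apply, eps_smul, ih]

theorem epsit_zero (n : ℕ) : (eps e t)^[n] (0:R) = 0 := by
  induction n with
  | zero => rfl
  | succ n ih => simp only [Function.iterate_succ_apply, eps_zero, ih]

include H

theorem eps_dp {w : ℤ} {x : R} (hx : Wt v t w x) (hc : e * x = x * e) (r : ℕ) :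
    eps e t (dp v f w x (r+1)) = qn v (w - r) • dp v f w x r := by
  rw [eps, e_dp H hx hc, add_sub_cancel_left, smul_mul_assoc, mul_assoc, H.st, mul_one]

theorem epsit_dp_zero {w : ℤ} {x : R} (hx : Wt v t w x) (hc : e * x = x * e) (r n : ℕ) (hn : r < n) :
    (eps e t)^[n] (dp v f w x r) = 0 := by
  induction n generalizing r with
  | zero => omega
  | succ n ih =>
    rw [Function.iterate_succ_apply]
    cases r with
    | zero => rw [dp_zero, eps, hc, sub_self, zero_mul, epsit_zero]
    | succ r => rw [eps_dp H hx hc, epsit_smul, ih r (by omega), smul_zero]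

theorem epsit_dp_top {w : ℤ} {x : R} (hx : Wt v t w x) (hc : e * x = x * e) (r : ℕ) (hr : (r:ℤ) ≤ w) :
    ∃ c : K, c ≠ 0 ∧ (eps e t)^[r] (dp v f w x r) = c • x := by
  induction r with
  | zero => exact ⟨1, one_ne_zero, by simp [dp_zero]⟩
  | succ r ih =>
    obtain ⟨c, hc0, h1⟩ := ih (by push_cast at hr; omega)
    refine ⟨qn v (w - r) * c, mul_ne_zero (qn_ne H.gen _ (by push_cast at hr; omega)) hc0, ?_⟩
    rw [Function.iterate_succ_apply, eps_dp H hx hc, epsit_smul, h1, smul_smul]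

theorem SL2.Ts : T s = t := by
  have h1 : T t * T s = 1 := by rw [← map_mul, H.ts, map_one]
  rw [H.Tt] at h1
  calc T s = t * s * T s := by rw [H.ts, one_mul]
    _ = t := by rw [mul_assoc, h1, mul_one]

theorem wt_T {w : ℤ} {x : R} (hx : Wt v t w x) : Wt v t (-w) (T x) := by
  have := congrArg T (hx.s_mul H)
  simpa [H.Ts, Wt] using this

theorem wt_of_T {w : ℤ} {x : R} (hx : Wt v t (-w) (T x)) : Wt v t w x := by
  have hs : s * x = v ^ (-w) • (x * s) := by
    apply T.injective
    simpa [H.Ts, Wt] using hx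
  have hw : v ^ w ≠ 0 := zpow_ne_zero _ H.gen.ne
  have h1 : t * (s * x) * t = x * t := by
    rw [← mul_assoc t s x, H.ts, one_mul]
  rw [hs, mul_smul_comm, smul_mul_assoc, ← mul_assoc, mul_assoc (t * x), H.st, mul_one] at h1
  rw [Wt, ← h1, smul_smul, zpow_neg, mul_inv_cancel₀ hw, one_smul]

theorem T_dm {w : ℤ} {x : R} (hx : Wt v t w x) :
    T (f * x - v ^ (-w) • (x * f)) = (-v ^ (-w)) • eps e t (T x) := by
  have h1 := wt_T H hx
  unfold Wt at h1
  simp only [map_sub, map_smul, map_mul, H.Tf, eps]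
  simp only [neg_mul, mul_neg, mul_assoc, h1, mul_smul_comm, sub_mul]
  module

theorem wt_xm {w : ℤ} {x : R} (hx : Wt v t w x) (r : ℕ) : Wt v t (w - 2 * r) (xm v f w x r) := by
  induction r with
  | zero => simpa [xm] using hx
  | succ r ih =>
    rw [xm]
    have h1 := Wt.mul H H.wt_f ih
    have h2 := Wt.mul H ih H.wt_f
    rw [show -2 + (w - 2 * (r:ℤ)) = w - 2 * ((r+1:ℕ):ℤ) by push_cast; ring] at h1
    rw [show (w - 2 * (r:ℤ)) + -2= w - 2 * ((r+1:ℕ):ℤ) by push_cast; ring] at h2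
    exact h1.sub (h2.smul _)

theorem T_xm {w : ℤ} {x : R} (hx : Wt v t w x) (r : ℕ) :
    ∃ c : K, c ≠ 0 ∧ T (xm v f w x r) = c • (eps e t)^[r] (T x) := by
  induction r with
  | zero => exact ⟨1, one_ne_zero, by simp [xm]⟩
  | succ r ih =>
    obtain ⟨c, hc0, h1⟩ := ih
    refine ⟨(-v ^ (-(w - 2 * (r:ℤ)))) * c, mul_ne_zero (neg_ne_zero.mpr (zpow_ne_zero _ H.gen.ne)) hc0, ?_⟩
    rw [xm, T_dm H (wt_xm H hx r), h1, eps_smul, smul_smul, Function.iterate_succ_apply']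

theorem IsP.xm_zero {N : ℕ} {x : R} (hx : IsP v e f t T N x) : xm v f N x (N+1) = 0 := by
  obtain ⟨c, _, h1⟩ := T_xm H hx.wt (N+1)
  rw [hx.Tx, epsit_dp_zero H hx.wt hx.comm N (N+1) (by omega), smul_zero] at h1
  exact T.injective (by rw [h1, map_zero])

theorem IsP.y1_comm {y : R} (hy : IsP v e f t T 1 y) :
    f * (f * y - v • (y * f)) = v⁻¹ • ((f * y - v • (y * f)) * f) := by
  have h1 := dp_succ H.gen f 1 y 1
  have h2 := hy.van
  norm_num at h2
  norm_num at h1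
  rw [h2, smul_zero, dp_one H.gen] at h1
  simp only [zpow_one] at h1
  exact (sub_eq_zero.mp h1.symm)

theorem IsP.Ty {y : R} (hy : IsP v e f t T 1 y) : T y = f * y - v • (y * f) := by
  have := hy.Tx
  norm_num at this
  rw [dp_one H.gen] at this
  simpa using this

theorem IsP.e_y1 {y : R} (hy : IsP v e f t T 1 y) :
    e * (f * y - v • (y * f)) = (f * y - v • (y * f)) * e + y * s := by
  have := e_dp H hy.wt hy.comm 0
  norm_num [dp_one H.gen, dp_zero, qn_one H.gen] at this
  exact this

theorem IsP.wt_y1 {y : R} (hy : IsP v e f t T 1 y) : Wt v t (-1) (f * y - v • (y * f)) := by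
  have := wt_dp H hy.wt 1
  norm_num [dp_one H.gen] at this
  exact this

theorem IsP.mul_r {N : ℕ} {x y : R} (hx : IsP v e f t T N x) (hy : IsP v e f t T 1 y) :
    IsP v e f t T (N+1) (x * y) := by
  have L := leib_r H.gen f y _ rfl (hy.y1_comm H) N x
  refine ⟨by have := Wt.mul H hx.wt hy.wt; exact_mod_cast this, by rw [← mul_assoc, hx.comm, mul_assoc, hy.comm, mul_assoc], ?_, ?_⟩
  · push_cast
    rw [L, hx.van, hx.vanish (N+1+1) (by omega)]; simp
  · push_cast
    rw [L, hx.van, map_mul, hx.Tx, hy.Ty H]; simp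

theorem IsP.mul_l {N : ℕ} {x y : R} (hx : IsP v e f t T N x) (hy : IsP v e f t T 1 y) :
    IsP v e f t T (N+1) (y * x) := by
  have L := leib_l H.gen f y _ rfl (hy.y1_comm H) N x
  refine ⟨by have := Wt.mul H hy.wt hx.wt; rw [add_comm] at this; exact_mod_cast this, by rw [← mul_assoc, hy.comm, mul_assoc, hx.comm, mul_assoc], ?_, ?_⟩
  · push_cast
    rw [L, hx.van, hx.vanish (N+1+1) (by omega)]; simp
  · push_cast
    rw [L, hx.van, map_mul, hx.Tx, hy.Ty H]; simp

/-- `T` on the dm-commutator of a primitive vector -/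
theorem IsP.T_dm {N : ℕ} {x : R} (hx : IsP v e f t T (N+1) x) :
    T (f * x - v ^ (-(N+1:ℤ)) • (x * f)) = (-v ^ (-(N+1:ℤ))) • dp v f (N+1) x N := by
  have h1 := _root_.T_dm H hx.wt
  push_cast at h1
  have h2 := eps_dp H hx.wt hx.comm N
  rw [hx.Tx, h2] at h1
  rw [h1]
  push_cast
  rw [add_sub_cancel_left, qn_one H.gen, one_smul]

theorem IsP.T_dm1 {y : R} (hy : IsP v e f t T 1 y) :
    T (f * y - v⁻¹ • (y * f)) = (-v⁻¹) • y := by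
  have := IsP.T_dm (N := 0) H hy
  simpa [dp_zero] using this

theorem dp_zr {N : ℕ} {x y : R} (hy : IsP v e f t T 1 y) (r : ℕ) :
    dp v f N (dp v f (N+1) x 1 * y - (v⁻¹ * qn v (N+1)) • (x * (f * y - v • (y * f)))) r =
      qn v (r+1) • (dp v f (N+1) x (r+1) * y)
       - (v ^ (-(r:ℤ) - 1) * qn v (N + 1 - r)) • (dp v f (N+1) x r * (f * y - v • (y * f))) := by
  have hv := H.gen.ne
  have L1 := leib_r H.gen f y _ rfl (hy.y1_comm H) ((N:ℤ) + 1 - 2) (dp v f (N+1) x 1)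
  have L2 := leib_r1 H.gen f _ (hy.y1_comm H) ((N:ℤ)+1) x r
  rw [show (N:ℤ) + 1 - 1 = N by ring] at L2
  rw [show (N:ℤ) + 1 - 2 + 1 = N by ring] at L1
  rw [dp_sub, dp_smul, L2]
  cases r with
  | zero => simp [dp_zero, qn_one H.gen]
  | succ r =>
    rw [L1, dp_dp_one H.gen, dp_dp_one H.gen]
    push_cast
    rw [smul_mul_assoc, smul_mul_assoc, smul_smul, add_sub_assoc, ← sub_smul]
    rw [sub_eq_add_neg (qn v (r+1+1) • _), ← neg_smul]
    congr 2
    have hs := H.gen.sq_ne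
    have hN : v ^ N ≠ 0 := pow_ne_zero _ hv
    have hr : v ^ r ≠ 0 := pow_ne_zero _ hv
    simp only [qn_eq H.gen, zpow_neg, zpow_add₀ hv, zpow_sub₀ hv, zpow_one, two_mul, neg_add, zpow_natCast]
    norm_num
    field_simp
    ring

theorem IsP.z_r {N : ℕ} {x y : R} (hx : IsP v e f t T (N+1) x) (hy : IsP v e f t T 1 y) :
    IsP v e f t T N (dp v f (N+1) x 1 * y - (v⁻¹ * qn v (N+1)) • (x * (f * y - v • (y * f)))) := by
  have hv := H.gen.ne
  have Z := dp_zr (N := N) (x := x) H hy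
  refine ⟨?_, ?_, ?_, ?_⟩
  · have h1 := Wt.mul H (wt_dp H hx.wt 1) hy.wt
    have h2 := Wt.mul H hx.wt (hy.wt_y1 H)
    push_cast at h1 h2
    rw [show (N:ℤ) + 1 - 2 + 1 = N by ring] at h1
    rw [show (N:ℤ) + 1 + -1 = N by ring] at h2
    exact h1.sub (h2.smul _)
  · have h1 := e_dp H hx.wt hx.comm 0
    have h2 := hy.e_y1 H
    have h3 := hy.wt.s_mul H
    push_cast at h1 h3
    simp only [zero_add, sub_zero, dp_zero, zpow_neg, zpow_one] at h1 h3
    set y1 := (f * y - v • (y * f))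
    set X1 := dp v f (N+1) x 1
    simp only [mul_sub, sub_mul, mul_smul_comm, smul_mul_assoc]
    rw [← mul_assoc, h1, ← mul_assoc, hx.comm]
    simp only [mul_assoc, h2, hy.comm, add_mul, mul_add, smul_mul_assoc, mul_smul_comm, h3]
    module
  · rw [Z]
    have := hx.vanish (N+1+1) (by omega)
    push_cast at this
    have h2 := hx.van
    push_cast at h2
    push_cast
    rw [h2, show (N:ℤ) + 1 - (N+1) = 0 by ring, qn_zero]
    simp
  · rw [Z]
    have e1 : dp v f (N+1) x 1 * y - (v⁻¹ * qn v (N+1)) • (x * (f * y - v • (y * f)))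
       = (f * x - v ^ (-(N+1:ℤ)) • (x * f)) * y - (v * qn v (N+1)) • (x * (f * y - v⁻¹ • (y * f))) := by
      rw [dp_one H.gen]
      simp only [mul_sub, sub_mul, mul_smul_comm, smul_mul_assoc, mul_assoc]
      have hs := H.gen.sq_ne
      have hN : v ^ N ≠ 0 := pow_ne_zero _ hv
      simp only [qn_eq H.gen, zpow_neg, zpow_add₀ hv, zpow_sub₀ hv, zpow_one, two_mul, neg_add, zpow_natCast]
      match_scalars <;> (field_simp; try ring)
    rw [e1, map_sub, map_smul, map_mul, map_mul, hx.T_dm H, hy.T_dm1 H, hx.Tx, hy.Ty H]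
    push_cast
    rw [show (N:ℤ) + 1 - N = 1 by ring, qn_one H.gen]
    have e3 : v ^ (-(N+1:ℤ)) = v ^ (-(N:ℤ) - 1) := by congr 1; ring
    rw [e3]
    simp only [mul_sub, sub_mul, mul_smul_comm, smul_mul_assoc, mul_assoc]
    match_scalars <;> (field_simp; try ring)

theorem dp_zl {N : ℕ} {x y : R} (hy : IsP v e f t T 1 y) (r : ℕ) :
    dp v f N (qn v (N+1) • ((f * y - v • (y * f)) * x) - v ^ (-(N:ℤ)-1) • (y * dp v f (N+1) x 1)) r =
      qn v (N + 1 - r) • ((f * y - v • (y * f)) * dp v f (N+1) x r)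
      - (v ^ ((r:ℤ) - N - 1) * qn v (r+1)) • (y * dp v f (N+1) x (r+1)) := by
  have hv := H.gen.ne
  have L1 := leib_l H.gen f y _ rfl (hy.y1_comm H) ((N:ℤ) + 1 - 2) (dp v f (N+1) x 1)
  have L2 := leib_l1 H.gen f _ (hy.y1_comm H) ((N:ℤ)+1) x r
  rw [show (N:ℤ) + 1 - 1 = N by ring] at L2
  rw [show (N:ℤ) + 1 - 2 + 1 = N by ring] at L1
  rw [dp_sub, dp_smul, dp_smul, L2]
  cases r with
  | zero => simp [dp_zero, qn_one H.gen]
  | succ r =>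
    rw [L1, dp_dp_one H.gen, dp_dp_one H.gen]
    push_cast
    have hs := H.gen.sq_ne
    have hN : v ^ N ≠ 0 := pow_ne_zero _ hv
    have hr : v ^ r ≠ 0 := pow_ne_zero _ hv
    simp only [inv_pow, pow_succ, mul_smul_comm, qn_eq H.gen, zpow_neg, zpow_add₀ hv, zpow_sub₀ hv, zpow_one, two_mul, neg_add, zpow_natCast]
    match_scalars <;> (field_simp; try ring)

theorem IsP.z_l {N : ℕ} {x y : R} (hx : IsP v e f t T (N+1) x) (hy : IsP v e f t T 1 y) :
    IsP v e f t T N (qn v (N+1) • ((f * y - v • (y * f)) * x) - v ^ (-(N:ℤ)-1) • (y * dp v f (N+1) x 1)) := by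
  have hv := H.gen.ne
  have Z := dp_zl (N := N) (x := x) H hy
  refine ⟨?_, ?_, ?_, ?_⟩
  · have h1 := Wt.mul H hy.wt (wt_dp H hx.wt 1)
    have h2 := Wt.mul H (hy.wt_y1 H) hx.wt
    push_cast at h1 h2
    rw [show 1 + ((N:ℤ) + 1 - 2) = N by ring] at h1
    rw [show -1 + ((N:ℤ) + 1) = N by ring] at h2
    exact (h2.smul _).sub (h1.smul _)
  · have h1 := e_dp H hx.wt hx.comm 0
    have h2 := hy.e_y1 H
    have h3 := hx.wt.s_mul H
    push_cast at h1 h3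
    simp only [zero_add, sub_zero, dp_zero] at h1
    rw [show -((N:ℤ)+1) = -N-1 by ring] at h3
    set y1 := (f * y - v • (y * f))
    set X1 := dp v f (N+1) x 1
    simp only [mul_sub, sub_mul, mul_smul_comm, smul_mul_assoc]
    rw [← mul_assoc, h2, ← mul_assoc e y, hy.comm]
    simp only [mul_assoc, h1, hx.comm, add_mul, mul_add, smul_mul_assoc, mul_smul_comm, h3]
    module
  · rw [Z]
    have := hx.vanish (N+1+1) (by omega)
    push_cast at this
    have h2 := hx.van
    push_cast at h2
    push_cast
    rw [h2, show (N:ℤ) + 1 - (N+1) = 0 by ring, qn_zero]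
    simp
  · rw [Z]
    have e1 : (qn v (N+1) • ((f * y - v • (y * f)) * x) - v ^ (-(N:ℤ)-1) • (y * dp v f (N+1) x 1))
       = qn v (N+1) • ((f * y - v⁻¹ • (y * f)) * x) - (v ^ (N+1)) • (y * (f * x - v ^ (-(N+1:ℤ)) • (x * f))) := by
      rw [dp_one H.gen]
      simp only [mul_sub, sub_mul, mul_smul_comm, smul_mul_assoc, mul_assoc]
      have hs := H.gen.sq_ne
      have hN : v ^ N ≠ 0 := pow_ne_zero _ hv
      simp only [qn_eq H.gen, zpow_neg, zpow_add₀ hv, zpow_sub₀ hv, zpow_one, two_mul, neg_add, zpow_natCast]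
      match_scalars <;> (field_simp; try ring)
    rw [e1, map_sub, map_smul, map_smul, map_mul, map_mul, hx.T_dm H, hy.T_dm1 H, hx.Tx, hy.Ty H]
    push_cast
    rw [show (N:ℤ) + 1 - N = 1 by ring, qn_one H.gen]
    have hN : v ^ N ≠ 0 := pow_ne_zero _ hv
    simp only [mul_sub, sub_mul, mul_smul_comm, smul_mul_assoc, mul_assoc, zpow_neg, zpow_add₀ hv, zpow_sub₀ hv, zpow_one, zpow_natCast]
    match_scalars <;> (field_simp; try ring)
end SLTWO2


-- part A5
set_option linter.unusedSimpArgs false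
section SLTWO3
variable {K : Type*} [Field K] {R : Type*} [Ring R] [Algebra K R]

/-- good elements of weight `w`: spanned by string elements of primitive vectors -/
def GG (v : K) (e f t : R) (T : R ≃ₐ[K] R) (w : ℤ) : Submodule K R :=
  Submodule.span K {u | ∃ (n : ℕ) (z : R) (s : ℕ), IsP v e f t T n z ∧ (n:ℤ) - 2 * s = w ∧ u = dp v f n z s}

variable {v : K} {e f t s : R} {T : R ≃ₐ[K] R} (H : SL2 v e f t s T)

theorem GG.dp {n : ℕ} {z : R} (h : IsP v e f t T n z) (r : ℕ) {w : ℤ} (hw : (n:ℤ) - 2 * r = w) :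
    dp v f n z r ∈ GG v e f t T w := Submodule.subset_span ⟨n, z, r, h, hw, rfl⟩

theorem GG.ind {w w' : ℤ} (φ : R →ₗ[K] R)
    (h : ∀ (n : ℕ) (z : R) (s : ℕ), IsP v e f t T n z → (n:ℤ) - 2 * s = w → φ (_root_.dp v f n z s) ∈ GG v e f t T w')
    {x : R} (hx : x ∈ GG v e f t T w) : φ x ∈ GG v e f t T w' := by
  have : GG v e f t T w ≤ (GG v e f t T w').comap φ := by
    apply Submodule.span_le.mpr
    rintro u ⟨n, z, s, h1, h2, rfl⟩
    exact h n z s h1 h2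
  exact this hx

/-- `u` acts on good elements, shifting the weight by `c` -/
def Op (v : K) (e f t : R) (T : R ≃ₐ[K] R) (c : ℤ) (u : R) : Prop :=
  ∀ w x, x ∈ GG v e f t T w → u * x ∈ GG v e f t T (w + c) ∧ x * u ∈ GG v e f t T (w + c)

theorem Op.mul {c c' : ℤ} {u u' : R} (h : Op v e f t T c u) (h' : Op v e f t T c' u') :
    Op v e f t T (c + c') (u * u') := by
  intro w x hx
  constructor
  · have := (h _ _ (h' _ _ hx).1).1
    rw [← mul_assoc] at this
    convert this using 2; ring
  · have := (h' _ _ (h _ _ hx).2).2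
    rw [mul_assoc] at this
    convert this using 2; ring

theorem Op.smul {c : ℤ} {u : R} (a : K) (h : Op v e f t T c u) : Op v e f t T c (a • u) := by
  intro w x hx
  rw [smul_mul_assoc, mul_smul_comm]
  exact ⟨Submodule.smul_mem _ _ (h w x hx).1, Submodule.smul_mem _ _ (h w x hx).2⟩

theorem Op.add {c : ℤ} {u u' : R} (h : Op v e f t T c u) (h' : Op v e f t T c u') :
    Op v e f t T c (u + u') := by
  intro w x hx
  rw [add_mul, mul_add]
  exact ⟨Submodule.add_mem _ (h w x hx).1 (h' w x hx).1, Submodule.add_mem _ (h w x hx).2 (h' w x hx).2⟩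

theorem Op.sub {c : ℤ} {u u' : R} (h : Op v e f t T c u) (h' : Op v e f t T c u') :
    Op v e f t T c (u - u') := by
  intro w x hx
  rw [sub_mul, mul_sub]
  exact ⟨Submodule.sub_mem _ (h w x hx).1 (h' w x hx).1, Submodule.sub_mem _ (h w x hx).2 (h' w x hx).2⟩

theorem Op.str {c : ℤ} {u : R} (h : Op v e f t T c u) (v' : K) (w' : ℤ) {w : ℤ} {x : R}
    (hx : x ∈ GG v e f t T w) (r : ℕ) : _root_.dp v' u w' x r ∈ GG v e f t T (w + r * c) := by
  induction r with
  | zero => simpa [dp_zero] using hx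
  | succ r ih =>
    rw [_root_.dp]
    have h1 := h _ _ ih
    rw [show w + r * c + c = w + ((r+1:ℕ):ℤ) * c by push_cast; ring] at h1
    exact Submodule.smul_mem _ _ (Submodule.sub_mem _ h1.1 (Submodule.smul_mem _ _ h1.2))

include H

theorem GG.wt {w : ℤ} {x : R} (hx : x ∈ GG v e f t T w) : Wt v t w x := by
  refine Submodule.span_induction ?_ ?_ ?_ ?_ hx
  · rintro u ⟨n, z, s, h1, h2, rfl⟩
    rw [← h2]; exact wt_dp H h1.wt s
  · simp [Wt]
  · intro x y _ _ h1 h2; exact h1.add h2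
  · intro a x _ h1; exact h1.smul a

theorem GG.F {w : ℤ} {x : R} (hx : x ∈ GG v e f t T w) :
    f * x - v ^ w • (x * f) ∈ GG v e f t T (w - 2) := by
  let φ : R →ₗ[K] R := LinearMap.mulLeft K f - v ^ w • LinearMap.mulRight K f
  have := GG.ind (w' := w - 2) φ ?_ hx
  · simpa [φ] using this
  · intro n z r h1 h2
    have := dp_succ H.gen f n z r
    rw [h2] at this
    simp only [φ, LinearMap.sub_apply, LinearMap.mulLeft_apply, LinearMap.smul_apply, LinearMap.mulRight_apply]
    rw [← this]
    exact Submodule.smul_mem _ _ (GG.dp h1 _ (by push_cast; rw [← h2]; ring))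

theorem GG.mul_y {w : ℤ} {x y : R} (hy : IsP v e f t T 1 y) (hx : x ∈ GG v e f t T w) :
    x * y ∈ GG v e f t T (w + 1) := by
  have hv := H.gen.ne
  refine GG.ind (LinearMap.mulRight K y) ?_ hx
  intro n x r hx hw
  rw [LinearMap.mulRight_apply]
  cases r with
  | zero => rw [dp_zero]; exact GG.dp (hx.mul_r H hy) 0 (by push_cast; rw [← hw]; push_cast; ring)
  | succ r =>
    cases n with
    | zero => rw [hx.vanish (r+1) (by omega)]; simp
    | succ N =>
      have h1 := GG.dp (hx.mul_r H hy) (r+1) (w := w+1) (by rw [← hw]; push_cast; ring)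
      have h2 := GG.dp (hx.z_r H hy) r (w := w+1) (by rw [← hw]; push_cast; ring)
      push_cast at h1
      have L := leib_r H.gen f y _ rfl (hy.y1_comm H) ((N:ℤ)+1) x r
      rw [L] at h1
      rw [dp_zr H hy] at h2
      have hN : qn v ((N:ℤ)+2) ≠ 0 := qn_ne H.gen _ (by omega)
      have key : _root_.dp v f ((N:ℤ)+1) x (r+1) * y = (qn v ((N:ℤ)+2))⁻¹ • ((v ^ (-(r:ℤ) - 1) * qn v (N + 1 - r)) • (_root_.dp v f (↑N + 1) x (r + 1) * y + v ^ (↑N + 1 - (r:ℤ)) • (_root_.dp v f (↑N + 1) x r * (f * y - v • (y * f)))) + v ^ ((N:ℤ) + 1 - r) • (qn v (↑r + 1) • (_root_.dp v f (↑N + 1) x (r + 1) * y) -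
        (v ^ (-(r:ℤ) - 1) * qn v (↑N + 1 - ↑r)) • (_root_.dp v f (↑N + 1) x r * (f * y - v • (y * f))))) := by
        rw [eq_inv_smul_iff₀ hN]
        set A := _root_.dp v f (↑N + 1) x (r + 1) * y
        set B := _root_.dp v f (↑N + 1) x r * (f * y - v • (y * f))
        have : qn v ((N:ℤ)+2) = v ^ (-(r:ℤ) - 1) * qn v (N + 1 - r) + v ^ ((N:ℤ) + 1 - r) * qn v (r+1) := by
          have hs := H.gen.sq_ne
          have hN : v ^ N ≠ 0 := pow_ne_zero _ hv
          have hr : v ^ r ≠ 0 := pow_ne_zero _ hv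
          simp only [qn_eq H.gen, zpow_neg, zpow_add₀ hv, zpow_sub₀ hv, zpow_one, two_mul, neg_add, zpow_natCast, zpow_two]
          field_simp
          ring
        rw [this]
        module
      push_cast
      rw [key]
      exact Submodule.smul_mem _ _ (Submodule.add_mem _ (Submodule.smul_mem _ _ h1) (Submodule.smul_mem _ _ h2))

theorem GG.y_mul {w : ℤ} {x y : R} (hy : IsP v e f t T 1 y) (hx : x ∈ GG v e f t T w) :
    y * x ∈ GG v e f t T (w + 1) := by
  have hv := H.gen.ne
  refine GG.ind (LinearMap.mulLeft K y) ?_ hx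
  intro n x r hx hw
  rw [LinearMap.mulLeft_apply]
  cases r with
  | zero => rw [dp_zero]; exact GG.dp (hx.mul_l H hy) 0 (by push_cast; rw [← hw]; push_cast; ring)
  | succ r =>
    cases n with
    | zero => rw [hx.vanish (r+1) (by omega)]; simp
    | succ N =>
      have h1 := GG.dp (hx.mul_l H hy) (r+1) (w := w+1) (by rw [← hw]; push_cast; ring)
      have h2 := GG.dp (hx.z_l H hy) r (w := w+1) (by rw [← hw]; push_cast; ring)
      push_cast at h1
      have L := leib_l H.gen f y _ rfl (hy.y1_comm H) ((N:ℤ)+1) x r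
      rw [L] at h1
      rw [dp_zl H hy] at h2
      have hN : qn v ((N:ℤ)+2) ≠ 0 := qn_ne H.gen _ (by omega)
      have key : y * _root_.dp v f ((N:ℤ)+1) x (r+1) = (qn v ((N:ℤ)+2))⁻¹ • (qn v (N + 1 - r) • (v ^ (r+1) • (y * _root_.dp v f (↑N + 1) x (r + 1)) + (f * y - v • (y * f)) * (_root_.dp v f (↑N + 1) x r)) - (qn v (N + 1 - r) • ((f * y - v • (y * f)) * _root_.dp v f (N+1) x r)
      - (v ^ ((r:ℤ) - N - 1) * qn v (r+1)) • (y * _root_.dp v f (N+1) x (r+1)))) := by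
        rw [eq_inv_smul_iff₀ hN]
        set A := y * _root_.dp v f (↑N + 1) x (r + 1)
        set B := (f * y - v • (y * f)) * _root_.dp v f (↑N + 1) x r
        have : qn v ((N:ℤ)+2) = qn v (N + 1 - r) * v ^ (r+1) + v ^ ((r:ℤ) - N - 1) * qn v (r+1) := by
          have hs := H.gen.sq_ne
          have hN : v ^ N ≠ 0 := pow_ne_zero _ hv
          have hr : v ^ r ≠ 0 := pow_ne_zero _ hv
          simp only [qn_eq H.gen, zpow_neg, zpow_add₀ hv, zpow_sub₀ hv, zpow_one, two_mul, neg_add, zpow_natCast, zpow_two]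
          field_simp
          ring
        rw [this]
        module
      push_cast
      rw [key]
      exact Submodule.smul_mem _ _ (Submodule.sub_mem _ (Submodule.smul_mem _ _ h1) h2)

theorem Op.y {y : R} (hy : IsP v e f t T 1 y) : Op v e f t T 1 y :=
  fun _ _ hx => ⟨GG.y_mul H hy hx, GG.mul_y H hy hx⟩

theorem Op.y1 {y : R} (hy : IsP v e f t T 1 y) : Op v e f t T (-1) (f * y - v • (y * f)) := by
  have hv := H.gen.ne
  intro w x hx
  have hw : v ^ w ≠ 0 := zpow_ne_zero _ hv
  have h1 := GG.F H hx
  constructor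
  · have a := GG.F H (GG.y_mul H hy hx)
    have b := GG.y_mul H hy h1
    rw [show w + 1 - 2 = w + -1 by ring] at a
    rw [show w - 2 + 1 = w + -1 by ring] at b
    have key : (f * y - v • (y * f)) * x = (f * (y * x) - v ^ (w+1) • (y * x * f)) - v • (y * (f * x - v ^ w • (x * f))) := by
      simp only [mul_sub, sub_mul, mul_smul_comm, smul_mul_assoc, mul_assoc, zpow_add₀ hv, zpow_one]
      module
    rw [key]
    exact Submodule.sub_mem _ a (Submodule.smul_mem _ _ b)
  · have a := GG.F H (GG.mul_y H hy hx)
    have b := GG.mul_y H hy h1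
    rw [show w + 1 - 2 = w + -1 by ring] at a
    rw [show w - 2 + 1 = w + -1 by ring] at b
    have key : x * (f * y - v • (y * f)) = (v ^ w)⁻¹ • ((f * (x * y) - v ^ (w+1) • (x * y * f)) - ((f * x - v ^ w • (x * f)) * y)) := by
      rw [eq_inv_smul_iff₀ hw]
      simp only [mul_sub, sub_mul, mul_smul_comm, smul_mul_assoc, mul_assoc, zpow_add₀ hv, zpow_one]
      module
    rw [key]
    exact Submodule.smul_mem _ _ (Submodule.sub_mem _ a b)

theorem GG.repr {m : ℕ} {d : R} (hd : d ∈ GG v e f t T (-m)) :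
    ∃ (S : ℕ) (z : ℕ → R), (∀ k, IsP v e f t T (m + 2 * k) (z k)) ∧ (∀ k, S ≤ k → z k = 0) ∧
      d = ∑ k ∈ Finset.range S, _root_.dp v f ((m + 2 * k : ℕ):ℤ) (z k) (m + k) := by
  have ext : ∀ (S S' : ℕ) (z : ℕ → R), S ≤ S' → (∀ k, S ≤ k → z k = 0) →
     ∑ k ∈ Finset.range S, _root_.dp v f ((m + 2 * k : ℕ):ℤ) (z k) (m + k) = 
     ∑ k ∈ Finset.range S', _root_.dp v f ((m + 2 * k : ℕ):ℤ) (z k) (m + k) := by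
    intro S S' z hS hz
    apply Finset.sum_subset
    · intro k hk; simp at *; omega
    · intro k _ hk
      rw [hz k (by simpa using hk), dp_zero_arg]
  refine Submodule.span_induction ?_ ?_ ?_ ?_ hd
  · rintro u ⟨n, z, s, h1, h2, rfl⟩
    by_cases hn : n < m
    · refine ⟨0, fun _ => 0, fun _ => IsP.zero _, fun _ _ => rfl, ?_⟩
      rw [h1.vanish s (by omega)]; simp
    · obtain ⟨k, rfl⟩ : ∃ k, s = m + k := ⟨s - m, by omega⟩
      have hn2 : n = m + 2 * k := by omega
      subst hn2
      refine ⟨k+1, fun k' => if k' = k then z else 0, ?_, ?_, ?_⟩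
      · intro k'
        by_cases hk : k' = k
        · subst hk; simpa using h1
        · simp only [hk, if_false]; exact IsP.zero _
      · intro k' hk'
        exact if_neg (by omega)
      · rw [Finset.sum_eq_single k]
        · simp
        · intro b _ hb; simp only [hb, if_false]; exact dp_zero_arg _ _ _ _
        · intro hk; simp at hk
  · exact ⟨0, fun _ => 0, fun _ => IsP.zero _, fun _ _ => rfl, by simp⟩
  · rintro x y _ _ ⟨S, z, h1, h2, rfl⟩ ⟨S', z', h1', h2', rfl⟩
    refine ⟨max S S', fun k => z k + z' k, fun k => (h1 k).add (h1' k), ?_, ?_⟩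
    · intro k hk
      beta_reduce
      rw [h2 k (by omega), h2' k (by omega), add_zero]
    · rw [ext S (max S S') z (by omega) h2, ext S' (max S S') z' (by omega) h2', ← Finset.sum_add_distrib]
      simp only [dp_add]
  · rintro a x _ ⟨S, z, h1, h2, rfl⟩
    refine ⟨S, fun k => a • z k, fun k => (h1 k).smul a, fun k hk => by beta_reduce; rw [h2 k hk, smul_zero], ?_⟩
    simp only [dp_smul, Finset.smul_sum]

theorem GG.prim {m : ℕ} {d : R} (hd : d ∈ GG v e f t T (-m)) (h0 : (eps e t)^[m+1] d = 0) :
    ∃ z, IsP v e f t T m z ∧ d = _root_.dp v f m z m := by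
  obtain ⟨S, z, h1, -, h3⟩ := GG.repr H hd
  clear hd
  induction S with
  | zero => exact ⟨0, IsP.zero _, by rw [h3]; simp [dp_zero_arg]⟩
  | succ S ih =>
    cases S with
    | zero => exact ⟨z 0, h1 0, by rw [h3]; simp⟩
    | succ S =>
      apply ih
      rw [Finset.sum_range_succ] at h3
      have hz : ∀ n (g : ℕ → R) (M : ℕ), (∀ k < M, (eps e t)^[n] (g k) = 0) → (eps e t)^[n] (∑ k ∈ Finset.range M, g k) = 0 := by
        intro n g M hg
        induction M with
        | zero => simp [epsit_zero]
        | succ M ih => rw [Finset.sum_range_succ, epsit_add, ih (fun k hk => hg k (by omega)), hg M (by omega), add_zero]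
      have e1 := congrArg (eps e t)^[m + (S+1)] h3
      rw [epsit_add, hz _ _ _ (fun k hk => epsit_dp_zero H (h1 k).wt (h1 k).comm _ _ (by omega)), zero_add] at e1
      obtain ⟨c, hc, hc2⟩ := epsit_dp_top H (h1 (S+1)).wt (h1 (S+1)).comm (m + (S+1)) (by push_cast; omega)
      have e2 : (eps e t)^[m + (S+1)] d = 0 := by
        rw [show m + (S+1) = S + (m+1) by ring, Function.iterate_add_apply, h0, epsit_zero]
      rw [hc2, e2] at e1
      have : z (S+1) = 0 := by
        rcases smul_eq_zero.mp e1.symm with h | h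
        · exact absurd h hc
        · exact h
      rw [h3, this, dp_zero_arg, add_zero]

/-- main criterion -/
theorem GG.final {m : ℕ} {z0 : R} (hd : T z0 ∈ GG v e f t T (-m)) (h0 : xm v f m z0 (m+1) = 0) :
    IsP v e f t T m z0 := by
  have hw : Wt v t m z0 := wt_of_T H (GG.wt H hd)
  obtain ⟨c, hc, h1⟩ := T_xm H hw (m+1)
  rw [h0, map_zero] at h1
  have h2 : (eps e t)^[m+1] (T z0) = 0 := by
    rcases smul_eq_zero.mp h1.symm with h | h
    · exact absurd h hc
    · exact h
  obtain ⟨z, hz, hz2⟩ := GG.prim H hd h2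
  rw [← hz.Tx] at hz2
  rw [T.injective hz2]; exact hz
end SLTWO3


-- part B1
set_option linter.unusedSimpArgs false
section RankTwo
variable {K : Type*} [Field K] {R : Type*} [Ring R] [Algebra K R]

theorem dp_mapE (T : R ≃ₐ[K] R) (v : K) (f : R) (w : ℤ) (x : R) (r : ℕ) :
    T (dp v f w x r) = dp v (T f) w (T x) r := dp_map (T : R →ₐ[K] R) v f w x r

theorem xm_mapE (T : R ≃ₐ[K] R) (v : K) (f : R) (w : ℤ) (x : R) (r : ℕ) :
    T (xm v f w x r) = xm v (T f) w (T x) r := xm_map (T : R →ₐ[K] R) v f w x r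

theorem dp_comm1 (v : K) (f f' : R) (hc : f * f' = f' * f) (w : ℤ) (c : K) (x : R) (r : ℕ) :
    dp v f w (f' * x - c • (x * f')) r = f' * dp v f w x r - c • (dp v f w x r * f') := by
  have hc' : ∀ z, f * (f' * z) = f' * (f * z) := fun z => by rw [← mul_assoc, hc, mul_assoc]
  induction r with
  | zero => rfl
  | succ r ih =>
    simp only [dp, ih, mul_sub, sub_mul, mul_smul_comm, smul_mul_assoc, mul_assoc, hc, hc']
    module

theorem dp_comm (v v' : K) (f f' : R) (hc : f * f' = f' * f) (w w' : ℤ) (x : R) (r r' : ℕ) :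
    dp v f w (dp v' f' w' x r') r = dp v' f' w' (dp v f w x r) r' := by
  induction r' with
  | zero => rfl
  | succ r' ih =>
    rw [dp, dp_smul, dp_comm1 _ _ _ hc, ih, dp]

variable {vi vj : K} {ei fi ti si ej fj tj sj : R} {Ti Tj : R ≃ₐ[K] R}

theorem rank2_zero (hi : IsP vi ei fi ti Ti 0 fj) (hj : IsP vj ej fj tj Tj 0 fi)
    (gi : Gen vi) :
    Tj fi = fi ∧ Ti fj = fj ∧ ∀ (fk : R) (n m : ℕ), IsP vi ei fi ti Ti n fk → IsP vj ej fj tj Tj m fk →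
      Ti (Tj fk) = Tj (Ti fk) := by
  have h1 : Tj fi = fi := hj.Tx
  have h2 : Ti fj = fj := hi.Tx
  refine ⟨h1, h2, ?_⟩
  intro fk n m hn hm
  have hc : fj * fi = fi * fj := by
    have h3 := hi.van
    rw [zero_add, dp_one gi] at h3
    simp only [Nat.cast_zero, zpow_zero, one_smul] at h3
    exact (sub_eq_zero.mp h3).symm
  rw [hm.Tx, hn.Tx, dp_mapE, dp_mapE, h1, h2, hm.Tx, hn.Tx, dp_comm _ _ _ _ hc]

variable (Hi : SL2 vi ei fi ti si Ti) (Hj : SL2 vj ej fj tj sj Tj)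

include Hi Hj in
/-- basic facts -/
theorem rank2_basic {a : ℕ} (hv : vj = vi ^ (a+1)) (hi : IsP vi ei fi ti Ti (a+1) fj) (hj : IsP vj ej fj tj Tj 1 fi) :
    Tj (dp vi fi ((a+1:ℕ):ℤ) fj 1) = fi ∧ Ti (Tj fi) = dp vi fi ((a+1:ℕ):ℤ) fj a := by
  have hvi := Hi.gen.ne
  have hvj := Hj.gen.ne
  have e0 : vi ^ ((a:ℤ)+1) = vj := by rw [hv]; norm_cast
  constructor
  · rw [dp_one Hi.gen]
    have h1 := hj.T_dm1 Hj
    push_cast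
    rw [e0]
    have : fi * fj - vj • (fj * fi) = (-vj) • (fj * fi - vj⁻¹ • (fi * fj)) := by
      match_scalars <;> field_simp
    rw [this, map_smul, h1, smul_smul]
    field_simp
    simp
  · rw [hj.Ty Hj]
    have h1 := hi.T_dm Hi
    have : fj * fi - vj • (fi * fj) = (-vj) • (fi * fj - vj⁻¹ • (fj * fi)) := by
      match_scalars <;> field_simp
    rw [zpow_neg, e0] at h1
    rw [this, map_smul, h1, smul_smul]
    push_cast
    field_simp
    simp

include Hi in
/-- `Ti` on a q-commutator with `fi` -/
theorem T_comm_fi {w : ℤ} {x : R} (hx : Wt vi ti w x) (u : R) (hu : Ti u = x) (c : K) (hc : c = vi ^ (-w)) :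
    Ti (u * fi - c • (fi * u)) = eps ei ti x := by
  have hvi := Hi.gen.ne
  simp only [map_sub, map_mul, map_smul, hu, Hi.Tf, eps]
  have hx' : ti * x = vi ^ w • (x * ti) := hx
  have : vi ^ w ≠ 0 := zpow_ne_zero _ hvi
  rw [hc, zpow_neg]
  simp only [mul_neg, neg_mul, mul_assoc, hx', mul_smul_comm, sub_mul]
  match_scalars <;> field_simp

include Hi Hj in
theorem rank2_one (hv : vj = vi) (hi : IsP vi ei fi ti Ti 1 fj) (hj : IsP vj ej fj tj Tj 1 fi) :
    Ti (Tj fi) = fj ∧ Tj (Ti fj) = fi ∧ ∀ (fk : R) (n m : ℕ), IsP vi ei fi ti Ti n fk → IsP vj ej fj tj Tj m fk →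
      Tj (Ti (Tj fk)) = Ti (Tj (Ti fk)) := by
  obtain ⟨h1, h2⟩ := rank2_basic (a := 0) Hi Hj (by simpa using hv) hi hj
  have h3 : Ti fj = dp vi fi ((0+1:ℕ):ℤ) fj 1 := hi.Tx
  rw [← h3] at h1
  rw [dp_zero] at h2
  refine ⟨h2, h1, ?_⟩
  intro fk n m hn hm
  have O1 := Op.y Hj hj
  have O2 := Op.y1 Hj hj
  rw [← hj.Ty Hj] at O2
  have X1 : Tj fk ∈ GG vj ej fj tj Tj (-m) := by rw [hm.Tx]; exact GG.dp hm m (by ring)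
  have X2 := O2.str vi n X1 n
  rw [← dp_mapE, ← hn.Tx] at X2
  have X3 := O1.str vj m X2 m
  rw [show fi = Tj (Ti fj) from h1.symm, ← dp_mapE, ← dp_mapE, ← hm.Tx] at X3
  have X4 : Tj (Ti (Tj fk)) ∈ GG vj ej fj tj Tj (-n) := by
    convert X3 using 2; ring
  have x0 := congrArg (fun z => Ti (Tj z)) (hn.xm_zero Hi)
  simp only [xm_mapE, h2, map_zero] at x0
  rw [← hv] at x0
  have := GG.final Hj X4 x0
  rw [this.Tx, hn.Tx, dp_mapE, dp_mapE, h2, hv]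

include Hi Hj in
theorem rank2_two (hv : vj = vi ^ 2) (hi : IsP vi ei fi ti Ti 2 fj) (hj : IsP vj ej fj tj Tj 1 fi) :
    Tj (Ti (Tj fi)) = fi ∧ Ti (Tj (Ti fj)) = fj ∧ ∀ (fk : R) (n m : ℕ), IsP vi ei fi ti Ti n fk → IsP vj ej fj tj Tj m fk →
      Tj (Ti (Tj (Ti fk))) = Ti (Tj (Ti (Tj fk))) := by
  obtain ⟨h1, h2⟩ := rank2_basic (a := 1) Hi Hj hv hi hj
  have h3 : Ti fj = dp vi fi ((2:ℕ):ℤ) fj 2 := hi.Tx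
  have q2 : qn vi 2 ≠ 0 := qn_ne Hi.gen _ (by norm_num)
  have h12 : Tj (Ti (Tj fi)) = fi := by rw [h2, h1]
  have hr3 : Tj (Ti fj) = (qn vi 2)⁻¹ • (Tj fi * fi - (1:K) • (fi * Tj fi)) := by
    rw [h3, dp]
    simp only [map_smul, map_sub, map_mul]
    rw [h1]
    norm_num
  have h5 : Ti (Tj (Ti fj)) = fj := by
    rw [hr3, map_smul, T_comm_fi Hi (wt_dp Hi hi.wt 1) (Tj fi) h2 1 (by norm_num), eps_dp Hi hi.wt hi.comm, smul_smul, dp_zero]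
    norm_num
    rw [inv_mul_cancel₀ q2, one_smul]
  refine ⟨h12, h5, ?_⟩
  intro fk n m hn hm
  have O1 := Op.y Hj hj
  have O2 := Op.y1 Hj hj
  rw [← hj.Ty Hj] at O2
  have O3 : Op vj ej fj tj Tj 0 (Tj (Ti fj)) := by
    rw [hr3]; exact ((O2.mul O1).sub ((O1.mul O2).smul _)).smul _
  have X1 : Tj fk ∈ GG vj ej fj tj Tj (-m) := by rw [hm.Tx]; exact GG.dp hm m (by ring)
  have X2 := O2.str vi n X1 n
  rw [← dp_mapE, ← hn.Tx] at X2
  have X3 := O3.str vj m X2 m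
  rw [← dp_mapE, ← dp_mapE, ← hm.Tx] at X3
  have X5 := O1.str vi n X3 n
  rw [show fi = Tj (Ti (Tj fi)) from h12.symm, ← dp_mapE, ← dp_mapE, ← dp_mapE, ← hn.Tx] at X5
  have X4 : Tj (Ti (Tj (Ti fk))) ∈ GG vj ej fj tj Tj (-m) := by
    convert X5 using 2; ring
  have x0 := congrArg (fun z => Ti (Tj (Ti z))) (hm.xm_zero Hj)
  simp only [xm_mapE, h5, map_zero] at x0
  have := GG.final Hj X4 x0
  rw [this.Tx, hm.Tx, dp_mapE, dp_mapE, dp_mapE, h5]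

include Hi Hj in
theorem rank2_three (hv : vj = vi ^ 3) (hi : IsP vi ei fi ti Ti 3 fj) (hj : IsP vj ej fj tj Tj 1 fi) :
    Tj (Ti (Tj (Ti (Tj fi)))) = fi ∧ Ti (Tj (Ti (Tj (Ti fj)))) = fj ∧
    ∀ (fk : R) (n m : ℕ), IsP vi ei fi ti Ti n fk → IsP vj ej fj tj Tj m fk →
      Tj (Ti (Tj (Ti (Tj (Ti fk))))) = Ti (Tj (Ti (Tj (Ti (Tj fk))))) := by
  obtain ⟨h1, h2⟩ := rank2_basic (a := 2) Hi Hj hv hi hj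
  have h3 : Ti fj = dp vi fi ((3:ℕ):ℤ) fj 3 := hi.Tx
  have q2 : qn vi 2 ≠ 0 := qn_ne Hi.gen _ (by norm_num)
  have q3 : qn vi 3 ≠ 0 := qn_ne Hi.gen _ (by norm_num)
  have hr4 : Tj (Ti (Tj fi)) = (qn vi 2)⁻¹ • (Tj fi * fi - vi • (fi * Tj fi)) := by
    rw [h2, dp]
    simp only [map_smul, map_sub, map_mul]
    rw [h1]
    norm_num
  have hb : Ti (Tj (Ti (Tj fi))) = dp vi fi ((3:ℕ):ℤ) fj 1 := by
    rw [hr4, map_smul, T_comm_fi Hi (wt_dp Hi hi.wt 2) (Tj fi) h2 vi (by norm_num), eps_dp Hi hi.wt hi.comm, smul_smul]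
    norm_num
    rw [inv_mul_cancel₀ q2, one_smul]
  have h12 : Tj (Ti (Tj (Ti (Tj fi)))) = fi := by rw [hb]; exact h1
  have h4 : Ti fj = (qn vi 3)⁻¹ • (fi * Ti (Tj fi) - vi⁻¹ • (Ti (Tj fi) * fi)) := by
    rw [h3, h2, dp]; norm_num
  have hr2 : Tj (Ti fj) = (qn vi 3)⁻¹ • (Tj fi * Tj (Ti (Tj fi)) - vi⁻¹ • (Tj (Ti (Tj fi)) * Tj fi)) := by
    rw [h4]; simp only [map_smul, map_sub, map_mul]
  have hr5 : Tj (Ti (Tj (Ti fj))) = (qn vi 3)⁻¹ • (Tj (Ti (Tj fi)) * fi - vi⁻¹ • (fi * Tj (Ti (Tj fi)))) := by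
    rw [hr2]; simp only [map_smul, map_sub, map_mul, h12]
  have h5 : Ti (Tj (Ti (Tj (Ti fj)))) = fj := by
    rw [hr5, map_smul, T_comm_fi Hi (wt_dp Hi hi.wt 1) (Tj (Ti (Tj fi))) hb vi⁻¹ (by norm_num), eps_dp Hi hi.wt hi.comm, smul_smul, dp_zero]
    norm_num
    rw [inv_mul_cancel₀ q3, one_smul]
  refine ⟨h12, h5, ?_⟩
  intro fk n m hn hm
  have O1 := Op.y Hj hj
  have O2 := Op.y1 Hj hj
  rw [← hj.Ty Hj] at O2
  have O4 : Op vj ej fj tj Tj 0 (Tj (Ti (Tj fi))) := by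
    rw [hr4]; exact ((O2.mul O1).sub ((O1.mul O2).smul _)).smul _
  have O3 : Op vj ej fj tj Tj (-1) (Tj (Ti fj)) := by
    rw [hr2]; exact ((O2.mul O4).sub ((O4.mul O2).smul _)).smul _
  have O5 : Op vj ej fj tj Tj 1 (Tj (Ti (Tj (Ti fj)))) := by
    rw [hr5]; exact ((O4.mul O1).sub ((O1.mul O4).smul _)).smul _
  have X1 : Tj fk ∈ GG vj ej fj tj Tj (-m) := by rw [hm.Tx]; exact GG.dp hm m (by ring)
  have X2 := O2.str vi n X1 n
  rw [← dp_mapE, ← hn.Tx] at X2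
  have X3 := O3.str vj m X2 m
  rw [← dp_mapE, ← dp_mapE, ← hm.Tx] at X3
  have X5 := O4.str vi n X3 n
  rw [← dp_mapE, ← dp_mapE, ← dp_mapE, ← hn.Tx] at X5
  have X6 := O5.str vj m X5 m
  rw [← dp_mapE, ← dp_mapE, ← dp_mapE, ← dp_mapE, ← hm.Tx] at X6
  have X7 := O1.str vi n X6 n
  rw [show fi = Tj (Ti (Tj (Ti (Tj fi)))) from h12.symm, ← dp_mapE, ← dp_mapE, ← dp_mapE, ← dp_mapE, ← dp_mapE, ← hn.Tx] at X7
  have X4 : Tj (Ti (Tj (Ti (Tj (Ti fk))))) ∈ GG vj ej fj tj Tj (-m) := by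
    convert X7 using 2; ring
  have x0 := congrArg (fun z => Ti (Tj (Ti (Tj (Ti z))))) (hm.xm_zero Hj)
  simp only [xm_mapE, h5, map_zero] at x0
  have := GG.final Hj X4 x0
  rw [this.Tx, hm.Tx, dp_mapE, dp_mapE, dp_mapE, dp_mapE, dp_mapE, h5]
end RankTwo


-- part C1
set_option linter.unusedSimpArgs false
noncomputable section
open MulOpposite
section Base

theorem qq_gen : Gen qq := by
  constructor
  · exact RatFunc.X_ne_zero
  · intro n hn h
    have h1 : algebraMap (Polynomial ℚ) (RatFunc ℚ) (Polynomial.X ^ n) = algebraMap (Polynomial ℚ) (RatFunc ℚ) 1 := by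
      rw [map_pow, RatFunc.algebraMap_X, map_one]; exact h
    have h2 := RatFunc.algebraMap_injective ℚ h1
    have h3 := congrArg Polynomial.natDegree h2
    simp at h3
    omega

theorem Gen.inv {K : Type*} [Field K] {v : K} (h : Gen v) : Gen v⁻¹ :=
  ⟨inv_ne_zero h.ne, fun n hn h1 => h.pw n hn (by rw [inv_pow, inv_eq_one] at h1; exact h1)⟩

theorem qpow_gen (d : ℤ) (hd : 0 < d) : Gen (qpow d) := by
  obtain ⟨n, rfl⟩ := Int.eq_ofNat_of_zero_le hd.le
  refine ⟨zpow_ne_zero _ qq_gen.ne, fun m hm h => qq_gen.pw (n * m) (Nat.mul_pos (by omega) hm) ?_⟩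
  rw [pow_mul]; simpa [qpow] using h

theorem qpow_mul (d n : ℤ) : qpow (d * n) = qpow d ^ n := zpow_mul _ _ _
theorem qpow_neg (d : ℤ) : qpow (-d) = (qpow d)⁻¹ := zpow_neg _ _

theorem qint_eq (d n : ℤ) : qint d n = qn (qpow d) n := by
  rw [qint, qn, qpow_neg d, ← mul_neg, qpow_mul, qpow_mul]

theorem qfact_eq (d : ℤ) (n : ℕ) : qfact d n = qfa (qpow d) n := by
  induction n with
  | zero => rfl
  | succ n ih => rw [qfact, qfa, ih, qint_eq]

theorem qn_inv {K : Type*} [Field K] (v : K) (n : ℤ) : qn v⁻¹ n = qn v n := by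
  rw [qn, qn, inv_inv, inv_zpow', inv_zpow', neg_neg, ← neg_sub (v ^ n), ← neg_sub v, neg_div_neg_eq]

theorem qfa_inv {K : Type*} [Field K] (v : K) (n : ℕ) : qfa v⁻¹ n = qfa v n := by
  induction n with
  | zero => rfl
  | succ n ih => rw [qfa, qfa, ih, qn_inv]
end Base

section Rel
variable {J : Type} [DecidableEq J] (C : CartanData J)

theorem u_rel {x y : FA J} (h : QRel C x y) : uMk C x = uMk C y := RingQuot.mkAlgHom_rel KK h

theorem u_ts (i : J) : uT C i * uTinv C i = 1 := by
  simpa [uT, uTinv] using u_rel C (QRel.t_tinv i)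
theorem u_st (i : J) : uTinv C i * uT C i = 1 := by
  simpa [uT, uTinv] using u_rel C (QRel.tinv_t i)
theorem u_tt (i j : J) : uT C i * uT C j = uT C j * uT C i := by
  simpa [uT, uTinv] using u_rel C (QRel.t_t i j)
theorem u_te (i j : J) : uT C i * uE C j = (qpow (C.d i) ^ (C.a i j)) • (uE C j * uT C i) := by
  rw [← qpow_mul]
  simpa [uT, uE] using u_rel C (QRel.t_e i j)
theorem u_tf (i j : J) : uT C i * uF C j = (qpow (C.d i) ^ (-C.a i j)) • (uF C j * uT C i) := by
  rw [← qpow_mul, mul_neg]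
  simpa [uT, uF] using u_rel C (QRel.t_f i j)
theorem u_ef (i : J) : uE C i * uF C i = uF C i * uE C i + (qpow (C.d i) - (qpow (C.d i))⁻¹)⁻¹ • (uT C i - uTinv C i) := by
  rw [← qpow_neg]
  have := u_rel C (QRel.e_f i i)
  simp only [if_true, map_sub, map_mul, map_smul] at this
  exact sub_eq_iff_eq_add'.mp this
theorem u_ef_ne (i j : J) (h : i ≠ j) : uE C i * uF C j = uF C j * uE C i := by
  have := u_rel C (QRel.e_f i j)
  simp only [if_neg h, map_sub, map_mul, map_smul, map_zero] at this
  exact sub_eq_zero.mp this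
theorem u_serreE (i j : J) (h : i ≠ j) : ∑ s ∈ Finset.range ((1 - C.a i j).toNat + 1),
    ((-1 : KK) ^ s) • (uEdp C i s * uE C j * uEdp C i ((1 - C.a i j).toNat - s)) = 0 := by
  have := u_rel C (QRel.serre_e i j h)
  simpa [serreE, edp, uE, uEdp, map_sum] using this
theorem u_serreF (i j : J) (h : i ≠ j) : ∑ s ∈ Finset.range ((1 - C.a i j).toNat + 1),
    ((-1 : KK) ^ s) • (uFdp C i s * uF C j * uFdp C i ((1 - C.a i j).toNat - s)) = 0 := by
  have := u_rel C (QRel.serre_f i j h)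
  simpa [serreF, fdp, uF, uFdp, map_sum] using this

theorem uFdp_eq (i : J) (s : ℕ) : uFdp C i s = fdv (qpow (C.d i)) (uF C i) s := by
  rw [uFdp, fdv, qfact_eq]
theorem uEdp_eq (i : J) (s : ℕ) : op (uEdp C i s) = fdv (qpow (C.d i))⁻¹ (op (uE C i)) s := by
  rw [uEdp, fdv, qfact_eq, qfa_inv, op_smul, op_pow]

/-- the hypotheses on the braid operators -/
structure BrOp (T : J → Uq C ≃ₐ[KK] Uq C) : Prop where
  hTt : ∀ k j : J, T k (uT C j) = uT C j * tpow C k (-(C.a k j))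
  hTei : ∀ k : J, T k (uE C k) = -(uTinv C k * uF C k)
  hTfi : ∀ k : J, T k (uF C k) = -(uE C k * uT C k)
  hTe : ∀ k j : J, j ≠ k → T k (uE C j) =
      ∑ r ∈ Finset.range ((-C.a k j).toNat + 1),
        ((-1 : KK) ^ r * qpow (-(C.d k * (r : ℤ)))) •
          (uEdp C k r * uE C j * uEdp C k ((-C.a k j).toNat - r))
  hTf : ∀ k j : J, j ≠ k → T k (uF C j) =
      ∑ r ∈ Finset.range ((-C.a k j).toNat + 1),
        ((-1 : KK) ^ r * qpow (C.d k * (r : ℤ))) •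
          (uFdp C k ((-C.a k j).toNat - r) * uF C j * uFdp C k r)

variable {C} {T : J → Uq C ≃ₐ[KK] Uq C} (B : BrOp C T)
include B

theorem BrOp.Ttk (k : J) : T k (uT C k) = uTinv C k := by
  rw [B.hTt, C.a_diag, tpow, if_neg (by norm_num)]
  rw [show (-(-2:ℤ)).toNat = 2 from rfl, pow_two, ← mul_assoc, u_ts, one_mul]

theorem BrOp.sl (k : J) : SL2 (qpow (C.d k)) (uE C k) (uF C k) (uT C k) (uTinv C k) (T k) where
  gen := qpow_gen _ (C.d_pos k)
  ts := u_ts C k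
  st := u_st C k
  te := by rw [u_te, C.a_diag]; norm_cast
  tf := by rw [u_tf, C.a_diag, zpow_neg, inv_pow]; norm_cast
  ef := u_ef C k
  Tf := B.hTfi k
  Te := B.hTei k
  Tt := B.Ttk k

theorem BrOp.prim (k j : J) (h : j ≠ k) :
    IsP (qpow (C.d k)) (uE C k) (uF C k) (uT C k) (T k) (-C.a k j).toNat (uF C j) := by
  have hg := qpow_gen _ (C.d_pos k)
  have ha := C.a_offdiag k j h.symm
  obtain ⟨N, hN⟩ : ∃ N : ℕ, C.a k j = -N := ⟨(-C.a k j).toNat, by omega⟩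
  have hN2 : (-C.a k j).toNat = N := by omega
  have hN3 : (1 - C.a k j).toNat = N + 1 := by omega
  rw [hN2]
  refine ⟨?_, u_ef_ne C k j h.symm, ?_, ?_⟩
  · rw [Wt, u_tf, hN, neg_neg]
  · have := u_serreF C k j h.symm
    rw [hN3, ← Finset.sum_range_reflect] at this
    rw [dp_expand hg]
    rw [← smul_zero ((-1:KK)^(N+1)), ← this, Finset.smul_sum]
    apply Finset.sum_congr rfl
    intro s hs
    have hs' : s ≤ N + 1 := by simpa [Nat.lt_succ_iff] using hs
    rw [uFdp_eq, uFdp_eq, smul_smul, show N + 1 + 1 - 1 - s = N + 1 - s by omega, show N + 1 - (N + 1 - s) = s by omega]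
    congr 1
    push_cast
    rw [show (N:ℤ) - (N+1) + 1 = 0 by ring, mul_zero, zpow_zero, mul_one, ← pow_add]
    rw [show N + 1 + (N + 1 - s) = s + 2 * (N + 1 - s) by omega, pow_add, pow_mul]
    simp
  · rw [B.hTf k j h, hN2, dp_expand hg]
    apply Finset.sum_congr rfl
    intro s _
    rw [uFdp_eq, uFdp_eq, qpow_mul]
    rw [show (N:ℤ) - N + 1 = 1 by ring, mul_one]

theorem BrOp.sl' (k : J) : SL2 (qpow (C.d k))⁻¹ (op (uF C k)) (op (uE C k)) (op (uTinv C k)) (op (uT C k)) (AlgEquiv.op (T k)) where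
  gen := (B.sl k).gen.inv
  ts := by rw [← op_mul, u_ts, op_one]
  st := by rw [← op_mul, u_st, op_one]
  te := by
    have := ((B.sl k).wt_f).s_mul (B.sl k)
    rw [← op_mul, ← op_mul, ← op_smul, this]
    have h0 := (B.sl k).gen.ne
    rw [smul_smul]
    norm_cast
    field_simp
    rw [show qpow (C.d k) ^ (-Int.negSucc 1) = qpow (C.d k) ^ 2 from rfl, div_self (pow_ne_zero _ h0), one_smul]
  tf := by
    have := ((B.sl k).wt_e).s_mul (B.sl k)
    rw [← op_mul, ← op_mul, ← op_smul, this]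
    have h0 := (B.sl k).gen.ne
    rw [smul_smul, zpow_neg]
    norm_cast
    field_simp
    simp
  ef := by
    rw [← op_mul, ← op_mul, u_ef, op_add, op_smul, op_sub, inv_inv]
    rw [← neg_sub (qpow (C.d k)) , inv_neg]
    congr 1
    rw [← neg_sub (op (uTinv C k))]
    exact (smul_neg _ _).trans (neg_smul _ _).symm
  Tf := by
    rw [AlgEquiv.op_apply_apply, unop_op, B.hTei, op_neg, op_mul]
  Te := by
    rw [AlgEquiv.op_apply_apply, unop_op, B.hTfi, op_neg, op_mul]
  Tt := by
    rw [AlgEquiv.op_apply_apply, unop_op, (B.sl k).Ts]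

theorem BrOp.prim' (k j : J) (h : j ≠ k) :
    IsP (qpow (C.d k))⁻¹ (op (uF C k)) (op (uE C k)) (op (uTinv C k)) (AlgEquiv.op (T k)) (-C.a k j).toNat (op (uE C j)) := by
  have hg := (qpow_gen _ (C.d_pos k)).inv
  have ha := C.a_offdiag k j h.symm
  obtain ⟨N, hN⟩ : ∃ N : ℕ, C.a k j = -N := ⟨(-C.a k j).toNat, by omega⟩
  have hN2 : (-C.a k j).toNat = N := by omega
  have hN3 : (1 - C.a k j).toNat = N + 1 := by omega
  rw [hN2]
  refine ⟨?_, ?_, ?_, ?_⟩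
  · have h1 : Wt (qpow (C.d k)) (uT C k) (-N) (uE C j) := by rw [Wt, u_te, hN]
    have h2 := h1.s_mul (B.sl k)
    have h0 := (B.sl k).gen.ne
    rw [Wt, ← op_mul, ← op_mul, ← op_smul, h2, smul_smul, neg_neg, inv_zpow, inv_mul_cancel₀ (zpow_ne_zero _ h0), one_smul]
  · rw [← op_mul, ← op_mul, u_ef_ne C j k h]
  · have := congrArg op (u_serreE C k j h.symm)
    rw [hN3, op_zero] at this
    rw [dp_expand hg, ← this, Finset.op_sum]
    apply Finset.sum_congr rfl
    intro s hs
    rw [op_smul, op_mul, op_mul, uEdp_eq, uEdp_eq, ← mul_assoc]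
    congr 1
    push_cast
    rw [show (N:ℤ) - (N+1) + 1 = 0 by ring, mul_zero, zpow_zero, mul_one]
  · rw [AlgEquiv.op_apply_apply, unop_op, B.hTe k j h, hN2, dp_expand hg, Finset.op_sum]
    apply Finset.sum_congr rfl
    intro s _
    rw [op_smul, op_mul, op_mul, uEdp_eq, uEdp_eq, ← mul_assoc, qpow_neg, qpow_mul]
    rw [show (N:ℤ) - N + 1 = 1 by ring, mul_one, inv_zpow]
end Rel
end


-- part C2
set_option linter.unusedSimpArgs false
noncomputable section
open MulOpposite
section Tor
variable {J : Type} [DecidableEq J] (C : CartanData J)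

/-- `t_j` as a unit -/
def tu (j : J) : (Uq C)ˣ := ⟨uT C j, uTinv C j, u_ts C j, u_st C j⟩

theorem tu_comm (x : (Uq C)ˣ) (hx : x ∈ Set.range (tu C)) (y : (Uq C)ˣ) (hy : y ∈ Set.range (tu C)) :
    x * y = y * x := by
  obtain ⟨i, rfl⟩ := hx
  obtain ⟨j, rfl⟩ := hy
  exact Units.ext (u_tt C i j)

/-- the torus of `U_q(g)` -/
def torus : Subgroup (Uq C)ˣ := Subgroup.closure (Set.range (tu C))

instance torusComm : CommGroup (torus C) :=
  { (torus C).toGroup with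
    mul_comm := (Subgroup.isMulCommutative_closure (k := Set.range (tu C)) (tu_comm C)).is_comm.comm }

/-- `μ ↦ t_μ` -/
def tauHom : (J →₀ ℤ) →+ Additive (torus C) :=
  Finsupp.liftAddHom (fun j => zmultiplesHom (Additive (torus C))
    (Additive.ofMul ⟨tu C j, Subgroup.subset_closure ⟨j, rfl⟩⟩))

/-- `μ ↦ t_μ` with values in units -/
def tauU : (J →₀ ℤ) →+ Additive (Uq C)ˣ :=
  (MonoidHom.toAdditive (torus C).subtype).comp (tauHom C)

theorem tauU_single (j : J) (m : ℤ) :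
    tauU C (Finsupp.single j m) = Additive.ofMul (tu C j ^ m) := by
  have h : tauHom C (Finsupp.single j m) = m • (Additive.ofMul (⟨tu C j, Subgroup.subset_closure ⟨j, rfl⟩⟩ : torus C)) := by
    rw [tauHom, Finsupp.liftAddHom_apply_single, zmultiplesHom_apply]
  have h2 : tauU C (Finsupp.single j m) = (MonoidHom.toAdditive (torus C).subtype) (tauHom C (Finsupp.single j m)) := rfl
  rw [h2, h]
  exact map_zsmul (MonoidHom.toAdditive (torus C).subtype) m _

theorem tpow_eq (j : J) (m : ℤ) : tpow C j m = ((tu C j ^ m : (Uq C)ˣ) : Uq C) := by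
  unfold tpow
  split_ifs with h
  · obtain ⟨n, rfl⟩ := Int.eq_ofNat_of_zero_le h
    simp [tu]
  · obtain ⟨n, rfl⟩ : ∃ n : ℕ, m = -n := ⟨(-m).toNat, by omega⟩
    rw [zpow_neg, ← inv_zpow, neg_neg, zpow_natCast, Units.val_pow_eq_pow_val]
    rfl

/-- `t_μ` -/
def tau (μ : J →₀ ℤ) : Uq C := ((tauU C μ).toMul : (Uq C)ˣ)

theorem tau_single (j : J) : tau C (Finsupp.single j 1) = uT C j := by
  rw [tau, tauU_single]; simp [tu]

variable {C} {T : J → Uq C ≃ₐ[KK] Uq C} (B : BrOp C T)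
variable {W : Type} [Group W] (cs : CoxeterSystem (coxMat C) W)
    (ρ : W →* Module.End ℤ (J →₀ ℤ))

/-- compatibility of the root lattice action -/
def RefAct : Prop := ∀ (k : J) (α : J →₀ ℤ),
      ρ (cs.simple k) α = α - (α.sum fun j' m => C.a k j' * m) • Finsupp.single k (1 : ℤ)

variable {cs} {ρ} (hρ : RefAct cs ρ)

include hρ in
theorem ref_single (k j : J) : ρ (cs.simple k) (Finsupp.single j 1) =
    Finsupp.single j 1 - (C.a k j) • Finsupp.single k (1 : ℤ) := by
  rw [hρ, Finsupp.sum_single_index (by simp), mul_one]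

include B hρ in
theorem T_tau (k : J) (μ : J →₀ ℤ) : T k (tau C μ) = tau C (ρ (cs.simple k) μ) := by
  have h : (MonoidHom.toAdditive (Units.map ((T k : Uq C →ₐ[KK] Uq C) : Uq C →* Uq C))).comp (tauU C) =
      (tauU C).comp (ρ (cs.simple k)).toAddMonoidHom := by
    apply Finsupp.addHom_ext'
    intro j
    apply AddMonoidHom.ext_int
    apply Additive.toMul.injective
    apply Units.ext
    have h1 : (tauU C (Finsupp.single j 1)).toMul = tu C j := by rw [tauU_single]; simp
    simp only [AddMonoidHom.comp_apply, LinearMap.toAddMonoidHom_coe, Finsupp.singleAddHom_apply,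
      MonoidHom.toAdditive_apply_apply]
    rw [ref_single hρ, sub_eq_add_neg, map_add, ← neg_smul, Finsupp.smul_single, smul_eq_mul, mul_one,
      tauU_single C k]
    simp only [toMul_add, toMul_ofMul, Units.val_mul, h1, ← tpow_eq]
    exact B.hTt k j
  have := congrArg (fun f => ((Additive.toMul (f μ) : (Uq C)ˣ) : Uq C)) h
  exact this

/-- product of braid operators over a word -/
def TW (T : J → Uq C ≃ₐ[KK] Uq C) (l : List J) : Uq C ≃ₐ[KK] Uq C := (l.map T).prod

theorem TW_nil (T : J → Uq C ≃ₐ[KK] Uq C) : TW T [] = 1 := rfl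
theorem TW_cons (T : J → Uq C ≃ₐ[KK] Uq C) (k : J) (l : List J) : TW T (k :: l) = T k * TW T l := by
  simp [TW]
theorem TW_append (T : J → Uq C ≃ₐ[KK] Uq C) (l l' : List J) : TW T (l ++ l') = TW T l * TW T l' := by
  simp [TW]

include B hρ in
theorem TW_tau (l : List J) (μ : J →₀ ℤ) : TW T l (tau C μ) = tau C (ρ (cs.wordProd l) μ) := by
  induction l with
  | nil => simp [TW_nil]
  | cons k l ih =>
    rw [TW_cons, AlgEquiv.mul_apply, ih, T_tau B hρ, cs.wordProd_cons, map_mul, Module.End.mul_apply]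

theorem tinv_of_t (X : Uq C ≃ₐ[KK] Uq C) (i i' : J) (h : X (uT C i) = uT C i') : X (uTinv C i) = uTinv C i' := by
  have h1 : X (uTinv C i) * uT C i' = 1 := by rw [← h, ← map_mul, u_st, map_one]
  calc X (uTinv C i) = X (uTinv C i) * (uT C i' * uTinv C i') := by rw [u_ts, mul_one]
    _ = _ := by rw [← mul_assoc, h1, one_mul]

theorem alg_ext (X Y : Uq C ≃ₐ[KK] Uq C) (hf : ∀ l, X (uF C l) = Y (uF C l)) (he : ∀ l, X (uE C l) = Y (uE C l))
    (ht : ∀ l, X (uT C l) = Y (uT C l)) : X = Y := by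
  have key : (X : Uq C →ₐ[KK] Uq C) = (Y : Uq C →ₐ[KK] Uq C) := by
    apply RingQuot.ringQuot_ext'
    apply FreeAlgebra.hom_ext
    funext g
    cases g with
    | e l => exact he l
    | f l => exact hf l
    | t l => exact ht l
    | tinv l =>
      have h1 : Y⁻¹ (X (uT C l)) = uT C l := by rw [ht]; exact Y.symm_apply_apply _
      have := tinv_of_t (Y⁻¹ * X) l l h1
      have h2 := congrArg Y this
      rw [AlgEquiv.mul_apply] at h2
      exact (Y.apply_symm_apply _).symm.trans h2
  ext x
  exact DFunLike.congr_fun key x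

include B in
theorem braid_of (i k i' k' : J) (X Y : Uq C ≃ₐ[KK] Uq C)
    (hXf : X (uF C i) = uF C i') (hXe : X (uE C i) = uE C i') (hXt : X (uT C i) = uT C i')
    (hYf : Y (uF C k) = uF C k') (hYe : Y (uE C k) = uE C k') (hYt : Y (uT C k) = uT C k')
    (h1 : T i' * X = Y * T k) (h2 : T k' * Y = X * T i)
    (hf : ∀ l, l ≠ i → l ≠ k → (X * T i) (uF C l) = (Y * T k) (uF C l))
    (he : ∀ l, l ≠ i → l ≠ k → (X * T i) (uE C l) = (Y * T k) (uE C l))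
    (ht : ∀ l, (X * T i) (uT C l) = (Y * T k) (uT C l)) : X * T i = Y * T k := by
  have main : ∀ (i i' : J) (X Y : Uq C ≃ₐ[KK] Uq C)
      (hXf : X (uF C i) = uF C i') (hXe : X (uE C i) = uE C i') (hXt : X (uT C i) = uT C i'),
      (T i' * X) (uF C i) = (X * T i) (uF C i) ∧ (T i' * X) (uE C i) = (X * T i) (uE C i) := by
    intro i i' X Y hXf hXe hXt
    have hXs := tinv_of_t X i i' hXt
    simp only [AlgEquiv.mul_apply, hXf, hXe, B.hTfi, B.hTei, map_neg, map_mul, hXt, hXs, and_self]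
  have mi := main i i' X Y hXf hXe hXt
  have mk := main k k' Y X hYf hYe hYt
  apply alg_ext
  · intro l
    by_cases hi : l = i
    · rw [hi, ← h1, mi.1]
    by_cases hk : l = k
    · rw [hk, ← h2, mk.1]
    exact hf l hi hk
  · intro l
    by_cases hi : l = i
    · rw [hi, ← h1, mi.2]
    by_cases hk : l = k
    · rw [hk, ← h2, mk.2]
    exact he l hi hk
  · exact ht

/-- what happens on the `i` generators for the alternating word of length `m` ending in `k` -/
structure Half (T : J → Uq C ≃ₐ[KK] Uq C) (ρ : W →* Module.End ℤ (J →₀ ℤ)) (cs : CoxeterSystem (coxMat C) W)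
    (i k i' : J) (m : ℕ) : Prop where
  f : TW T (CoxeterSystem.alternatingWord i k m) (uF C i) = uF C i'
  e : TW T (CoxeterSystem.alternatingWord i k m) (uE C i) = uE C i'
  d : C.d i = C.d i'
  r : ρ (cs.wordProd (CoxeterSystem.alternatingWord i k m)) (Finsupp.single i 1) = Finsupp.single i' 1
  eq : i' = if Even m then k else i
  mid : ∀ r, 0 < r → r < m → ∃ a b : ℤ, 1 ≤ a ∧ 1 ≤ b ∧
    ρ (cs.wordProd (CoxeterSystem.alternatingWord i k r)) (Finsupp.single i 1) =
      a • Finsupp.single i 1 + b • Finsupp.single k 1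

/-- combined rank two information -/
structure Good (T : J → Uq C ≃ₐ[KK] Uq C) (ρ : W →* Module.End ℤ (J →₀ ℤ)) (cs : CoxeterSystem (coxMat C) W)
    (i k i' k' : J) (m : ℕ) : Prop where
  M : coxMat C i k = m + 1
  hi : Half T ρ cs i k i' m
  hk : Half T ρ cs k i k' m
  f : ∀ l, l ≠ i → l ≠ k → TW T (CoxeterSystem.alternatingWord i k (m+1)) (uF C l) = TW T (CoxeterSystem.alternatingWord k i (m+1)) (uF C l)
  e : ∀ l, l ≠ i → l ≠ k → TW T (CoxeterSystem.alternatingWord i k (m+1)) (uE C l) = TW T (CoxeterSystem.alternatingWord k i (m+1)) (uE C l)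

theorem Good.symm {i k i' k' : J} {m : ℕ} (G : Good T ρ cs i k i' k' m) : Good T ρ cs k i k' i' m :=
  ⟨by rw [(coxMat C).symmetric]; exact G.M, G.hk, G.hi, fun l h1 h2 => (G.f l h2 h1).symm, fun l h1 h2 => (G.e l h2 h1).symm⟩

include B hρ in
theorem Good.braid {i k i' k' : J} {m : ℕ} (G : Good T ρ cs i k i' k' m) :
    TW T (CoxeterSystem.alternatingWord i k (m+1)) = TW T (CoxeterSystem.alternatingWord k i (m+1)) := by
  have e1 : TW T (CoxeterSystem.alternatingWord i k (m+1)) = TW T (CoxeterSystem.alternatingWord k i m) * T k := by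
    rw [CoxeterSystem.alternatingWord_succ, List.concat_eq_append, TW_append, TW_cons, TW_nil, mul_one]
  have e2 : TW T (CoxeterSystem.alternatingWord k i (m+1)) = TW T (CoxeterSystem.alternatingWord i k m) * T i := by
    rw [CoxeterSystem.alternatingWord_succ, List.concat_eq_append, TW_append, TW_cons, TW_nil, mul_one]
  have e3 : TW T (CoxeterSystem.alternatingWord i k (m+1)) = T i' * TW T (CoxeterSystem.alternatingWord i k m) := by
    rw [CoxeterSystem.alternatingWord_succ', TW_cons, G.hi.eq]
  have e4 : TW T (CoxeterSystem.alternatingWord k i (m+1)) = T k' * TW T (CoxeterSystem.alternatingWord k i m) := by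
    rw [CoxeterSystem.alternatingWord_succ', TW_cons, G.hk.eq]
  rw [e1, e2]
  symm
  apply braid_of B i k i' k' _ _ G.hi.f G.hi.e _ G.hk.f G.hk.e _ (e3.symm.trans e1) (e4.symm.trans e2)
  · intro l h1 h2
    rw [← e1, ← e2, G.f l h1 h2]
  · intro l h1 h2
    rw [← e1, ← e2, G.e l h1 h2]
  · intro l
    rw [← e1, ← e2, ← tau_single, TW_tau B hρ, TW_tau B hρ]
    have := cs.wordProd_braidWord_eq i k
    rw [CoxeterSystem.braidWord, CoxeterSystem.braidWord, (coxMat C).symmetric k i, G.M] at this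
    rw [this]
  · rw [← tau_single, TW_tau B hρ, G.hi.r, tau_single]
  · rw [← tau_single, TW_tau B hρ, G.hk.r, tau_single]
end Tor
end


-- part C3
set_option linter.unusedSimpArgs false
noncomputable section
open MulOpposite
section Dih
set_option linter.unusedSectionVars false
variable {J : Type} [DecidableEq J] {C : CartanData J}
variable {T : J → Uq C ≃ₐ[KK] Uq C} (B : BrOp C T)
variable {W : Type} [Group W] {cs : CoxeterSystem (coxMat C) W}
    {ρ : W →* Module.End ℤ (J →₀ ℤ)} (hρ : RefAct cs ρ)

theorem coxMat_ne {i k : J} (h : i ≠ k) : coxMat C i k = coxeterEntry (C.a i k * C.a k i) := by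
  show (if i = k then 1 else _) = _
  rw [if_neg h]

/-- the lattice element `a α_i + b α_k` -/
def comb (i k : J) (a b : ℤ) : J →₀ ℤ := a • Finsupp.single i 1 + b • Finsupp.single k 1

include hρ in
theorem ref_comb_r (i k : J) (a b : ℤ) : ρ (cs.simple k) (comb i k a b) = comb i k a (-b - C.a k i * a) := by
  simp only [comb, map_add, map_smul, ref_single hρ, C.a_diag]
  module
include hρ in
theorem ref_comb_l (i k : J) (a b : ℤ) : ρ (cs.simple i) (comb i k a b) = comb i k (-a - C.a i k * b) b := by
  simp only [comb, map_add, map_smul, ref_single hρ, C.a_diag]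
  module

theorem comb_l (i k : J) : Finsupp.single i (1:ℤ) = comb i k 1 0 := by simp [comb]
theorem comb_r (i k : J) : Finsupp.single k (1:ℤ) = comb i k 0 1 := by simp [comb]

theorem qpow_nat_mul (d : ℤ) (n : ℕ) : qpow (n * d) = qpow d ^ n := by
  rw [mul_comm, qpow_mul, zpow_natCast]

include B hρ in
theorem good_zero {i j : J} (hne : i ≠ j) (hij : C.a i j = 0) (hji : C.a j i = 0) : Good T ρ cs i j i j 1 := by
  have pi := B.prim i j hne.symm
  have pj := B.prim j i hne
  have pi' := B.prim' i j hne.symm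
  have pj' := B.prim' j i hne
  rw [hij] at pi pi'
  rw [hji] at pj pj'
  obtain ⟨r1, r2, r3⟩ := rank2_zero pi pj (B.sl i).gen
  obtain ⟨q1, q2, q3⟩ := rank2_zero pi' pj' (B.sl' i).gen
  simp only [AlgEquiv.op_apply_apply, unop_op, op_inj] at q1 q2 q3
  refine ⟨?_, ⟨?_, ?_, rfl, ?_, ?_, ?_⟩, ⟨?_, ?_, rfl, ?_, ?_, ?_⟩, ?_, ?_⟩
  · rw [coxMat_ne hne, hij, hji]; rfl
  · exact r1
  · exact q1
  · rw [comb_l i j]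
    simp [CoxeterSystem.alternatingWord, cs.wordProd_cons, ref_comb_r hρ, ref_comb_l hρ, hij, hji]
  · simp [show ¬ Even 1 by decide, show ¬ Even 3 by decide, show ¬ Even 5 by decide]
  · intro r h1 h2
    change ∃ a b : ℤ, 1 ≤ a ∧ 1 ≤ b ∧ _ = comb i j a b
    rw [comb_l i j]
    omega
  · exact r2
  · exact q2
  · rw [comb_r i j]
    simp [CoxeterSystem.alternatingWord, cs.wordProd_cons, ref_comb_r hρ, ref_comb_l hρ, hij, hji]
  · simp [show ¬ Even 1 by decide, show ¬ Even 3 by decide, show ¬ Even 5 by decide]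
  · intro r h1 h2
    change ∃ a b : ℤ, 1 ≤ a ∧ 1 ≤ b ∧ _ = comb j i a b
    rw [comb_l j i]
    omega
  · intro l h1 h2
    exact r3 _ _ _ (B.prim i l h1) (B.prim j l h2)
  · intro l h1 h2
    exact (q3 (op (uE C l)) _ _ (B.prim' i l h1) (B.prim' j l h2))

include B hρ in
theorem good_one {i j : J} (hne : i ≠ j) (hij : C.a i j = -1) (hji : C.a j i = -1) : Good T ρ cs i j j i 2 := by
  have pi := B.prim i j hne.symm
  have pj := B.prim j i hne
  have pi' := B.prim' i j hne.symm
  have pj' := B.prim' j i hne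
  have hd : C.d j = C.d i := by have := C.symm i j; rw [hij, hji] at this; linarith
  rw [hij] at pi pi'
  rw [hji] at pj pj'
  have hv : qpow (C.d j) = qpow (C.d i) := by rw [hd]
  obtain ⟨r1, r2, r3⟩ := rank2_one (B.sl i) (B.sl j) hv pi pj
  obtain ⟨q1, q2, q3⟩ := rank2_one (B.sl' i) (B.sl' j) (by rw [hv]) pi' pj'
  simp only [AlgEquiv.op_apply_apply, unop_op, op_inj] at q1 q2 q3
  refine ⟨?_, ⟨?_, ?_, ?_, ?_, ?_, ?_⟩, ⟨?_, ?_, ?_, ?_, ?_, ?_⟩, ?_, ?_⟩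
  · rw [coxMat_ne hne, hij, hji]; rfl
  · exact r1
  · exact q1
  · exact hd.symm
  · rw [comb_l i j, comb_r i j]
    simp [CoxeterSystem.alternatingWord, cs.wordProd_cons, ref_comb_r hρ, ref_comb_l hρ, hij, hji]
  · simp [show ¬ Even 1 by decide, show ¬ Even 3 by decide, show ¬ Even 5 by decide]
  · intro r h1 h2
    change ∃ a b : ℤ, 1 ≤ a ∧ 1 ≤ b ∧ _ = comb i j a b
    rw [comb_l i j]
    interval_cases r
    · exact ⟨1, 1, by norm_num, by norm_num, by simp [CoxeterSystem.alternatingWord, cs.wordProd_cons, ref_comb_r hρ, ref_comb_l hρ, hij, hji]⟩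
  · exact r2
  · exact q2
  · exact hd
  · rw [comb_l i j, comb_r i j]
    simp [CoxeterSystem.alternatingWord, cs.wordProd_cons, ref_comb_r hρ, ref_comb_l hρ, hij, hji]
  · simp [show ¬ Even 1 by decide, show ¬ Even 3 by decide, show ¬ Even 5 by decide]
  · intro r h1 h2
    change ∃ a b : ℤ, 1 ≤ a ∧ 1 ≤ b ∧ _ = comb j i a b
    rw [comb_l j i]
    interval_cases r
    · exact ⟨1, 1, by norm_num, by norm_num, by simp [CoxeterSystem.alternatingWord, cs.wordProd_cons, ref_comb_r hρ, ref_comb_l hρ, hij, hji]⟩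
  · intro l h1 h2
    exact r3 _ _ _ (B.prim i l h1) (B.prim j l h2)
  · intro l h1 h2
    exact (q3 (op (uE C l)) _ _ (B.prim' i l h1) (B.prim' j l h2))

include B hρ in
theorem good_two {i j : J} (hne : i ≠ j) (hij : C.a i j = -2) (hji : C.a j i = -1) : Good T ρ cs i j i j 3 := by
  have pi := B.prim i j hne.symm
  have pj := B.prim j i hne
  have pi' := B.prim' i j hne.symm
  have pj' := B.prim' j i hne
  have hd : C.d j = (2:ℕ) * C.d i := by have := C.symm i j; rw [hij, hji] at this; push_cast; linarith
  rw [hij] at pi pi'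
  rw [hji] at pj pj'
  have hv : qpow (C.d j) = qpow (C.d i) ^ 2 := by rw [hd, qpow_nat_mul]
  obtain ⟨r1, r2, r3⟩ := rank2_two (B.sl i) (B.sl j) hv pi pj
  obtain ⟨q1, q2, q3⟩ := rank2_two (B.sl' i) (B.sl' j) (by rw [hv, inv_pow]) pi' pj'
  simp only [AlgEquiv.op_apply_apply, unop_op, op_inj] at q1 q2 q3
  refine ⟨?_, ⟨?_, ?_, rfl, ?_, ?_, ?_⟩, ⟨?_, ?_, rfl, ?_, ?_, ?_⟩, ?_, ?_⟩
  · rw [coxMat_ne hne, hij, hji]; rfl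
  · exact r1
  · exact q1
  · rw [comb_l i j]
    simp [CoxeterSystem.alternatingWord, cs.wordProd_cons, ref_comb_r hρ, ref_comb_l hρ, hij, hji]
  · simp [show ¬ Even 1 by decide, show ¬ Even 3 by decide, show ¬ Even 5 by decide]
  · intro r h1 h2
    change ∃ a b : ℤ, 1 ≤ a ∧ 1 ≤ b ∧ _ = comb i j a b
    rw [comb_l i j]
    interval_cases r
    · exact ⟨1, 1, by norm_num, by norm_num, by simp [CoxeterSystem.alternatingWord, cs.wordProd_cons, ref_comb_r hρ, ref_comb_l hρ, hij, hji]⟩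
    · exact ⟨1, 1, by norm_num, by norm_num, by simp [CoxeterSystem.alternatingWord, cs.wordProd_cons, ref_comb_r hρ, ref_comb_l hρ, hij, hji]⟩
  · exact r2
  · exact q2
  · rw [comb_r i j]
    simp [CoxeterSystem.alternatingWord, cs.wordProd_cons, ref_comb_r hρ, ref_comb_l hρ, hij, hji]
  · simp [show ¬ Even 1 by decide, show ¬ Even 3 by decide, show ¬ Even 5 by decide]
  · intro r h1 h2
    change ∃ a b : ℤ, 1 ≤ a ∧ 1 ≤ b ∧ _ = comb j i a b
    rw [comb_l j i]
    interval_cases r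
    · exact ⟨1, 2, by norm_num, by norm_num, by simp [CoxeterSystem.alternatingWord, cs.wordProd_cons, ref_comb_r hρ, ref_comb_l hρ, hij, hji]⟩
    · exact ⟨1, 2, by norm_num, by norm_num, by simp [CoxeterSystem.alternatingWord, cs.wordProd_cons, ref_comb_r hρ, ref_comb_l hρ, hij, hji]⟩
  · intro l h1 h2
    exact (r3 _ _ _ (B.prim i l h1) (B.prim j l h2)).symm
  · intro l h1 h2
    exact ((q3 (op (uE C l)) _ _ (B.prim' i l h1) (B.prim' j l h2))).symm

include B hρ in
theorem good_three {i j : J} (hne : i ≠ j) (hij : C.a i j = -3) (hji : C.a j i = -1) : Good T ρ cs i j i j 5 := by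
  have pi := B.prim i j hne.symm
  have pj := B.prim j i hne
  have pi' := B.prim' i j hne.symm
  have pj' := B.prim' j i hne
  have hd : C.d j = (3:ℕ) * C.d i := by have := C.symm i j; rw [hij, hji] at this; push_cast; linarith
  rw [hij] at pi pi'
  rw [hji] at pj pj'
  have hv : qpow (C.d j) = qpow (C.d i) ^ 3 := by rw [hd, qpow_nat_mul]
  obtain ⟨r1, r2, r3⟩ := rank2_three (B.sl i) (B.sl j) hv pi pj
  obtain ⟨q1, q2, q3⟩ := rank2_three (B.sl' i) (B.sl' j) (by rw [hv, inv_pow]) pi' pj'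
  simp only [AlgEquiv.op_apply_apply, unop_op, op_inj] at q1 q2 q3
  refine ⟨?_, ⟨?_, ?_, rfl, ?_, ?_, ?_⟩, ⟨?_, ?_, rfl, ?_, ?_, ?_⟩, ?_, ?_⟩
  · rw [coxMat_ne hne, hij, hji]; rfl
  · exact r1
  · exact q1
  · rw [comb_l i j]
    simp [CoxeterSystem.alternatingWord, cs.wordProd_cons, ref_comb_r hρ, ref_comb_l hρ, hij, hji]
  · simp [show ¬ Even 1 by decide, show ¬ Even 3 by decide, show ¬ Even 5 by decide]
  · intro r h1 h2
    change ∃ a b : ℤ, 1 ≤ a ∧ 1 ≤ b ∧ _ = comb i j a b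
    rw [comb_l i j]
    interval_cases r
    · exact ⟨1, 1, by norm_num, by norm_num, by simp [CoxeterSystem.alternatingWord, cs.wordProd_cons, ref_comb_r hρ, ref_comb_l hρ, hij, hji]⟩
    · exact ⟨2, 1, by norm_num, by norm_num, by simp [CoxeterSystem.alternatingWord, cs.wordProd_cons, ref_comb_r hρ, ref_comb_l hρ, hij, hji]⟩
    · exact ⟨2, 1, by norm_num, by norm_num, by simp [CoxeterSystem.alternatingWord, cs.wordProd_cons, ref_comb_r hρ, ref_comb_l hρ, hij, hji]⟩
    · exact ⟨1, 1, by norm_num, by norm_num, by simp [CoxeterSystem.alternatingWord, cs.wordProd_cons, ref_comb_r hρ, ref_comb_l hρ, hij, hji]⟩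
  · exact r2
  · exact q2
  · rw [comb_r i j]
    simp [CoxeterSystem.alternatingWord, cs.wordProd_cons, ref_comb_r hρ, ref_comb_l hρ, hij, hji]
  · simp [show ¬ Even 1 by decide, show ¬ Even 3 by decide, show ¬ Even 5 by decide]
  · intro r h1 h2
    change ∃ a b : ℤ, 1 ≤ a ∧ 1 ≤ b ∧ _ = comb j i a b
    rw [comb_l j i]
    interval_cases r
    · exact ⟨1, 3, by norm_num, by norm_num, by simp [CoxeterSystem.alternatingWord, cs.wordProd_cons, ref_comb_r hρ, ref_comb_l hρ, hij, hji]⟩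
    · exact ⟨2, 3, by norm_num, by norm_num, by simp [CoxeterSystem.alternatingWord, cs.wordProd_cons, ref_comb_r hρ, ref_comb_l hρ, hij, hji]⟩
    · exact ⟨2, 3, by norm_num, by norm_num, by simp [CoxeterSystem.alternatingWord, cs.wordProd_cons, ref_comb_r hρ, ref_comb_l hρ, hij, hji]⟩
    · exact ⟨1, 3, by norm_num, by norm_num, by simp [CoxeterSystem.alternatingWord, cs.wordProd_cons, ref_comb_r hρ, ref_comb_l hρ, hij, hji]⟩
  · intro l h1 h2
    exact (r3 _ _ _ (B.prim i l h1) (B.prim j l h2)).symm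
  · intro l h1 h2
    exact ((q3 (op (uE C l)) _ _ (B.prim' i l h1) (B.prim' j l h2))).symm

include B hρ in
theorem exists_good {i k : J} (hne : i ≠ k) (hM : coxMat C i k ≠ 0) :
    ∃ i' k' m, Good T ρ cs i k i' k' m := by
  rw [coxMat_ne hne] at hM
  have h1 := C.a_offdiag i k hne
  have h2 := C.a_offdiag k i hne.symm
  have h3 := C.symm i k
  have d1 := C.d_pos i
  have d2 := C.d_pos k
  have hp : C.a i k * C.a k i = 0 ∨ C.a i k * C.a k i = 1 ∨ C.a i k * C.a k i = 2 ∨ C.a i k * C.a k i = 3 := by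
    by_contra hcon
    push Not at hcon
    apply hM
    simp [coxeterEntry, hcon]
  by_cases hz : C.a i k = 0
  · have : C.a k i = 0 := by
      rw [hz, mul_zero] at h3
      rcases mul_eq_zero.mp h3.symm with h | h
      · omega
      · exact h
    exact ⟨_, _, _, good_zero B hρ hne hz this⟩
  by_cases hz' : C.a k i = 0
  · exfalso
    rw [hz', mul_zero] at h3
    rcases mul_eq_zero.mp h3 with h | h
    · omega
    · exact hz h
  have hp3 : C.a i k * C.a k i ≤ 3 := by omega
  have c1 : C.a i k ≤ -1 := by omega
  have c2 : C.a k i ≤ -1 := by omega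
  have b1 : -3 ≤ C.a i k := by nlinarith
  have b2 : -3 ≤ C.a k i := by nlinarith
  obtain h | h | h : C.a i k = -1 ∨ C.a i k = -2 ∨ C.a i k = -3 := by omega
  · obtain h' | h' | h' : C.a k i = -1 ∨ C.a k i = -2 ∨ C.a k i = -3 := by omega
    · exact ⟨_, _, _, good_one B hρ hne h h'⟩
    · exact ⟨_, _, _, (good_two B hρ hne.symm h' h).symm⟩
    · exact ⟨_, _, _, (good_three B hρ hne.symm h' h).symm⟩
  · rw [h] at hp
    exact ⟨_, _, _, good_two B hρ hne h (by omega)⟩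
  · rw [h] at hp
    exact ⟨_, _, _, good_three B hρ hne h (by omega)⟩

theorem alt_succ (i k : J) (r : ℕ) (α : J →₀ ℤ) :
    ρ (cs.wordProd (CoxeterSystem.alternatingWord i k (r+1))) α =
      ρ (cs.simple (if Even r then k else i)) (ρ (cs.wordProd (CoxeterSystem.alternatingWord i k r)) α) := by
  rw [CoxeterSystem.alternatingWord_succ', cs.wordProd_cons, map_mul, Module.End.mul_apply]

include hρ in
theorem dih_inf {i k : J} (hne : i ≠ k) (hM : coxMat C i k = 0) (r : ℕ) :
    ∃ a b : ℤ, ρ (cs.wordProd (CoxeterSystem.alternatingWord i k r)) (Finsupp.single i 1) = comb i k a b ∧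
      1 ≤ a ∧ 0 ≤ b ∧ (r ≠ 0 → 1 ≤ b) ∧
      (Even r → 2 * b ≤ -C.a k i * a) ∧ (¬ Even r → 2 * a ≤ -C.a i k * b) := by
  rw [coxMat_ne hne] at hM
  obtain ⟨x, hx⟩ : ∃ x, C.a i k = -x := ⟨-C.a i k, by ring⟩
  obtain ⟨y, hy⟩ : ∃ y, C.a k i = -y := ⟨-C.a k i, by ring⟩
  have h1 := C.a_offdiag i k hne
  have h2 := C.a_offdiag k i hne.symm
  have hx0 : 0 ≤ x := by omega
  have hy0 : 0 ≤ y := by omega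
  have hp : 4 ≤ x * y := by
    by_contra hcon
    have : 0 ≤ x * y := mul_nonneg hx0 hy0
    apply absurd hM
    have h4 : x * y = 0 ∨ x * y = 1 ∨ x * y = 2 ∨ x * y = 3 := by omega
    rw [hx, hy, neg_mul_neg]
    rcases h4 with h | h | h | h <;> rw [h] <;> decide
  have hx1 : 1 ≤ x := by
    rcases hx0.lt_or_eq with h | h
    · omega
    · rw [← h] at hp; omega
  have hy1 : 1 ≤ y := by
    rcases hy0.lt_or_eq with h | h
    · omega
    · rw [← h] at hp; omega
  simp only [hx, hy, neg_neg]
  induction r with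
  | zero => exact ⟨1, 0, by simp [CoxeterSystem.alternatingWord, comb], le_refl _, le_refl _, by simp, by simpa using hy0, by simp⟩
  | succ r ih =>
    obtain ⟨a, b, hab, ha, hb, hb1, he, ho⟩ := ih
    rw [alt_succ, hab]
    by_cases hr : Even r
    · have h3 := he hr
      rw [if_pos hr, ref_comb_r hρ, hy]
      refine ⟨_, _, rfl, ha, ?_, fun _ => ?_, fun h => ?_, fun _ => ?_⟩
      · nlinarith
      · nlinarith
      · exact absurd hr (Nat.even_add_one.mp h)
      · nlinarith [mul_le_mul_of_nonneg_left h3 hx0, mul_le_mul_of_nonneg_right hp (show 0 ≤ a by omega)]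
    · have h3 := ho hr
      have hb2 := hb1 (by rintro rfl; exact hr (by decide))
      rw [if_neg hr, ref_comb_l hρ, hx]
      refine ⟨_, _, rfl, ?_, hb, fun _ => hb2, fun h => ?_, fun h => ?_⟩
      · nlinarith
      · nlinarith [mul_le_mul_of_nonneg_left h3 hy0, mul_le_mul_of_nonneg_right hp (show 0 ≤ b by omega)]
      · exact absurd (Nat.even_add_one.mpr hr) h

include B hρ in
theorem dih {i k : J} (hne : i ≠ k) (r : ℕ) (hr : coxMat C i k = 0 ∨ r < coxMat C i k) :
    r = 0 ∨ (∃ a b : ℤ, 1 ≤ a ∧ 1 ≤ b ∧ ρ (cs.wordProd (CoxeterSystem.alternatingWord i k r)) (Finsupp.single i 1) = comb i k a b)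
     ∨ ∃ i', Half T ρ cs i k i' r := by
  rcases Nat.eq_zero_or_pos r with h0 | h0
  · exact Or.inl h0
  right
  by_cases hM : coxMat C i k = 0
  · obtain ⟨a, b, h1, h2, _, h3, _⟩ := dih_inf hρ hne hM r
    exact Or.inl ⟨a, b, h2, h3 (by omega), h1⟩
  obtain ⟨i', k', m, G⟩ := exists_good B hρ hne hM
  have hr' := hr.resolve_left hM
  rw [G.M] at hr'
  by_cases hrm : r = m
  · exact Or.inr ⟨i', hrm ▸ G.hi⟩
  left
  have hrm' : r < m := by omega
  exact G.hi.mid r h0 hrm'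
end Dih
end


-- part D1
set_option linter.unusedSimpArgs false
noncomputable section
section Cox
open CoxeterSystem
variable {J : Type} {M : CoxeterMatrix J} {W : Type} [Group W] (cs : CoxeterSystem M W)

theorem coset_aux (n : ℕ) : ∀ (w : W) (i k : J), cs.length w = n → cs.IsRightDescent w k →
    ∃ (v : W) (r : ℕ), 1 ≤ r ∧ w = v * cs.wordProd (alternatingWord i k r) ∧ cs.length w = cs.length v + r ∧
      ¬ cs.IsRightDescent v i ∧ ¬ cs.IsRightDescent v k := by
  induction n with
  | zero =>
    intro w i k hw hk
    rw [IsRightDescent] at hk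
    omega
  | succ n ih =>
    intro w i k hw hk
    have hk2 := (cs.isRightDescent_iff_not_isRightDescent_mul).mp hk
    have hk3 := cs.isRightDescent_iff.mp hk
    have hww : w = w * cs.simple k * cs.simple k := (cs.simple_mul_simple_cancel_right k).symm
    by_cases hi : cs.IsRightDescent (w * cs.simple k) i
    · obtain ⟨v, r, h1, h2, h3, h4, h5⟩ := ih (w * cs.simple k) k i (by omega) hi
      refine ⟨v, r + 1, by omega, ?_, by omega, h5, h4⟩
      rw [alternatingWord_succ, cs.wordProd_concat, ← mul_assoc, ← h2]
      exact hww
    · refine ⟨w * cs.simple k, 1, le_refl _, ?_, by omega, hi, hk2⟩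
      simp [alternatingWord]

theorem coset (w : W) (i k : J) (hk : cs.IsRightDescent w k) :
    ∃ (v : W) (r : ℕ), 1 ≤ r ∧ w = v * cs.wordProd (alternatingWord i k r) ∧ cs.length w = cs.length v + r ∧
      ¬ cs.IsRightDescent v i ∧ ¬ cs.IsRightDescent v k ∧ (M i k = 0 ∨ r ≤ M i k) := by
  obtain ⟨v, r, h1, h2, h3, h4, h5⟩ := coset_aux cs _ w i k rfl hk
  refine ⟨v, r, h1, h2, h3, h4, h5, ?_⟩
  by_contra hcon
  push Not at hcon
  apply cs.not_isReduced_alternatingWord i k hcon.1 hcon.2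
  have a1 := cs.length_mul_le v (cs.wordProd (alternatingWord i k r))
  have a2 := cs.length_wordProd_le (alternatingWord i k r)
  rw [length_alternatingWord] at a2
  rw [← h2] at a1
  rw [CoxeterSystem.IsReduced, length_alternatingWord]
  omega

theorem coset_lt (w : W) (i k : J) (hk : cs.IsRightDescent w k) (hi : ¬ cs.IsRightDescent w i) :
    ∃ (v : W) (r : ℕ), 1 ≤ r ∧ w = v * cs.wordProd (alternatingWord i k r) ∧ cs.length w = cs.length v + r ∧
      ¬ cs.IsRightDescent v i ∧ ¬ cs.IsRightDescent v k ∧ (M i k = 0 ∨ r < M i k) := by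
  obtain ⟨v, r, h1, h2, h3, h4, h5, h6⟩ := coset cs w i k hk
  refine ⟨v, r, h1, h2, h3, h4, h5, ?_⟩
  by_contra hcon
  push Not at hcon
  have hr : r = M i k := by omega
  apply hi
  have e1 : cs.wordProd (alternatingWord i k r) = cs.wordProd (alternatingWord k i r) := by
    rw [cs.prod_alternatingWord_eq_prod_alternatingWord_sub i k r (by omega)]
    congr 2; omega
  obtain ⟨s, rfl⟩ : ∃ s, r = s + 1 := ⟨r - 1, by omega⟩
  have e2 : w * cs.simple i = v * cs.wordProd (alternatingWord i k s) := by
    rw [h2, e1, alternatingWord_succ, cs.wordProd_concat, ← mul_assoc, cs.simple_mul_simple_cancel_right]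
  rw [IsRightDescent, e2]
  have a1 := cs.length_mul_le v (cs.wordProd (alternatingWord i k s))
  have a2 := cs.length_wordProd_le (alternatingWord i k s)
  rw [length_alternatingWord] at a2
  omega
end Cox

section Fin
open CoxeterSystem
variable {J : Type} [DecidableEq J] {C : CartanData J}
variable {T : J → Uq C ≃ₐ[KK] Uq C} (B : BrOp C T)
variable {W : Type} [Group W] {cs : CoxeterSystem (coxMat C) W}
    {ρ : W →* Module.End ℤ (J →₀ ℤ)} (hρ : RefAct cs ρ)

theorem ne_of_desc {w : W} {i k : J} (hk : cs.IsRightDescent w k) (hi : ¬ cs.IsRightDescent w i) : i ≠ k := by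
  rintro rfl; exact hi hk

include B hρ in
theorem pos_aux (n : ℕ) : ∀ (w : W) (i : J), cs.length w = n → ¬ cs.IsRightDescent w i →
    0 ≤ ρ w (Finsupp.single i 1) := by
  induction n using Nat.strong_induction_on with
  | _ n ih =>
  intro w i hw hi
  by_cases h1 : w = 1
  · rw [h1, map_one, Module.End.one_apply]
    exact Finsupp.single_nonneg.mpr zero_le_one
  obtain ⟨k, hk⟩ := cs.exists_rightDescent_of_ne_one h1
  have hne := ne_of_desc hk hi
  obtain ⟨v, r, hr, h2, h3, h4, h5, h6⟩ := coset_lt cs w i k hk hi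
  rw [h2, map_mul, Module.End.mul_apply]
  rcases dih B hρ hne r h6 with h | ⟨a, b, ha, hb, h⟩ | ⟨i', H⟩
  · omega
  · rw [h, comb, map_add, map_smul, map_smul]
    exact add_nonneg (smul_nonneg (by omega) (ih _ (by omega) v i rfl h4)) (smul_nonneg (by omega) (ih _ (by omega) v k rfl h5))
  · rw [H.r]
    apply ih _ (by omega) v i' rfl
    rw [H.eq]
    split_ifs
    · exact h5
    · exact h4

include B hρ in
theorem pos (w : W) (i : J) (hi : ¬ cs.IsRightDescent w i) : 0 ≤ ρ w (Finsupp.single i 1) :=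
  pos_aux B hρ _ w i rfl hi

theorem rho_ne (w : W) (i : J) : ρ w (Finsupp.single i 1) ≠ 0 := by
  intro h
  have h2 := congrArg (ρ w⁻¹) h
  rw [← Module.End.mul_apply, ← map_mul, inv_mul_cancel, map_one, Module.End.one_apply, map_zero] at h2
  simp at h2

include B hρ in
theorem not_pos (w : W) (i : J) (hi : cs.IsRightDescent w i) (h : 0 ≤ ρ w (Finsupp.single i 1)) : False := by
  have h1 := pos B hρ _ i ((cs.isRightDescent_iff_not_isRightDescent_mul).mp hi)
  rw [map_mul, Module.End.mul_apply, ref_single hρ, C.a_diag] at h1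
  rw [show Finsupp.single i (1:ℤ) - (2:ℤ) • Finsupp.single i 1 = - Finsupp.single i 1 by module, map_neg] at h1
  exact rho_ne w i (le_antisymm (neg_nonneg.mp h1) h)

include B hρ in
theorem coset_top (w : W) (i k : J) (hne : i ≠ k) (hk : cs.IsRightDescent w k) (hi : cs.IsRightDescent w i) :
    coxMat C i k ≠ 0 ∧ ∃ (v : W), w = v * cs.wordProd (alternatingWord i k (coxMat C i k)) ∧
      cs.length w = cs.length v + coxMat C i k := by
  obtain ⟨v, r, hr, h2, h3, h4, h5, h6⟩ := coset cs w i k hk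
  by_cases h7 : coxMat C i k = 0 ∨ r < coxMat C i k
  · exfalso
    apply not_pos B hρ w i hi
    rw [h2, map_mul, Module.End.mul_apply]
    rcases dih B hρ hne r h7 with h | ⟨a, b, ha, hb, h⟩ | ⟨i', H⟩
    · omega
    · rw [h, comb, map_add, map_smul, map_smul]
      exact add_nonneg (smul_nonneg (by omega) (pos B hρ v i h4)) (smul_nonneg (by omega) (pos B hρ v k h5))
    · rw [H.r]
      apply pos B hρ v i'
      rw [H.eq]
      split_ifs
      · exact h5
      · exact h4
  · have h8 : r = coxMat C i k := by omega
    rw [← h8]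
    exact ⟨by omega, v, h2, h3⟩

theorem red_concat {l : List J} {i : J} (h : cs.IsReduced (l ++ [i])) :
    cs.IsReduced l ∧ cs.IsRightDescent (cs.wordProd (l ++ [i])) i := by
  have h1 := h.take l.length
  rw [List.take_left] at h1
  refine ⟨h1, ?_⟩
  rw [IsRightDescent, h.eq, cs.wordProd_append]
  simp [h1.eq]

include B hρ in
theorem matsumoto (n : ℕ) : ∀ l l' : List J, l.length = n → cs.IsReduced l → cs.IsReduced l' →
    cs.wordProd l = cs.wordProd l' → TW T l = TW T l' := by
  induction n with
  | zero =>
    intro l l' hn hl hl' he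
    have h1 := hl.eq
    have h2 := hl'.eq
    rw [he, h2] at h1
    rw [List.length_eq_zero_iff.mp hn, List.length_eq_zero_iff.mp (h1.trans hn)]
  | succ n ih =>
    intro l l' hn hl hl' he
    have hlen : l'.length = n + 1 := by rw [← hl'.eq, ← he, hl.eq, hn]
    obtain ⟨l1, i, rfl⟩ : ∃ l1 i, l = l1 ++ [i] :=
      (List.eq_nil_or_concat l).resolve_left (by rintro rfl; simp at hn) |>.imp fun _ => fun ⟨i, h⟩ => ⟨i, by simpa using h⟩
    obtain ⟨l2, k, rfl⟩ : ∃ l1 i, l' = l1 ++ [i] :=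
      (List.eq_nil_or_concat l').resolve_left (by rintro rfl; simp at hlen) |>.imp fun _ => fun ⟨i, h⟩ => ⟨i, by simpa using h⟩
    obtain ⟨r1, d1⟩ := red_concat hl
    obtain ⟨r2, d2⟩ := red_concat hl'
    simp only [List.length_append, List.length_singleton] at hn hlen
    by_cases hik : i = k
    · subst hik
      rw [TW_append, TW_append, ih l1 l2 (by omega) r1 r2]
      simpa [cs.wordProd_append] using he
    · rw [← he] at d2
      obtain ⟨h0, v, hv, hvl⟩ := coset_top B hρ _ i k hik d2 d1
      obtain ⟨i', k', m, G⟩ := exists_good B hρ hik h0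
      have hbr := G.braid B hρ
      obtain ⟨l0, hl0, rfl⟩ := cs.exists_isReduced v
      have hbw := cs.wordProd_braidWord_eq i k
      rw [braidWord, braidWord, (coxMat C).symmetric k i, G.M] at hbw
      rw [G.M, hl.eq, hl0.eq] at hvl
      rw [G.M] at hv
      simp only [List.length_append, List.length_singleton] at hvl
      have key : ∀ (a b : J) (l3 : List J), cs.IsReduced l3 → l3.length = n →
          cs.wordProd (l3 ++ [b]) = cs.wordProd l0 * cs.wordProd (alternatingWord a b (m+1)) →
          TW T (l3 ++ [b]) = TW T l0 * TW T (alternatingWord a b (m+1)) := by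
        intro a b l3 h3 hn3 he3
        rw [alternatingWord_succ, cs.wordProd_concat, cs.wordProd_append, cs.wordProd_singleton, ← mul_assoc, mul_left_inj,
          ← cs.wordProd_append] at he3
        have hr : cs.IsReduced (l0 ++ alternatingWord b a m) := by
          rw [CoxeterSystem.IsReduced, ← he3, h3.eq, List.length_append, length_alternatingWord]
          omega
        rw [alternatingWord_succ, List.concat_eq_append, TW_append, TW_append, ih l3 _ hn3 h3 hr he3, TW_append, mul_assoc]
      rw [key k i l1 r1 (by omega) (by rw [hv, hbw]), key i k l2 r2 (by omega) (by rw [← he, hv]), hbr]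

include B hρ in
theorem final_aux (n : ℕ) : ∀ (w : W) (i j : J), cs.length w = n → ¬ cs.IsRightDescent w i →
    ρ w (Finsupp.single i 1) = Finsupp.single j 1 →
    C.d i = C.d j ∧ ∃ l, cs.IsReduced l ∧ cs.wordProd l = w ∧ TW T l (uF C i) = uF C j := by
  induction n using Nat.strong_induction_on with
  | _ n ih =>
  intro w i j hw hi hij
  by_cases h1 : w = 1
  · rw [h1, map_one, Module.End.one_apply] at hij
    have : i = j := Finsupp.single_left_injective one_ne_zero hij
    subst this
    exact ⟨rfl, [], by simp [CoxeterSystem.IsReduced], by simp [h1], by simp [TW_nil]⟩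
  obtain ⟨k, hk⟩ := cs.exists_rightDescent_of_ne_one h1
  have hne := ne_of_desc hk hi
  obtain ⟨v, r, hr, h2, h3, h4, h5, h6⟩ := coset_lt cs w i k hk hi
  rw [h2, map_mul, Module.End.mul_apply] at hij
  rcases dih B hρ hne r h6 with h | ⟨a, b, ha, hb, h⟩ | ⟨i', H⟩
  · omega
  · exfalso
    rw [h, comb, map_add, map_smul, map_smul] at hij
    have p1 := pos B hρ v i h4
    have p2 := pos B hρ v k h5
    have n1 := rho_ne (ρ := ρ) v i
    have n2 := rho_ne (ρ := ρ) v k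
    generalize ρ v (Finsupp.single i 1) = x at *
    generalize ρ v (Finsupp.single k 1) = y at *
    have hx : ∀ t, t ≠ j → x t = 0 ∧ y t = 0 := by
      intro t ht
      have := DFunLike.congr_fun hij t
      simp only [Finsupp.add_apply, Finsupp.smul_apply, smul_eq_mul, Finsupp.single_apply, if_neg ht.symm] at this
      have q1 : 0 ≤ x t := p1 t
      have q2 : 0 ≤ y t := p2 t
      constructor <;> nlinarith
    have hxj : x j ≠ 0 := fun h0 => n1 (Finsupp.ext fun t => by
      by_cases ht : t = j
      · rw [ht]; exact h0
      · exact (hx t ht).1)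
    have hyj : y j ≠ 0 := fun h0 => n2 (Finsupp.ext fun t => by
      by_cases ht : t = j
      · rw [ht]; exact h0
      · exact (hx t ht).2)
    have := DFunLike.congr_fun hij j
    simp only [Finsupp.add_apply, Finsupp.smul_apply, smul_eq_mul, Finsupp.single_apply, if_true] at this
    have q1 : 0 ≤ x j := p1 j
    have q2 : 0 ≤ y j := p2 j
    have q3 : 1 ≤ x j := by omega
    have q4 : 1 ≤ y j := by omega
    nlinarith
  · rw [H.r] at hij
    have hd : ¬ cs.IsRightDescent v i' := by
      rw [H.eq]
      split_ifs
      · exact h5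
      · exact h4
    obtain ⟨e1, l, e2, e3, e4⟩ := ih _ (by omega) v i' j rfl hd hij
    refine ⟨H.d.trans e1, l ++ alternatingWord i k r, ?_, ?_, ?_⟩
    · rw [CoxeterSystem.IsReduced, cs.wordProd_append, e3, ← h2, h3, List.length_append, length_alternatingWord, ← e3, e2.eq]
    · rw [cs.wordProd_append, e3, ← h2]
    · rw [TW_append, AlgEquiv.mul_apply, H.f, e4]

include B hρ in
theorem final (w : W) (i j : J) (hi : cs.length (w * cs.simple i) = cs.length w + 1)
    (hij : ρ w (Finsupp.single i 1) = Finsupp.single j 1) (l : List J) (hl : cs.wordProd l = w) (hr : cs.IsReduced l) :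
    C.d i = C.d j ∧ TW T l (uF C i) = uF C j := by
  obtain ⟨e1, l', e2, e3, e4⟩ := final_aux B hρ _ w i j rfl (cs.not_isRightDescent_iff.mpr hi) hij
  refine ⟨e1, ?_⟩
  rw [matsumoto B hρ _ l l' rfl hr e2 (hl.trans e3.symm), e4]
end Fin
end

/-- Let `A` be a symmetrizable GCM with Weyl group `W` (acting on the root lattice via
`ρ`), and suppose `w ∈ W`, `i ∈ I` with `w s_i > w` (i.e. `ℓ(w s_i) = ℓ(w) + 1`).
If `w α_i = α_j` for some `j ∈ I`, then for the braid group operators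
(`T_w = T_{i_1} ⋯ T_{i_l}` for any reduced word `(i_1, …, i_l)` of `w`) one has
`T_w((1 - q_i²) f_i) = (1 - q_j²) f_j` in `U_q^-(𝔤)`; in particular `T_w(f_i) = f_j`
when `(α_i, α_i) = (α_j, α_j)`. -/
theorem braid_operator_on_simple_root_vector
    (I : Type) [DecidableEq I] (C : CartanData I)
    (W : Type) [Group W] (cs : CoxeterSystem (coxMat C) W)
    (ρ : W →* Module.End ℤ (I →₀ ℤ))
    (hρ : ∀ (k : I) (α : I →₀ ℤ),
      ρ (cs.simple k) α = α - (α.sum fun j' m => C.a k j' * m) • Finsupp.single k (1 : ℤ))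
    (T : I → Uq C ≃ₐ[KK] Uq C)
    (hTt : ∀ k j : I, T k (uT C j) = uT C j * tpow C k (-(C.a k j)))
    (hTei : ∀ k : I, T k (uE C k) = -(uTinv C k * uF C k))
    (hTfi : ∀ k : I, T k (uF C k) = -(uE C k * uT C k))
    (hTe : ∀ k j : I, j ≠ k → T k (uE C j) =
      ∑ r ∈ Finset.range ((-C.a k j).toNat + 1),
        ((-1 : KK) ^ r * qpow (-(C.d k * (r : ℤ)))) •
          (uEdp C k r * uE C j * uEdp C k ((-C.a k j).toNat - r)))
    (hTf : ∀ k j : I, j ≠ k → T k (uF C j) =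
      ∑ r ∈ Finset.range ((-C.a k j).toNat + 1),
        ((-1 : KK) ^ r * qpow (C.d k * (r : ℤ))) •
          (uFdp C k ((-C.a k j).toNat - r) * uF C j * uFdp C k r))
    (w : W) (i j : I)
    (hlen : cs.length (w * cs.simple i) = cs.length w + 1)
    (hroot : ρ w (Finsupp.single i (1 : ℤ)) = Finsupp.single j (1 : ℤ)) :
    ∀ l : List I, cs.wordProd l = w → cs.IsReduced l →
      (((l.map T).prod : Uq C ≃ₐ[KK] Uq C)
          ((1 - qpow (2 * C.d i)) • uF C i) = (1 - qpow (2 * C.d j)) • uF C j) ∧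
      (C.d i = C.d j → ((l.map T).prod : Uq C ≃ₐ[KK] Uq C) (uF C i) = uF C j) := by
  intro l hl hr
  have B : BrOp C T := ⟨hTt, hTei, hTfi, hTe, hTf⟩
  obtain ⟨hd, hT⟩ := final (cs := cs) (ρ := ρ) B hρ w i j hlen hroot l hl hr
  have hT' : ((l.map T).prod : Uq C ≃ₐ[KK] Uq C) (uF C i) = uF C j := hT
  exact ⟨by rw [map_smul, hT', hd], fun _ => hT'⟩

end
end

section
/- In the quiver Hecke algebra R(β + α_j) with n = ht β, define intertwiners φ_k = τ_k e(ν) for ν_k ≠ ν_{k+1} and φ_k = ((x_{k+1}-x_k)τ_k - 1)e(ν) for ν_k = ν_{k+1} (summed over ν). Then the intertwiners satisfy φ_k x_l = x_{s_k(l)} φ_k for all l, the braid relation φ_k φ_{k+1} φ_k = φ_{k+1} φ_k φ_{k+1}, and φ_{k+1} φ_k τ_{k+1} = τ_k φ_{k+1} φ_k. -/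
noncomputable section

/-- The data of the polynomials `Q_{i,j}(u,v) = Σ_{p,q} c_{i,j,p,q} u^p v^q` defining a
quiver Hecke algebra: symmetric (`Q_{i,j}(u,v) = Q_{j,i}(v,u)`) with `Q_{i,i} = 0`. -/
structure QCoeff (I k : Type) [CommRing k] : Type where
  c : I → I → ℕ → ℕ → k
  bound : ℕ
  symm : ∀ i j p q, c i j p q = c j i q p
  diag : ∀ i p q, c i i p q = 0
  vanish : ∀ i j p q, bound ≤ p ∨ bound ≤ q → c i j p q = 0

variable {I : Type} [Fintype I] [DecidableEq I]

/-- `ν ∈ I^β`: the sequence `ν : Fin n → I` has content `β ∈ Q_+`. -/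
def ContentEq (n : ℕ) (β : I →₀ ℕ) (ν : Fin n → I) : Prop :=
  ∀ i : I, (Finset.univ.filter fun t => ν t = i).card = β i

instance (n : ℕ) (β : I →₀ ℕ) : DecidablePred (ContentEq n β) := fun _ =>
  inferInstanceAs (Decidable (∀ _, _))

/-- The index set `I^β` of sequences of content `β`. -/
abbrev KSeq (I : Type) [Fintype I] [DecidableEq I] (n : ℕ) (β : I →₀ ℕ) : Type :=
  {ν : Fin n → I // ContentEq n β ν}

/-- The index set of crossings: `τ_c` crosses strands `c+1` and `c+2` (0-based `c`). -/
abbrev KCr (n : ℕ) : Type := {m : ℕ // m + 1 < n}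

/-- The first strand of the crossing `c`. -/
def crA {n : ℕ} (c : KCr n) : Fin n := ⟨c.1, Nat.lt_of_succ_lt c.2⟩

/-- The second strand of the crossing `c`. -/
def crB {n : ℕ} (c : KCr n) : Fin n := ⟨c.1 + 1, c.2⟩

/-- The generators of the quiver Hecke algebra `R(β)`: idempotents `e(ν)`, polynomial
generators `x_t` and crossings `τ_c`. -/
inductive KGen (I : Type) (n : ℕ) (P : (Fin n → I) → Prop) : Type
  | e : {ν : Fin n → I // P ν} → KGen I n P
  | x : Fin n → KGen I n P
  | t : {m : ℕ // m + 1 < n} → KGen I n P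

/-- The free algebra on the generators of `R(β)`. -/
abbrev KFA (k : Type) [CommRing k] (I : Type) [Fintype I] [DecidableEq I]
    (n : ℕ) (β : I →₀ ℕ) : Type :=
  FreeAlgebra k (KGen I n (ContentEq n β))

variable {k : Type} [Field k]

def gE {n : ℕ} {β : I →₀ ℕ} (ν : KSeq I n β) : KFA k I n β :=
  FreeAlgebra.ι k (KGen.e ν)
def gX {n : ℕ} {β : I →₀ ℕ} (t : Fin n) : KFA k I n β :=
  FreeAlgebra.ι k (KGen.x t)
def gTa {n : ℕ} {β : I →₀ ℕ} (c : KCr n) : KFA k I n β :=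
  FreeAlgebra.ι k (KGen.t c)

/-- The evaluation `Q_{i,j}(a, b)` in the free algebra. -/
def Qeval {n : ℕ} {β : I →₀ ℕ} (Q : QCoeff I k) (i j : I) (a b : KFA k I n β) :
    KFA k I n β :=
  ∑ p ∈ Finset.range Q.bound, ∑ q ∈ Finset.range Q.bound, Q.c i j p q • (a ^ p * b ^ q)

/-- The evaluation `Q̄_{i,i',i''}(a, b, cc) = (Q_{i,i'}(a,b) - Q_{i,i'}(cc,b))/(a - cc)`
(when `i = i'' ≠ i'`, and `0` otherwise) in the free algebra. -/
def barQeval {n : ℕ} {β : I →₀ ℕ} (Q : QCoeff I k) (i i' i'' : I)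
    (a b cc : KFA k I n β) : KFA k I n β :=
  if i = i'' ∧ i ≠ i' then
    ∑ p ∈ Finset.range Q.bound, ∑ q ∈ Finset.range Q.bound,
      Q.c i i' p q • ∑ s ∈ Finset.range p, a ^ s * b ^ q * cc ^ (p - 1 - s)
  else 0

/-- The defining relations of the quiver Hecke algebra `R(β)`. -/
inductive KRel (k : Type) [Field k] (I : Type) [Fintype I] [DecidableEq I]
    (n : ℕ) (β : I →₀ ℕ) (Q : QCoeff I k) : KFA k I n β → KFA k I n β → Prop
  | e_orth (ν ν' : KSeq I n β) :
      KRel k I n β Q (gE ν * gE ν') (if ν = ν' then gE ν else 0)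
  | e_sum : KRel k I n β Q (∑ ν : KSeq I n β, gE ν) 1
  | x_e (t : Fin n) (ν : KSeq I n β) : KRel k I n β Q (gX t * gE ν) (gE ν * gX t)
  | x_x (t s : Fin n) : KRel k I n β Q (gX t * gX s) (gX s * gX t)
  | tau_e (c : KCr n) (ν ν' : KSeq I n β)
      (h : ν'.1 = ν.1 ∘ Equiv.swap (crA c) (crB c)) :
      KRel k I n β Q (gTa c * gE ν) (gE ν' * gTa c)
  | tau_tau_far (c c' : KCr n) (h : c.1 + 2 ≤ c'.1) :
      KRel k I n β Q (gTa c * gTa c') (gTa c' * gTa c)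
  | tau_x_far (c : KCr n) (t : Fin n) (h1 : t ≠ crA c) (h2 : t ≠ crB c) :
      KRel k I n β Q (gTa c * gX t) (gX t * gTa c)
  | tau_x₁ (c : KCr n) (ν : KSeq I n β) :
      KRel k I n β Q ((gTa c * gX (crB c) - gX (crA c) * gTa c) * gE ν)
        (if ν.1 (crA c) = ν.1 (crB c) then gE ν else 0)
  | tau_x₂ (c : KCr n) (ν : KSeq I n β) :
      KRel k I n β Q ((gX (crB c) * gTa c - gTa c * gX (crA c)) * gE ν)
        (if ν.1 (crA c) = ν.1 (crB c) then gE ν else 0)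
  | quad (c : KCr n) (ν : KSeq I n β) :
      KRel k I n β Q (gTa c * gTa c * gE ν)
        (Qeval Q (ν.1 (crA c)) (ν.1 (crB c)) (gX (crA c)) (gX (crB c)) * gE ν)
  | braid (c c' : KCr n) (h : c'.1 = c.1 + 1) (ν : KSeq I n β) :
      KRel k I n β Q
        ((gTa c' * gTa c * gTa c' - gTa c * gTa c' * gTa c) * gE ν)
        (barQeval Q (ν.1 (crA c)) (ν.1 (crB c)) (ν.1 (crB c'))
            (gX (crA c)) (gX (crB c)) (gX (crB c')) * gE ν)

/-- The quiver Hecke algebra `R(β)`, presented by generators and relations. -/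
abbrev KR (k : Type) [Field k] (I : Type) [Fintype I] [DecidableEq I]
    (n : ℕ) (β : I →₀ ℕ) (Q : QCoeff I k) : Type :=
  RingQuot (KRel k I n β Q)

def kMk (k : Type) [Field k] (I : Type) [Fintype I] [DecidableEq I]
    (n : ℕ) (β : I →₀ ℕ) (Q : QCoeff I k) : KFA k I n β →ₐ[k] KR k I n β Q :=
  RingQuot.mkAlgHom k (KRel k I n β Q)

def eR {n : ℕ} {β : I →₀ ℕ} (Q : QCoeff I k) (ν : KSeq I n β) : KR k I n β Q :=
  kMk k I n β Q (gE ν)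
def xR {n : ℕ} {β : I →₀ ℕ} (Q : QCoeff I k) (t : Fin n) : KR k I n β Q :=
  kMk k I n β Q (gX t)
def tauR {n : ℕ} {β : I →₀ ℕ} (Q : QCoeff I k) (c : KCr n) : KR k I n β Q :=
  kMk k I n β Q (gTa c)


/-- The intertwiner `φ_c = Σ_ν φ_c e(ν)`, equal to `τ_c e(ν)` on components with
`ν_c ≠ ν_{c+1}` and to `((x_{c+1} - x_c)τ_c - 1) e(ν)` on components with
`ν_c = ν_{c+1}`. -/
def phiInt {m : ℕ} {γ : I →₀ ℕ} (Q : QCoeff I k) (c : KCr m) : KR k I m γ Q :=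
  ∑ ν : KSeq I m γ,
    if ν.1 (crA c) = ν.1 (crB c) then
      ((xR Q (crB c) - xR Q (crA c)) * tauR Q c - 1) * eR Q ν
    else tauR Q c * eR Q ν

section helpers

set_option linter.unusedSectionVars false
set_option linter.unusedSimpArgs false

variable {m : ℕ} {γ : I →₀ ℕ} {Q : QCoeff I k}

theorem kMk_rel {a b : KFA k I m γ} (h : KRel k I m γ Q a b) :
    kMk k I m γ Q a = kMk k I m γ Q b :=
  RingQuot.mkAlgHom_rel k h

theorem contentEq_swap {f : Fin m → I} (h : ContentEq m γ f) (p q : Fin m) :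
    ContentEq m γ (f ∘ Equiv.swap p q) := by
  intro i
  rw [← h i]
  apply Finset.card_bij (fun t _ => Equiv.swap p q t)
  · intro a ha
    simpa using ha
  · intro a _ b _ hab
    exact (Equiv.swap p q).injective hab
  · intro b hb
    exact ⟨Equiv.swap p q b, by simpa using hb, by simp⟩

theorem eR_mul (ν μ : KSeq I m γ) :
    eR Q ν * eR Q μ = if ν = μ then eR Q ν else 0 := by
  have h := kMk_rel (KRel.e_orth (k := k) (Q := Q) ν μ)
  rw [map_mul] at h
  rw [eR, eR, h]
  split_ifs <;> simp

theorem eR_sum : ∑ ν : KSeq I m γ, eR Q ν = 1 := by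
  have h := kMk_rel (KRel.e_sum (k := k) (n := m) (β := γ) (Q := Q))
  rw [map_sum, map_one] at h
  exact h

theorem ext_e {a b : KR k I m γ Q} (h : ∀ ν, a * eR Q ν = b * eR Q ν) : a = b := by
  rw [← mul_one a, ← mul_one b, ← eR_sum, Finset.mul_sum, Finset.mul_sum]
  exact Finset.sum_congr rfl fun ν _ => h ν

theorem xR_eR (t : Fin m) (ν : KSeq I m γ) : xR Q t * eR Q ν = eR Q ν * xR Q t := by
  have h := kMk_rel (KRel.x_e (k := k) (Q := Q) t ν)
  rw [map_mul, map_mul] at h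
  exact h

theorem xR_xR (t s : Fin m) :
    (xR Q t : KR k I m γ Q) * xR Q s = xR Q s * xR Q t := by
  have h := kMk_rel (KRel.x_x (k := k) (β := γ) (Q := Q) t s)
  rw [map_mul, map_mul] at h
  exact h

theorem tauR_eR (c : KCr m) (ν ν' : KSeq I m γ)
    (h : ν'.1 = ν.1 ∘ Equiv.swap (crA c) (crB c)) :
    tauR Q c * eR Q ν = eR Q ν' * tauR Q c := by
  have h := kMk_rel (KRel.tau_e (k := k) (Q := Q) c ν ν' h)
  rw [map_mul, map_mul] at h
  exact h

theorem tauR_far (c : KCr m) (t : Fin m) (h1 : t ≠ crA c) (h2 : t ≠ crB c) :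
    (tauR Q c : KR k I m γ Q) * xR Q t = xR Q t * tauR Q c := by
  have h := kMk_rel (KRel.tau_x_far (k := k) (β := γ) (Q := Q) c t h1 h2)
  rw [map_mul, map_mul] at h
  exact h

/-- `w` lies in `e(f) R`. -/
def Lc (f : Fin m → I) (w : KR k I m γ Q) : Prop :=
  ∃ h : ContentEq m γ f, eR Q ⟨f, h⟩ * w = w

theorem Lc_e (ν : KSeq I m γ) : Lc ν.1 (eR Q ν) := ⟨ν.2, by simp [eR_mul]⟩

theorem Lc.tau {f : Fin m → I} {w : KR k I m γ Q} (h : Lc f w) (c : KCr m) :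
    Lc (f ∘ Equiv.swap (crA c) (crB c)) (tauR Q c * w) := by
  obtain ⟨hf, hw⟩ := h
  refine ⟨contentEq_swap hf _ _, ?_⟩
  rw [← mul_assoc, ← tauR_eR c ⟨f, hf⟩ _ rfl, mul_assoc, hw]

theorem Lc.x {f : Fin m → I} {w : KR k I m γ Q} (h : Lc f w) (t : Fin m) :
    Lc f (xR Q t * w) := by
  obtain ⟨hf, hw⟩ := h
  refine ⟨hf, ?_⟩
  rw [← mul_assoc, ← xR_eR, mul_assoc, hw]

theorem Lc.sub {f : Fin m → I} {v w : KR k I m γ Q} (h' : Lc f v) (h : Lc f w) :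
    Lc f (v - w) := by
  obtain ⟨hf, hw⟩ := h
  obtain ⟨_, hv⟩ := h'
  exact ⟨hf, by rw [mul_sub, hw, hv]⟩

theorem tau_xB {f : Fin m → I} {w : KR k I m γ Q} (h : Lc f w) (c : KCr m)
    (hc : f (crA c) = f (crB c)) :
    tauR Q c * (xR Q (crB c) * w) = xR Q (crA c) * (tauR Q c * w) + w := by
  obtain ⟨hf, hw⟩ := h
  have h := kMk_rel (KRel.tau_x₁ (k := k) (Q := Q) c ⟨f, hf⟩)
  rw [if_pos hc] at h
  simp only [map_mul, map_sub] at h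
  change (tauR Q c * xR Q (crB c) - xR Q (crA c) * tauR Q c) * eR Q ⟨f, hf⟩ = eR Q ⟨f, hf⟩ at h
  have h2 := congrArg (· * w) h
  simp only [mul_assoc, hw, sub_mul] at h2
  rw [sub_eq_iff_eq_add] at h2
  rw [h2, add_comm]

theorem tau_xA {f : Fin m → I} {w : KR k I m γ Q} (h : Lc f w) (c : KCr m)
    (hc : f (crA c) = f (crB c)) :
    tauR Q c * (xR Q (crA c) * w) = xR Q (crB c) * (tauR Q c * w) - w := by
  obtain ⟨hf, hw⟩ := h
  have h := kMk_rel (KRel.tau_x₂ (k := k) (Q := Q) c ⟨f, hf⟩)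
  rw [if_pos hc] at h
  simp only [map_mul, map_sub] at h
  change (xR Q (crB c) * tauR Q c - tauR Q c * xR Q (crA c)) * eR Q ⟨f, hf⟩ = eR Q ⟨f, hf⟩ at h
  have h2 := congrArg (· * w) h
  simp only [mul_assoc, hw, sub_mul] at h2
  rw [sub_eq_iff_eq_add] at h2
  rw [h2, add_sub_cancel_left]

theorem tau_xB_ne {f : Fin m → I} {w : KR k I m γ Q} (h : Lc f w) (c : KCr m)
    (hc : f (crA c) ≠ f (crB c)) :
    tauR Q c * (xR Q (crB c) * w) = xR Q (crA c) * (tauR Q c * w) := by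
  obtain ⟨hf, hw⟩ := h
  have h := kMk_rel (KRel.tau_x₁ (k := k) (Q := Q) c ⟨f, hf⟩)
  rw [if_neg hc] at h
  simp only [map_mul, map_sub, map_zero] at h
  change (tauR Q c * xR Q (crB c) - xR Q (crA c) * tauR Q c) * eR Q ⟨f, hf⟩ = 0 at h
  have h2 := congrArg (· * w) h
  simp only [mul_assoc, hw, sub_mul, zero_mul] at h2
  exact sub_eq_zero.mp h2

theorem tau_xA_ne {f : Fin m → I} {w : KR k I m γ Q} (h : Lc f w) (c : KCr m)
    (hc : f (crA c) ≠ f (crB c)) :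
    tauR Q c * (xR Q (crA c) * w) = xR Q (crB c) * (tauR Q c * w) := by
  obtain ⟨hf, hw⟩ := h
  have h := kMk_rel (KRel.tau_x₂ (k := k) (Q := Q) c ⟨f, hf⟩)
  rw [if_neg hc] at h
  simp only [map_mul, map_sub, map_zero] at h
  change (xR Q (crB c) * tauR Q c - tauR Q c * xR Q (crA c)) * eR Q ⟨f, hf⟩ = 0 at h
  have h2 := congrArg (· * w) h
  simp only [mul_assoc, hw, sub_mul, zero_mul] at h2
  exact (sub_eq_zero.mp h2).symm

theorem tau_x_far' (w : KR k I m γ Q) (c : KCr m) (t : Fin m) (h1 : t ≠ crA c)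
    (h2 : t ≠ crB c) :
    tauR Q c * (xR Q t * w) = xR Q t * (tauR Q c * w) := by
  rw [← mul_assoc, tauR_far c t h1 h2, mul_assoc]

theorem phi_eR (c : KCr m) (ν : KSeq I m γ) :
    phiInt Q c * eR Q ν = if ν.1 (crA c) = ν.1 (crB c) then
      ((xR Q (crB c) - xR Q (crA c)) * tauR Q c - 1) * eR Q ν
    else tauR Q c * eR Q ν := by
  rw [phiInt, Finset.sum_mul, Finset.sum_eq_single ν]
  · split_ifs <;> rw [mul_assoc, eR_mul, if_pos rfl]
  · intro μ _ hμ
    split_ifs <;> rw [mul_assoc, eR_mul, if_neg hμ, mul_zero]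
  · simp

theorem phi_eq {f : Fin m → I} {w : KR k I m γ Q} (h : Lc f w) (c : KCr m)
    (hc : f (crA c) = f (crB c)) :
    phiInt Q c * w = xR Q (crB c) * (tauR Q c * w) - xR Q (crA c) * (tauR Q c * w) - w := by
  obtain ⟨hf, hw⟩ := h
  have h := phi_eR (Q := Q) c ⟨f, hf⟩
  rw [if_pos hc] at h
  have h2 := congrArg (· * w) h
  simpa only [mul_assoc, hw, sub_mul, one_mul] using h2

theorem phi_ne {f : Fin m → I} {w : KR k I m γ Q} (h : Lc f w) (c : KCr m)
    (hc : f (crA c) ≠ f (crB c)) :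
    phiInt Q c * w = tauR Q c * w := by
  obtain ⟨hf, hw⟩ := h
  have h := phi_eR (Q := Q) c ⟨f, hf⟩
  rw [if_neg hc] at h
  have h2 := congrArg (· * w) h
  simpa only [mul_assoc, hw] using h2

theorem comp_swap_eq {f : Fin m → I} {p q : Fin m} (h : f p = f q) :
    f ∘ Equiv.swap p q = f := by
  funext t
  simp only [Function.comp, Equiv.swap_apply_def]
  split_ifs with h1 h2
  · rw [h1, h]
  · rw [h2, h]
  · rfl

theorem Lc.phi {f : Fin m → I} {w : KR k I m γ Q} (h : Lc f w) (c : KCr m) :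
    Lc (f ∘ Equiv.swap (crA c) (crB c)) (phiInt Q c * w) := by
  by_cases hc : f (crA c) = f (crB c)
  · rw [phi_eq h c hc]
    have h1 := h.tau c
    rw [comp_swap_eq hc] at h1 ⊢
    exact ((h1.x _).sub (h1.x _)).sub h
  · rw [phi_ne h c hc]
    exact h.tau c

theorem xx_left (t s : Fin m) (w : KR k I m γ Q) :
    xR Q t * (xR Q s * w) = xR Q s * (xR Q t * w) := by
  rw [← mul_assoc, xR_xR, mul_assoc]

theorem crA_ne_crB (c : KCr m) : crA c ≠ crB c := by
  simp [crA, crB, Fin.ext_iff]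

theorem phi_x (c : KCr m) (t : Fin m) :
    (phiInt Q c : KR k I m γ Q) * xR Q t
      = xR Q (Equiv.swap (crA c) (crB c) t) * phiInt Q c := by
  apply ext_e
  intro ν
  have h := Lc_e (Q := Q) ν
  have ht := h.x t
  rw [mul_assoc, mul_assoc]
  by_cases hc : ν.1 (crA c) = ν.1 (crB c)
  · rw [phi_eq h c hc, phi_eq ht c hc]
    by_cases hA : t = crA c
    · subst hA
      rw [Equiv.swap_apply_left, tau_xA h c hc]
      simp only [mul_sub]
      rw [xx_left (crA c) (crB c)]
      abel
    by_cases hB : t = crB c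
    · subst hB
      rw [Equiv.swap_apply_right, tau_xB h c hc]
      simp only [mul_sub, mul_add]
      rw [xx_left (crA c) (crB c)]
      abel
    · rw [Equiv.swap_apply_of_ne_of_ne hA hB, tau_x_far' _ _ _ hA hB]
      simp only [mul_sub]
      rw [xx_left t (crB c), xx_left t (crA c)]
  · rw [phi_ne h c hc, phi_ne ht c hc]
    by_cases hA : t = crA c
    · subst hA
      rw [Equiv.swap_apply_left, tau_xA_ne h c hc]
    by_cases hB : t = crB c
    · subst hB
      rw [Equiv.swap_apply_right, tau_xB_ne h c hc]
    · rw [Equiv.swap_apply_of_ne_of_ne hA hB, tau_x_far' _ _ _ hA hB]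

theorem phi_x' (c : KCr m) (t : Fin m) (w : KR k I m γ Q) :
    phiInt Q c * (xR Q t * w)
      = xR Q (Equiv.swap (crA c) (crB c) t) * (phiInt Q c * w) := by
  rw [← mul_assoc, phi_x, mul_assoc]

/-- `Q_{i,j}(a,b)` in the quotient. -/
def Qv (Q : QCoeff I k) (i j : I) (a b : KR k I m γ Q) : KR k I m γ Q :=
  ∑ p ∈ Finset.range Q.bound, ∑ q ∈ Finset.range Q.bound, Q.c i j p q • (a ^ p * b ^ q)

theorem Qv_symm (i j : I) {a b : KR k I m γ Q} (h : Commute a b) :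
    Qv Q i j a b = Qv Q j i b a := by
  rw [Qv, Qv, Finset.sum_comm]
  refine Finset.sum_congr rfl fun q _ => Finset.sum_congr rfl fun p _ => ?_
  rw [Q.symm, (h.pow_pow p q).eq]

theorem Qv_diag (i : I) (a b : KR k I m γ Q) : Qv Q i i a b = 0 := by
  simp [Qv, Q.diag]

/-- The divided difference in the quotient. -/
def bQv (Q : QCoeff I k) (i i' : I) (a b cc : KR k I m γ Q) : KR k I m γ Q :=
  ∑ p ∈ Finset.range Q.bound, ∑ q ∈ Finset.range Q.bound,
      Q.c i i' p q • ∑ s ∈ Finset.range p, a ^ s * b ^ q * cc ^ (p - 1 - s)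

theorem bQv_aux {A : Type} [Ring A] [Algebra k A] (z : k) (p q : ℕ) {a b cc : A}
    (hac : Commute a cc) (hbc : Commute b cc) :
    (a - cc) * (z • ∑ s ∈ Finset.range p, a ^ s * b ^ q * cc ^ (p - 1 - s)) =
      z • (a ^ p * b ^ q) - z • (cc ^ p * b ^ q) := by
  rw [← smul_sub, mul_smul_comm, ← sub_mul, ← hac.mul_geom_sum₂, mul_assoc, Finset.sum_mul]
  congr 2
  refine Finset.sum_congr rfl fun s _ => ?_
  rw [mul_assoc, mul_assoc, (hbc.pow_pow q _).eq]

theorem bQv_mul (i i' : I) {a b cc : KR k I m γ Q} (hac : Commute a cc)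
    (hbc : Commute b cc) :
    (a - cc) * bQv Q i i' a b cc = Qv Q i i' a b - Qv Q i i' cc b := by
  rw [Qv, Qv, bQv, ← Finset.sum_sub_distrib, Finset.mul_sum]
  refine Finset.sum_congr rfl fun p _ => ?_
  rw [← Finset.sum_sub_distrib, Finset.mul_sum]
  refine Finset.sum_congr rfl fun q _ => ?_
  exact bQv_aux _ p q hac hbc

theorem tau_tau {f : Fin m → I} {w : KR k I m γ Q} (h : Lc f w) (c : KCr m) :
    tauR Q c * (tauR Q c * w) =
      Qv Q (f (crA c)) (f (crB c)) (xR Q (crA c)) (xR Q (crB c)) * w := by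
  obtain ⟨hf, hw⟩ := h
  have h := kMk_rel (KRel.quad (k := k) (Q := Q) c ⟨f, hf⟩)
  simp only [map_mul, Qeval, map_sum, map_smul, map_pow] at h
  change tauR Q c * tauR Q c * eR Q ⟨f, hf⟩ =
    Qv Q (f (crA c)) (f (crB c)) (xR Q (crA c)) (xR Q (crB c)) * eR Q ⟨f, hf⟩ at h
  have h2 := congrArg (· * w) h
  simpa only [mul_assoc, hw] using h2

theorem tau_tau_eq {f : Fin m → I} {w : KR k I m γ Q} (h : Lc f w) (c : KCr m)
    (hc : f (crA c) = f (crB c)) :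
    tauR Q c * (tauR Q c * w) = 0 := by
  rw [tau_tau h, hc, Qv_diag, zero_mul]

theorem tau_braid_ne {f : Fin m → I} {w : KR k I m γ Q} (h : Lc f w) (c c' : KCr m)
    (hcc : c'.1 = c.1 + 1) (hc : ¬ (f (crA c) = f (crB c') ∧ f (crA c) ≠ f (crB c))) :
    tauR Q c' * (tauR Q c * (tauR Q c' * w)) = tauR Q c * (tauR Q c' * (tauR Q c * w)) := by
  obtain ⟨hf, hw⟩ := h
  have h := kMk_rel (KRel.braid (k := k) (Q := Q) c c' hcc ⟨f, hf⟩)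
  simp only [map_mul, barQeval, if_neg hc, map_sub, zero_mul, map_zero] at h
  change (tauR Q c' * tauR Q c * tauR Q c' - tauR Q c * tauR Q c' * tauR Q c)
    * eR Q ⟨f, hf⟩ = 0 at h
  have h2 := congrArg (· * w) h
  simp only [mul_assoc, hw, sub_mul, zero_mul] at h2
  exact sub_eq_zero.mp h2

theorem tau_braid_eq {f : Fin m → I} {w : KR k I m γ Q} (h : Lc f w) (c c' : KCr m)
    (hcc : c'.1 = c.1 + 1) (hc : f (crA c) = f (crB c') ∧ f (crA c) ≠ f (crB c)) :
    tauR Q c' * (tauR Q c * (tauR Q c' * w)) - tauR Q c * (tauR Q c' * (tauR Q c * w)) =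
      bQv Q (f (crA c)) (f (crB c)) (xR Q (crA c)) (xR Q (crB c)) (xR Q (crB c')) * w := by
  obtain ⟨hf, hw⟩ := h
  have h := kMk_rel (KRel.braid (k := k) (Q := Q) c c' hcc ⟨f, hf⟩)
  simp only [map_mul, barQeval, if_pos hc, map_sub, map_sum, map_smul, map_pow] at h
  change (tauR Q c' * tauR Q c * tauR Q c' - tauR Q c * tauR Q c' * tauR Q c)
    * eR Q ⟨f, hf⟩ = bQv Q (f (crA c)) (f (crB c)) (xR Q (crA c)) (xR Q (crB c)) (xR Q (crB c'))
      * eR Q ⟨f, hf⟩ at h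
  have h2 := congrArg (· * w) h
  simpa only [mul_assoc, hw, sub_mul] using h2

theorem phi_tau (c c' : KCr m) (hcc : c'.1 = c.1 + 1) :
    (phiInt Q c' : KR k I m γ Q) * phiInt Q c * tauR Q c' =
      tauR Q c * phiInt Q c' * phiInt Q c := by
  apply ext_e
  intro ν
  have h := Lc_e (Q := Q) ν
  generalize eR Q ν = w at h
  generalize ν.1 = f at h
  have hq : crA c' = crB c := by simp [crA, crB, hcc]
  have hpq : crA c ≠ crB c := crA_ne_crB c
  have hqr : crB c ≠ crB c' := by simp [crB, Fin.ext_iff, hcc]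
  have hpr : crA c ≠ crB c' := by simp [crA, crB, Fin.ext_iff, hcc]; omega
  have tA : ∀ {f : Fin m → I} {w : KR k I m γ Q}, Lc f w → f (crB c) = f (crB c') →
    tauR Q c' * (xR Q (crB c) * w) = xR Q (crB c') * (tauR Q c' * w) - w := by
    intro f w h1 h2
    have := tau_xA h1 c' (by rwa [hq])
    rwa [hq] at this
  have tB : ∀ {f : Fin m → I} {w : KR k I m γ Q}, Lc f w → f (crB c) = f (crB c') →
    tauR Q c' * (xR Q (crB c') * w) = xR Q (crB c) * (tauR Q c' * w) + w := by
    intro f w h1 h2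
    have := tau_xB h1 c' (by rwa [hq])
    rwa [hq] at this
  have pE : ∀ {f : Fin m → I} {w : KR k I m γ Q}, Lc f w → f (crB c) = f (crB c') →
    phiInt Q c' * w = xR Q (crB c') * (tauR Q c' * w) - xR Q (crB c) * (tauR Q c' * w) - w := by
    intro f w h1 h2
    have := phi_eq h1 c' (by rwa [hq])
    rwa [hq] at this
  have pN : ∀ {f : Fin m → I} {w : KR k I m γ Q}, Lc f w → f (crB c) ≠ f (crB c') →
    phiInt Q c' * w = tauR Q c' * w := by
    intro f w h1 h2
    exact phi_ne h1 c' (by rwa [hq])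
  have T : ∀ {f : Fin m → I} {w : KR k I m γ Q}, Lc f w →
    Lc (f ∘ Equiv.swap (crB c) (crB c')) (tauR Q c' * w) := by
    intro f w h1
    have := h1.tau c'
    rwa [hq] at this
  have px : ∀ (t : Fin m) (w : KR k I m γ Q), phiInt Q c' * (xR Q t * w)
      = xR Q (Equiv.swap (crB c) (crB c') t) * (phiInt Q c' * w) := by
    intro t w
    rw [phi_x', hq]
  have far1 : ∀ w : KR k I m γ Q,
      tauR Q c * (xR Q (crB c') * w) = xR Q (crB c') * (tauR Q c * w) :=
    fun w => tau_x_far' w c _ hpr.symm hqr.symm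
  have far2 : ∀ w : KR k I m γ Q,
      tauR Q c' * (xR Q (crA c) * w) = xR Q (crA c) * (tauR Q c' * w) :=
    fun w => tau_x_far' w c' _ (by rwa [hq]) hpr
  have pp := fun w : KR k I m γ Q => px (crA c) w
  have pq := fun w : KR k I m γ Q => px (crB c) w
  rw [Equiv.swap_apply_of_ne_of_ne hpq hpr] at pp
  rw [Equiv.swap_apply_left] at pq
  simp only [mul_assoc]
  by_cases h12 : f (crA c) = f (crB c)
  · by_cases h23 : f (crB c) = f (crB c')
    · skip
      have L1 : ∀ {w : KR k I m γ Q}, Lc f w → Lc f (tauR Q c * w) := by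
        intro w hw
        have := hw.tau c
        rwa [comp_swap_eq h12] at this
      have L2 : ∀ {w : KR k I m γ Q}, Lc f w → Lc f (tauR Q c' * w) := by
        intro w hw
        have := T hw
        rwa [comp_swap_eq h23] at this
      have z2 : ∀ {w : KR k I m γ Q}, Lc f w → tauR Q c' * (tauR Q c' * w) = 0 :=
        fun hw => tau_tau_eq hw c' (by rwa [hq])
      have z1 : ∀ {w : KR k I m γ Q}, Lc f w → tauR Q c * (tauR Q c * w) = 0 :=
        fun hw => tau_tau_eq hw c h12
      have br := tau_braid_ne h c c' hcc (fun hh => hh.2 h12)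
      have e1 := L1 h
      have e2 := L2 h
      have e12 := L1 e2
      have e21 := L2 e1
      rw [phi_eq e2 c h12, phi_eq h c h12]
      simp only [mul_sub, pp, pq]
      rw [pE e12 h23, pE e2 h23, pE e1 h23, pE h h23, z2 h, br]
      simp only [mul_sub, mul_add, mul_zero, far1, far2, tau_xA e1 c h12, tau_xB e1 c h12,
        tau_xA e21 c h12, tau_xB e21 c h12, tau_xA (e21.x (crB c')) c h12,
        tau_xA (e21.x (crB c)) c h12, tau_xB (e21.x (crB c')) c h12,
        tau_xB (e21.x (crA c)) c h12, tau_xB (e21.x (crB c)) c h12,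
        tau_xB e2 c h12, tau_xA e2 c h12, z1 h]
      simp only [xx_left (crB c') (crB c), xx_left (crB c') (crA c), xx_left (crB c) (crA c)]
      abel
    · skip
      have br := tau_braid_ne h c c' hcc (fun hh => hh.2 h12)
      have e1 := h.tau c
      rw [comp_swap_eq h12] at e1
      have e2 := T h
      have e12 := e2.tau c
      have ne2 : (f ∘ Equiv.swap (crB c) (crB c')) (crA c) ≠
          (f ∘ Equiv.swap (crB c) (crB c')) (crB c) := by
        simp only [Function.comp, Equiv.swap_apply_left, Equiv.swap_apply_of_ne_of_ne hpq hpr]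
        rwa [h12]
      rw [phi_ne e2 c ne2, phi_eq h c h12]
      have eq12 : ((f ∘ Equiv.swap (crB c) (crB c')) ∘ Equiv.swap (crA c) (crB c)) (crB c) =
          ((f ∘ Equiv.swap (crB c) (crB c')) ∘ Equiv.swap (crA c) (crB c)) (crB c') := by
        simp only [Function.comp, Equiv.swap_apply_right, Equiv.swap_apply_of_ne_of_ne hpq hpr,
          Equiv.swap_apply_of_ne_of_ne hpr.symm hqr.symm]
        exact h12
      rw [pE e12 eq12, br]
      simp only [mul_sub, pp, pq, pN e1 h23, pN h h23, far1]
      have ne21 := T e1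
      rw [tau_xA_ne ne21 c ne2]
  · by_cases h13 : f (crA c) = f (crB c')
    · skip
      have br := tau_braid_eq h c c' hcc ⟨h13, h12⟩
      have hb := bQv_mul (Q := Q) (f (crA c)) (f (crB c))
        (xR_xR (γ := γ) (Q := Q) (crA c) (crB c')) (xR_xR (crB c) (crB c'))
      have t1 := tau_tau h c
      have t2 := tau_tau h c'
      rw [hq, Qv_symm _ _ (xR_xR (γ := γ) (Q := Q) (crB c) (crB c')), ← h13] at t2
      have e1 := h.tau c
      have e2 := T h
      have e12 := e2.tau c
      have e21 := T e1
      have eq2 : (f ∘ Equiv.swap (crB c) (crB c')) (crA c) =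
          (f ∘ Equiv.swap (crB c) (crB c')) (crB c) := by
        simp only [Function.comp, Equiv.swap_apply_left, Equiv.swap_apply_of_ne_of_ne hpq hpr]
        exact h13
      have ne2 : (f ∘ Equiv.swap (crB c) (crB c')) (crB c) ≠
          (f ∘ Equiv.swap (crB c) (crB c')) (crB c') := by
        simp only [Function.comp, Equiv.swap_apply_left, Equiv.swap_apply_right]
        rw [← h13]
        exact h12
      rw [comp_swap_eq eq2] at e12
      have eq1 : (f ∘ Equiv.swap (crA c) (crB c)) (crB c) =
          (f ∘ Equiv.swap (crA c) (crB c)) (crB c') := by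
        simp only [Function.comp, Equiv.swap_apply_right,
          Equiv.swap_apply_of_ne_of_ne hpr.symm hqr.symm]
        exact h13
      have ne1 : (f ∘ Equiv.swap (crA c) (crB c)) (crA c) ≠
          (f ∘ Equiv.swap (crA c) (crB c)) (crB c) := by
        simp only [Function.comp, Equiv.swap_apply_left, Equiv.swap_apply_right]
        exact fun h' => h12 h'.symm
      rw [comp_swap_eq eq1] at e21
      rw [phi_eq e2 c eq2, phi_ne h c h12, pE e1 eq1]
      simp only [mul_sub, pp, pq, pN e12 ne2, pN e2 ne2, far1, tau_xB_ne e21 c ne1, t1, t2]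
      have hb' := congrArg (· * w) hb
      simp only [mul_assoc, ← br] at hb'
      simp only [sub_mul, mul_sub] at hb'
      rw [← sub_eq_zero] at hb' ⊢
      rw [← neg_eq_zero, ← hb']
      abel
    · have br := tau_braid_ne h c c' hcc (fun hh => h13 hh.1)
      have e1 := h.tau c
      have e2 := T h
      have e12 := e2.tau c
      rw [phi_ne h c h12, phi_ne e2 c, pN e1, pN e12, br]
      · simp only [Function.comp, Equiv.swap_apply_right, Equiv.swap_apply_of_ne_of_ne hpq hpr,
          Equiv.swap_apply_of_ne_of_ne hpr.symm hqr.symm]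
        exact h12
      · simp only [Function.comp, Equiv.swap_apply_right,
          Equiv.swap_apply_of_ne_of_ne hpr.symm hqr.symm]
        exact h13
      · simp only [Function.comp, Equiv.swap_apply_left, Equiv.swap_apply_of_ne_of_ne hpq hpr]
        exact h13

theorem phi_braid (c c' : KCr m) (hcc : c'.1 = c.1 + 1) :
    (phiInt Q c : KR k I m γ Q) * phiInt Q c' * phiInt Q c =
      phiInt Q c' * phiInt Q c * phiInt Q c' := by
  have ht := phi_tau (γ := γ) (Q := Q) c c' hcc
  apply ext_e
  intro ν
  have h := Lc_e (Q := Q) ν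
  generalize eR Q ν = w at h
  generalize ν.1 = f at h
  have hq : crA c' = crB c := by simp [crA, crB, hcc]
  have hpq : crA c ≠ crB c := crA_ne_crB c
  have hqr : crB c ≠ crB c' := by simp [crB, Fin.ext_iff, hcc]
  have hpr : crA c ≠ crB c' := by simp [crA, crB, Fin.ext_iff, hcc]; omega
  have ht' : phiInt Q c' * (phiInt Q c * (tauR Q c' * w)) =
      tauR Q c * (phiInt Q c' * (phiInt Q c * w)) := by
    have := congrArg (· * w) ht
    simpa only [mul_assoc] using this
  have L := (h.phi c).phi c'
  have vA : ((f ∘ Equiv.swap (crA c) (crB c)) ∘ Equiv.swap (crA c') (crB c')) (crA c)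
      = f (crA c') := by
    simp only [hq, Function.comp, Equiv.swap_apply_left, Equiv.swap_apply_of_ne_of_ne hpq hpr]
  have vB : ((f ∘ Equiv.swap (crA c) (crB c)) ∘ Equiv.swap (crA c') (crB c')) (crB c)
      = f (crB c') := by
    simp only [hq, Function.comp, Equiv.swap_apply_left,
      Equiv.swap_apply_of_ne_of_ne hpr.symm hqr.symm]
  simp only [mul_assoc]
  by_cases h23 : f (crA c') = f (crB c')
  · rw [phi_eq L c (by rw [vA, vB, h23]), phi_eq h c' h23]
    simp only [mul_sub, phi_x', ht', hq, Equiv.swap_apply_right, Equiv.swap_apply_left,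
      Equiv.swap_apply_of_ne_of_ne hpq hpr, Equiv.swap_apply_of_ne_of_ne hpr.symm hqr.symm]
  · rw [phi_ne L c (by rw [vA, vB]; exact h23), phi_ne h c' h23, ht']

end helpers

/-- In the quiver Hecke algebra `R(β + α_j)` with `n = ht β`, the intertwiners
`φ_k = τ_k e(ν)` for `ν_k ≠ ν_{k+1}` and `φ_k = ((x_{k+1} - x_k)τ_k - 1) e(ν)` for
`ν_k = ν_{k+1}` (summed over `ν`) satisfy `φ_k x_l = x_{s_k(l)} φ_k` for all `l`, the
braid relation `φ_k φ_{k+1} φ_k = φ_{k+1} φ_k φ_{k+1}`, and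
`φ_{k+1} φ_k τ_{k+1} = τ_k φ_{k+1} φ_k`. -/
theorem quiverHecke_intertwiners
    (k I : Type) [Field k] [Fintype I] [DecidableEq I]
    (β : I →₀ ℕ) (j : I) (n : ℕ) (hn : (β.sum fun _ m => m) = n) (Q : QCoeff I k) :
    (∀ (c : KCr (n + 1)) (t : Fin (n + 1)),
      phiInt (γ := β + Finsupp.single j 1) Q c * xR Q t =
        xR Q (Equiv.swap (crA c) (crB c) t) * phiInt Q c) ∧
    (∀ c c' : KCr (n + 1), c'.1 = c.1 + 1 →
      phiInt (γ := β + Finsupp.single j 1) Q c * phiInt Q c' * phiInt Q c =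
        phiInt Q c' * phiInt Q c * phiInt Q c') ∧
    (∀ c c' : KCr (n + 1), c'.1 = c.1 + 1 →
      phiInt (γ := β + Finsupp.single j 1) Q c' * phiInt Q c * tauR Q c' =
        tauR Q c * phiInt Q c' * phiInt Q c) := by
  refine ⟨fun c t => phi_x c t, fun c c' h => phi_braid c c' h, fun c c' h => phi_tau c c' h⟩

end
end
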